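/- arXiv:2108.05687 — 3 statements merged into one kernel-verified Lean document; each statement's English description precedes it below -/
import Mathlib

section
/- Let K₃ denote the triangle. For every even n and every integer m with 1 ≤ m ≤ n²/4, the probability that G_{n,m}^{K₃} is K₃-free (i.e., contains no canonical copy of the triangle) is at least (2e)^{−2m}. -/
open Finset

variable {k n : ℕ}

/-- Number of edges of `G ⊆ K_n^H` between class `i` restricted to `A` and class `j`
restricted to `B`, counted as ordered pairs `(u, v) ∈ V_i × V_j`. -/
noncomputable def pairCountIn (G : SimpleGraph (Fin k × Fin n)) (i j : Fin k)
    (A B : Finset (Fin n)) : ℕ :=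
  Nat.card {p : Fin n × Fin n // p.1 ∈ A ∧ p.2 ∈ B ∧ G.Adj (i, p.1) (j, p.2)}

/-- Number of edges of `G ⊆ K_n^H` between classes `V_i` and `V_j`. -/
noncomputable def pairCount (G : SimpleGraph (Fin k × Fin n)) (i j : Fin k) : ℕ :=
  Nat.card {p : Fin n × Fin n // G.Adj (i, p.1) (j, p.2)}

/-- The density `d(A, B)` of the bipartite graph `G(V_i, V_j)` between `A ⊆ V_i`, `B ⊆ V_j`. -/
noncomputable def density (G : SimpleGraph (Fin k × Fin n)) (i j : Fin k)
    (A B : Finset (Fin n)) : ℝ :=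
  (pairCountIn G i j A B : ℝ) / ((A.card : ℝ) * (B.card : ℝ))

/-- The pair `(V_i, V_j)` of `G` is `(ε, λ)`-lower-regular. -/
def LowerRegularPair (ε lam : ℝ) (G : SimpleGraph (Fin k × Fin n)) (i j : Fin k) : Prop :=
  ∀ A B : Finset (Fin n), ε * n ≤ (A.card : ℝ) → ε * n ≤ (B.card : ℝ) →
    lam * density G i j Finset.univ Finset.univ ≤ density G i j A B

/-- The pair `(V_i, V_j)` of `G` is `(ε, δ)`-lower-regular for a function `δ`. -/
def FnLowerRegularPair (ε : ℝ) (δ : ℝ → ℝ) (G : SimpleGraph (Fin k × Fin n)) (i j : Fin k) :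
    Prop :=
  ∀ A B : Finset (Fin n), ε * n ≤ (A.card : ℝ) → ε * n ≤ (B.card : ℝ) →
    δ (min (A.card : ℝ) (B.card : ℝ) / n) * density G i j Finset.univ Finset.univ
      < density G i j A B

/-- `G` is a subgraph of `K_n^H`: edges only between classes `V_i, V_j` with `ij ∈ E(H)`. -/
def IsSubgraphKnH (H : SimpleGraph (Fin k)) (G : SimpleGraph (Fin k × Fin n)) : Prop :=
  ∀ ⦃x y : Fin k × Fin n⦄, G.Adj x y → H.Adj x.1 y.1

/-- `G ∈ 𝒢(H, n, m)`: a subgraph of `K_n^H` with exactly `m` edges between `V_i` and `V_j`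
for each edge `ij` of `H`. -/
def MemFamily (H : SimpleGraph (Fin k)) (m : ℕ) (G : SimpleGraph (Fin k × Fin n)) : Prop :=
  IsSubgraphKnH H G ∧ ∀ i j, H.Adj i j → pairCount G i j = m

/-- `f` selects a canonical copy of `H` in `G ⊆ K_n^H` (vertex `i` goes to `V_i`). -/
def IsCanonicalCopy (H : SimpleGraph (Fin k)) (G : SimpleGraph (Fin k × Fin n))
    (f : Fin k → Fin n) : Prop :=
  ∀ ⦃i j⦄, H.Adj i j → G.Adj (i, f i) (j, f j)

/-- The number of canonical copies of `H` in `G ⊆ K_n^H`. -/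
noncomputable def copyCount (H : SimpleGraph (Fin k)) (G : SimpleGraph (Fin k × Fin n)) : ℕ :=
  Nat.card {f : Fin k → Fin n // IsCanonicalCopy H G f}

/-- `deg_H(e, G)`: the number of canonical copies of `H` in `G` containing both coordinates
of the pair `e ∈ V_a × V_b`. -/
noncomputable def degPair (H : SimpleGraph (Fin k)) (G : SimpleGraph (Fin k × Fin n))
    (a b : Fin k) (e : Fin n × Fin n) : ℕ :=
  Nat.card {f : Fin k → Fin n // IsCanonicalCopy H G f ∧ f a = e.1 ∧ f b = e.2}

/-- The number of edges of a graph. -/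
noncomputable def edgeCount (H : SimpleGraph (Fin k)) : ℕ := Nat.card H.edgeSet

/-- The 2-density `m₂(H) = max{(e(H')-1)/(v(H')-2) : H' ⊆ H, v(H') > 2}`, where a subgraph
is given by a vertex set `V'` and an edge subgraph `H'` with all edges inside `V'`. -/
noncomputable def twoDensity (H : SimpleGraph (Fin k)) : ℝ :=
  sSup {q : ℝ | ∃ (V' : Finset (Fin k)) (H' : SimpleGraph (Fin k)),
    H' ≤ H ∧ (∀ ⦃x y⦄, H'.Adj x y → x ∈ V' ∧ y ∈ V') ∧ 2 < V'.card ∧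
    q = ((edgeCount H' : ℝ) - 1) / ((V'.card : ℝ) - 2)}


open scoped Classical in
noncomputable def edgeSetOf (G : SimpleGraph (Fin 3 × Fin n)) (i j : Fin 3) :
    Finset (Fin n × Fin n) :=
  Finset.univ.filter (fun p => G.Adj (i, p.1) (j, p.2))

lemma mem_edgeSetOf (G : SimpleGraph (Fin 3 × Fin n)) (i j : Fin 3) (p : Fin n × Fin n) :
    p ∈ edgeSetOf G i j ↔ G.Adj (i, p.1) (j, p.2) := by
  simp [edgeSetOf]

lemma card_edgeSetOf (G : SimpleGraph (Fin 3 × Fin n)) (i j : Fin 3) :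
    (edgeSetOf G i j).card = pairCount G i j := by
  classical
  rw [pairCount, Nat.card_eq_fintype_card, Fintype.card_subtype, edgeSetOf]

lemma pairCount_symm (G : SimpleGraph (Fin 3 × Fin n)) (i j : Fin 3) :
    pairCount G i j = pairCount G j i := by
  unfold pairCount
  refine Nat.card_congr ((Equiv.prodComm _ _).subtypeEquiv ?_)
  intro p
  simpa using G.adj_comm _ _

lemma adj_ext_of (G G' : SimpleGraph (Fin 3 × Fin n))
    (hG : IsSubgraphKnH (⊤ : SimpleGraph (Fin 3)) G)
    (hG' : IsSubgraphKnH (⊤ : SimpleGraph (Fin 3)) G')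
    (h01 : edgeSetOf G 0 1 = edgeSetOf G' 0 1)
    (h02 : edgeSetOf G 0 2 = edgeSetOf G' 0 2)
    (h12 : edgeSetOf G 1 2 = edgeSetOf G' 1 2) : G = G' := by
  have key : ∀ i j, edgeSetOf G i j = edgeSetOf G' i j →
      ∀ u v, (G.Adj (i, u) (j, v) ↔ G'.Adj (i, u) (j, v)) := by
    intro i j h u v
    have := mem_edgeSetOf G i j (u, v)
    rw [h, mem_edgeSetOf] at this
    exact this.symm
  have key2 : ∀ i j, edgeSetOf G i j = edgeSetOf G' i j →
      ∀ u v, (G.Adj (j, u) (i, v) ↔ G'.Adj (j, u) (i, v)) := by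
    intro i j h u v
    rw [G.adj_comm, G'.adj_comm]
    exact key i j h v u
  have diag : ∀ i u v, (G.Adj (i, u) (i, v) ↔ G'.Adj (i, u) (i, v)) := by
    intro i u v
    constructor
    · intro h
      exact absurd rfl (hG h).ne
    · intro h
      exact absurd rfl (hG' h).ne
  ext ⟨i, u⟩ ⟨j, v⟩
  fin_cases i <;> fin_cases j
  · exact diag _ u v
  · exact key 0 1 h01 u v
  · exact key 0 2 h02 u v
  · exact key2 0 1 h01 u v
  · exact diag _ u v
  · exact key 1 2 h12 u v
  · exact key2 0 2 h02 u v
  · exact key2 1 2 h12 u v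
  · exact diag _ u v

lemma family_card_le (n m : ℕ) :
    Nat.card {G : SimpleGraph (Fin 3 × Fin n) // MemFamily (⊤ : SimpleGraph (Fin 3)) m G}
      ≤ (n ^ 2).choose m ^ 3 := by
  classical
  let P := Finset.powersetCard m (Finset.univ : Finset (Fin n × Fin n))
  have hP : ∀ (G : SimpleGraph (Fin 3 × Fin n)), MemFamily (⊤ : SimpleGraph (Fin 3)) m G →
      ∀ i j, i ≠ j → edgeSetOf G i j ∈ P := by
    intro G hG i j hij
    simp only [P, Finset.mem_powersetCard]
    exact ⟨Finset.subset_univ _, by rw [card_edgeSetOf]; exact hG.2 i j hij⟩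
  let F : {G : SimpleGraph (Fin 3 × Fin n) // MemFamily (⊤ : SimpleGraph (Fin 3)) m G} →
      P × P × P := fun G =>
    (⟨edgeSetOf G.1 0 1, hP _ G.2 _ _ (by decide)⟩, ⟨edgeSetOf G.1 0 2, hP _ G.2 _ _ (by decide)⟩,
      ⟨edgeSetOf G.1 1 2, hP _ G.2 _ _ (by decide)⟩)
  have hF : Function.Injective F := by
    intro G G' h
    simp only [F, Prod.mk.injEq, Subtype.mk.injEq] at h
    exact Subtype.ext (adj_ext_of _ _ G.2.1 G'.2.1 h.1 h.2.1 h.2.2)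
  have := Nat.card_le_card_of_injective F hF
  refine this.trans (le_of_eq ?_)
  have hc : Nat.card P = (n ^ 2).choose m := by
    simp [P, sq]
  rw [Nat.card_prod, Nat.card_prod, hc]
  ring

/-- The tripartite graph with prescribed edge sets. -/
def triGraph (S T U : Finset (Fin n × Fin n)) : SimpleGraph (Fin 3 × Fin n) :=
  SimpleGraph.fromRel (fun x y => (x.1 = 0 ∧ y.1 = 1 ∧ (x.2, y.2) ∈ S) ∨
    (x.1 = 0 ∧ y.1 = 2 ∧ (x.2, y.2) ∈ T) ∨ (x.1 = 1 ∧ y.1 = 2 ∧ (x.2, y.2) ∈ U))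

lemma triGraph_01 (S T U : Finset (Fin n × Fin n)) : edgeSetOf (triGraph S T U) 0 1 = S := by
  ext p
  simp [mem_edgeSetOf, triGraph]

lemma triGraph_02 (S T U : Finset (Fin n × Fin n)) : edgeSetOf (triGraph S T U) 0 2 = T := by
  ext p
  simp [mem_edgeSetOf, triGraph]

lemma triGraph_12 (S T U : Finset (Fin n × Fin n)) : edgeSetOf (triGraph S T U) 1 2 = U := by
  ext p
  simp [mem_edgeSetOf, triGraph]

lemma triGraph_sub (S T U : Finset (Fin n × Fin n)) :
    IsSubgraphKnH (⊤ : SimpleGraph (Fin 3)) (triGraph S T U) := by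
  rintro ⟨i, u⟩ ⟨j, v⟩ h
  simp only [triGraph, SimpleGraph.fromRel_adj] at h
  simp only [SimpleGraph.top_adj]
  rintro rfl
  obtain ⟨-, h⟩ := h
  rcases h with (h | h | h) | (h | h | h) <;> (have := h.1.symm.trans h.2.1; revert this; decide)

lemma triGraph_mem (m : ℕ) (S T U : Finset (Fin n × Fin n))
    (hS : S.card = m) (hT : T.card = m) (hU : U.card = m) :
    MemFamily (⊤ : SimpleGraph (Fin 3)) m (triGraph S T U) := by
  have h01 : pairCount (triGraph S T U) 0 1 = m := by rw [← card_edgeSetOf, triGraph_01, hS]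
  have h02 : pairCount (triGraph S T U) 0 2 = m := by rw [← card_edgeSetOf, triGraph_02, hT]
  have h12 : pairCount (triGraph S T U) 1 2 = m := by rw [← card_edgeSetOf, triGraph_12, hU]
  refine ⟨triGraph_sub S T U, ?_⟩
  intro i j hij
  fin_cases i <;> fin_cases j
  · exact absurd rfl hij.ne
  · exact h01
  · exact h02
  · exact (pairCount_symm _ _ _).trans h01
  · exact absurd rfl hij.ne
  · exact h12
  · exact (pairCount_symm _ _ _).trans h02
  · exact (pairCount_symm _ _ _).trans h12
  · exact absurd rfl hij.ne

lemma free_card_ge (n m : ℕ) (A : Finset (Fin n)) :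
    (A.card * n).choose m * ((Aᶜ.card * n).choose m * (n ^ 2).choose m) ≤
    Nat.card {G : SimpleGraph (Fin 3 × Fin n) //
          MemFamily (⊤ : SimpleGraph (Fin 3)) m G ∧
          ∀ f : Fin 3 → Fin n, ¬ IsCanonicalCopy (⊤ : SimpleGraph (Fin 3)) G f} := by
  classical
  let P := Finset.powersetCard m (A ×ˢ (Finset.univ : Finset (Fin n)))
  let Q := Finset.powersetCard m (Aᶜ ×ˢ (Finset.univ : Finset (Fin n)))
  let R := Finset.powersetCard m (Finset.univ : Finset (Fin n × Fin n))
  let F : P × Q × R → {G : SimpleGraph (Fin 3 × Fin n) //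
          MemFamily (⊤ : SimpleGraph (Fin 3)) m G ∧
          ∀ f : Fin 3 → Fin n, ¬ IsCanonicalCopy (⊤ : SimpleGraph (Fin 3)) G f} := fun x =>
    ⟨triGraph x.1.1 x.2.1.1 x.2.2.1, triGraph_mem m _ _ _
      (Finset.mem_powersetCard.1 x.1.2).2 (Finset.mem_powersetCard.1 x.2.1.2).2
      (Finset.mem_powersetCard.1 x.2.2.2).2, by
        intro f hf
        have h1 := (mem_edgeSetOf _ 0 1 (f 0, f 1)).2 (hf (show (0 : Fin 3) ≠ 1 by decide))
        have h2 := (mem_edgeSetOf _ 0 2 (f 0, f 2)).2 (hf (show (0 : Fin 3) ≠ 2 by decide))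
        rw [triGraph_01] at h1
        rw [triGraph_02] at h2
        have h1' := (Finset.mem_powersetCard.1 x.1.2).1 h1
        have h2' := (Finset.mem_powersetCard.1 x.2.1.2).1 h2
        rw [Finset.mem_product] at h1' h2'
        exact (Finset.mem_compl.1 h2'.1) h1'.1⟩
  have hF : Function.Injective F := by
    rintro ⟨⟨S, hS⟩, ⟨T, hT⟩, ⟨U, hU⟩⟩ ⟨⟨S', hS'⟩, ⟨T', hT'⟩, ⟨U', hU'⟩⟩ h
    have h : triGraph S T U = triGraph S' T' U' := congrArg Subtype.val h
    have e1 : S = S' := by rw [← triGraph_01 S T U, h, triGraph_01]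
    have e2 : T = T' := by rw [← triGraph_02 S T U, h, triGraph_02]
    have e3 : U = U' := by rw [← triGraph_12 S T U, h, triGraph_12]
    subst e1 e2 e3
    rfl
  have := Nat.card_le_card_of_injective F hF
  refine (le_of_eq ?_).trans this
  have h1 : Nat.card P = (A.card * n).choose m := by
    simp only [P, Nat.card_eq_fintype_card, Fintype.card_coe, Finset.card_powersetCard,
      Finset.card_product, Finset.card_univ, Fintype.card_fin]
  have h2 : Nat.card Q = (Aᶜ.card * n).choose m := by
    simp only [Q, Nat.card_eq_fintype_card, Fintype.card_coe, Finset.card_powersetCard,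
      Finset.card_product, Finset.card_univ, Fintype.card_fin]
  have h3 : Nat.card R = (n ^ 2).choose m := by
    simp [R, sq]
  rw [Nat.card_prod, Nat.card_prod, h1, h2, h3]

lemma choose_le_three (N m : ℕ) (h : 2 * m ≤ N) :
    (2 * N).choose m ≤ 3 ^ m * N.choose m := by
  induction m with
  | zero => simp
  | succ i ih =>
    have ih := ih (by omega)
    have e1 := Nat.choose_succ_right_eq (2 * N) i
    have e2 := Nat.choose_succ_right_eq N i
    refine Nat.le_of_mul_le_mul_right ?_ (Nat.succ_pos i)
    calc (2 * N).choose (i + 1) * (i + 1) = (2 * N).choose i * (2 * N - i) := e1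
      _ ≤ (3 ^ i * N.choose i) * (3 * (N - i)) := Nat.mul_le_mul ih (by omega)
      _ = 3 ^ (i + 1) * (N.choose i * (N - i)) := by ring
      _ = 3 ^ (i + 1) * N.choose (i + 1) * (i + 1) := by rw [← e2]; ring

/-- For every even `n` and `1 ≤ m ≤ n²/4`, the probability that `G_{n,m}^{K₃}` contains no
canonical triangle is at least `(2e)^(-2m)` (stated in counting form). -/
theorem triangle_free_probability (n m : ℕ) (hn : Even n) (hm : 1 ≤ m)
    (hm' : (m : ℝ) ≤ (n : ℝ) ^ 2 / 4) :
    ((2 * Real.exp 1) ^ (2 * m))⁻¹ *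
        (Nat.card {G : SimpleGraph (Fin 3 × Fin n) //
          MemFamily (⊤ : SimpleGraph (Fin 3)) m G} : ℝ)
      ≤ (Nat.card {G : SimpleGraph (Fin 3 × Fin n) //
          MemFamily (⊤ : SimpleGraph (Fin 3)) m G ∧
          ∀ f : Fin 3 → Fin n, ¬ IsCanonicalCopy (⊤ : SimpleGraph (Fin 3)) G f} : ℝ) := by
  obtain ⟨h, rfl⟩ := hn
  have hmh : m ≤ h ^ 2 := by
    have : (m : ℝ) ≤ (h : ℝ) ^ 2 := by
      push_cast at hm'
      nlinarith
    exact_mod_cast this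
  obtain ⟨A, -, hA⟩ := Finset.exists_subset_card_eq
    (s := (Finset.univ : Finset (Fin (h + h)))) (n := h) (by simp)
  have hAc : Aᶜ.card = h := by
    rw [Finset.card_compl, hA, Fintype.card_fin]; omega
  have hlow := free_card_ge (h + h) m A
  rw [hA, hAc] at hlow
  have hup := family_card_le (h + h) m
  have h3 := choose_le_three (h * (h + h)) m (by nlinarith)
  rw [show 2 * (h * (h + h)) = (h + h) ^ 2 by ring] at h3
  set a := ((h + h) ^ 2).choose m
  set b := (h * (h + h)).choose m
  have hfin : a ^ 3 ≤ 3 ^ (2 * m) * (b * (b * a)) := by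
    calc a ^ 3 = a * a * a := by ring
      _ ≤ (3 ^ m * b) * (3 ^ m * b) * a := by gcongr
      _ = 3 ^ (2 * m) * (b * (b * a)) := by ring
  have hN := hup.trans (hfin.trans (Nat.mul_le_mul_left _ hlow))
  have hR : (Nat.card {G : SimpleGraph (Fin 3 × Fin (h + h)) //
          MemFamily (⊤ : SimpleGraph (Fin 3)) m G} : ℝ) ≤ 3 ^ (2 * m) *
      (Nat.card {G : SimpleGraph (Fin 3 × Fin (h + h)) //
          MemFamily (⊤ : SimpleGraph (Fin 3)) m G ∧
          ∀ f : Fin 3 → Fin (h + h), ¬ IsCanonicalCopy (⊤ : SimpleGraph (Fin 3)) G f} : ℝ) := by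
    exact_mod_cast hN
  have he : (3 : ℝ) ≤ 2 * Real.exp 1 := by
    have := Real.add_one_le_exp (1 : ℝ)
    linarith
  rw [inv_mul_le_iff₀ (by positivity)]
  refine hR.trans ?_
  gcongr
end

section
/- For every graph H and constants λ, β > 0 there exist C, ε, ξ, γ > 0 such that the following holds for every sufficiently large n and every m ≥ C·n^{2−1/m₂(H)}: all but at most β^m·C(n²,m)^{e(H)} graphs G ∈ G(H, n, m, ε, λ) have the property that for every set X ⊆ E(G) of size |X| ≤ ξm, the graph G∖X contains at least γ·n^{v(H)}·(m/n²)^{e(H)} canonical copies of H. (Here C(n²,m) denotes the binomial coefficient.) -/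
open Finset

variable {k n : ℕ}

section generic
variable {α : Type*} [DecidableEq α]

lemma kl_sum_pow (V : Finset α) (p : ℝ) (hp : 0 ≤ p) :
    ∑ G ∈ V.powerset, p ^ #G ≤ Real.exp (p * #V) := by
  have h := Finset.sum_pow_mul_eq_add_pow p 1 V
  simp only [one_pow, mul_one] at h
  rw [h, mul_comm, Real.exp_nat_mul]
  apply pow_le_pow_left₀ (by linarith)
  linarith [Real.add_one_le_exp p]

lemma kl_superset (V S : Finset α) (F : Finset α → ℝ) (hF : ∀ X, 0 ≤ F X) :
    ∑ G ∈ V.powerset.filter (fun G => S ⊆ G), F (G \ S) ≤ ∑ X ∈ V.powerset, F X := by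
  have hinj : Set.InjOn (fun G => G \ S) (V.powerset.filter (fun G => S ⊆ G) : Finset (Finset α)) := by
    intro G hG G' hG' h
    simp only [coe_filter, mem_powerset, Set.mem_ofPred_eq] at hG hG'
    simp only at h
    rw [← sdiff_union_of_subset hG.2, h, sdiff_union_of_subset hG'.2]
  rw [← Finset.sum_image (f := F) hinj]
  apply Finset.sum_le_sum_of_subset_of_nonneg
  · intro X hX
    simp only [mem_image, mem_filter, mem_powerset] at hX ⊢
    obtain ⟨G, ⟨hG, _⟩, rfl⟩ := hX
    exact sdiff_subset.trans hG
  · intros; exact hF _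

open Classical in
lemma kl_upclose (V : Finset α) (p : ℝ) (hp : 0 ≤ p) (P : Finset α → Prop) :
    ∑ G ∈ V.powerset.filter (fun G => ∃ G' ⊆ G, P G'), p ^ #G ≤
      Real.exp (p * #V) * ∑ G ∈ V.powerset.filter P, p ^ #G := by
  calc _ ≤ ∑ G ∈ V.powerset.filter (fun G => ∃ G' ⊆ G, P G'),
        ∑ G' ∈ (V.powerset.filter P).filter (fun G' => G' ⊆ G), p ^ #G' * p ^ #(G \ G') := by
        apply Finset.sum_le_sum
        intro G hG
        simp only [mem_filter, mem_powerset] at hG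
        obtain ⟨hGV, G', hG', hP⟩ := hG
        have hm : G' ∈ (V.powerset.filter P).filter (fun G' => G' ⊆ G) := by
          simp [hG', hP, hG'.trans hGV]
        refine le_trans (le_of_eq ?_) (Finset.single_le_sum (f := fun G' => p ^ #G' * p ^ #(G \ G'))
          (fun i _ => by positivity) hm)
        rw [← pow_add, add_comm, card_sdiff_add_card_eq_card hG']
    _ ≤ ∑ G ∈ V.powerset,
        ∑ G' ∈ (V.powerset.filter P).filter (fun G' => G' ⊆ G), p ^ #G' * p ^ #(G \ G') := by
        apply Finset.sum_le_sum_of_subset_of_nonneg (filter_subset _ _)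
        intros; exact Finset.sum_nonneg (fun i _ => by positivity)
    _ = ∑ G' ∈ V.powerset.filter P, ∑ G ∈ V.powerset.filter (fun G => G' ⊆ G),
          p ^ #G' * p ^ #(G \ G') := by
        apply Finset.sum_comm'
        intro x y
        simp only [mem_filter]
        tauto
    _ ≤ ∑ G' ∈ V.powerset.filter P, p ^ #G' * Real.exp (p * #V) := by
        apply Finset.sum_le_sum
        intro G' _
        rw [← Finset.mul_sum]
        apply mul_le_mul_of_nonneg_left _ (by positivity)
        exact (kl_superset V G' (fun X => p ^ #X) (fun X => by positivity)).trans (kl_sum_pow V p hp)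
    _ = _ := by rw [← Finset.sum_mul, mul_comm]

open Classical in
lemma kl_deletion {ι : Type*} [Fintype ι] (V : Finset α) (p : ℝ) (hp : 0 ≤ p) (S : ι → Finset α)
    (r : ℕ) (hr : ∀ i, #(S i) ≤ r) (M K : ℝ) (hM : 0 < M) (hK : 0 < K)
    (hμ : ∑ i, p ^ #(S i) ≤ M) (z : ℕ) :
    ∑ G ∈ V.powerset.filter (fun G => ∀ G' ⊆ G, #(G \ G') ≤ r * z →
        K * M < #(univ.filter (fun i => S i ⊆ G'))), p ^ #G ≤ K⁻¹ ^ z * Real.exp (p * #V) := by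
  induction z with
  | zero =>
    simp only [pow_zero, one_mul]
    refine le_trans ?_ (kl_sum_pow V p hp)
    apply Finset.sum_le_sum_of_subset_of_nonneg (filter_subset _ _)
    intros; positivity
  | succ z ih =>
    set Bad : ℕ → Finset α → Prop := fun z G => ∀ G' ⊆ G, #(G \ G') ≤ r * z →
        K * M < #(univ.filter (fun i => S i ⊆ G')) with hBad
    change ∑ G ∈ V.powerset.filter (Bad (z+1)), p ^ #G ≤ _
    change ∑ G ∈ V.powerset.filter (Bad z), p ^ #G ≤ _ at ih
    have key : ∀ G, Bad (z+1) G → ∀ i, S i ⊆ G → Bad z (G \ S i) := by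
      intro G hG i hi G' hG' hc
      apply hG G' (hG'.trans sdiff_subset)
      have : G \ G' ⊆ ((G \ S i) \ G') ∪ S i := by
        intro x hx
        simp only [mem_sdiff, mem_union] at hx ⊢
        tauto
      have h1 := card_le_card this
      have h2 := card_union_le ((G \ S i) \ G') (S i)
      have h3 := hr i
      rw [mul_add, mul_one]
      omega
    have h1 : K * M * ∑ G ∈ V.powerset.filter (Bad (z+1)), p ^ #G ≤
        M * (K⁻¹ ^ z * Real.exp (p * #V)) := by
      calc _ = ∑ G ∈ V.powerset.filter (Bad (z+1)), K * M * p ^ #G := Finset.mul_sum _ _ _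
        _ ≤ ∑ G ∈ V.powerset.filter (Bad (z+1)), ∑ i ∈ univ.filter (fun i => S i ⊆ G),
              p ^ #(S i) * (if Bad z (G \ S i) then p ^ #(G \ S i) else 0) := by
            apply Finset.sum_le_sum
            intro G hG
            have hB := (mem_filter.1 hG).2
            have : ∀ i ∈ univ.filter (fun i => S i ⊆ G),
              p ^ #(S i) * (if Bad z (G \ S i) then p ^ #(G \ S i) else 0) = p ^ #G := by
              intro i hi
              have hi' := (mem_filter.1 hi).2
              rw [if_pos (key G hB i hi'), ← pow_add, add_comm, card_sdiff_add_card_eq_card hi']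
            rw [Finset.sum_congr rfl this, Finset.sum_const, nsmul_eq_mul]
            apply mul_le_mul_of_nonneg_right _ (by positivity)
            exact (hB G (Subset.refl _) (by simp)).le
        _ ≤ ∑ G ∈ V.powerset, ∑ i ∈ univ.filter (fun i => S i ⊆ G),
              p ^ #(S i) * (if Bad z (G \ S i) then p ^ #(G \ S i) else 0) := by
            apply Finset.sum_le_sum_of_subset_of_nonneg (filter_subset _ _)
            intros; apply Finset.sum_nonneg; intros; split_ifs <;> positivity
        _ = ∑ i, ∑ G ∈ V.powerset.filter (fun G => S i ⊆ G),
              p ^ #(S i) * (if Bad z (G \ S i) then p ^ #(G \ S i) else 0) := by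
            apply Finset.sum_comm'
            intro x y
            simp
        _ ≤ ∑ i, p ^ #(S i) * (K⁻¹ ^ z * Real.exp (p * #V)) := by
            apply Finset.sum_le_sum
            intro i _
            rw [← Finset.mul_sum]
            apply mul_le_mul_of_nonneg_left _ (by positivity)
            refine (kl_superset V (S i) (fun X => if Bad z X then p ^ #X else 0)
              (fun X => by split_ifs <;> positivity)).trans ?_
            rw [← Finset.sum_filter]
            exact ih
        _ ≤ _ := by
            rw [← Finset.sum_mul]
            apply mul_le_mul_of_nonneg_right hμ (by positivity)
    rw [pow_succ]
    have h2 : K⁻¹ ^ z * K⁻¹ * Real.exp (p * #V) = (K * M)⁻¹ * (M * (K⁻¹ ^ z * Real.exp (p * #V))) := by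
      field_simp
    rw [h2]
    rw [← div_eq_inv_mul, le_div_iff₀ (by positivity)]
    linarith

open Classical in
lemma kl_tail (V F : Finset α) (p L s : ℝ) (hp : 0 ≤ p) (hL : 1 ≤ L) :
    ∑ G ∈ V.powerset.filter (fun G => s ≤ #(G ∩ F)), p ^ #G ≤
      Real.exp (p * #V + p * L * #F - s * Real.log L) := by
  have hL0 : 0 < L := by linarith
  have h1 : ∀ G, s ≤ #(G ∩ F) → p ^ #G ≤ Real.exp (- (s * Real.log L)) *
      ∏ v ∈ G, (p * if v ∈ F then L else 1) := by
    intro G hG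
    rw [Finset.prod_mul_distrib, Finset.prod_const, Finset.prod_ite, Finset.prod_const_one, mul_one,
      Finset.prod_const, Finset.filter_mem_eq_inter]
    have : 1 ≤ Real.exp (- (s * Real.log L)) * L ^ #(G ∩ F) := by
      have : L ^ #(G ∩ F) = Real.exp (#(G ∩ F) * Real.log L) := by
        rw [Real.exp_nat_mul, Real.exp_log hL0]
      rw [this, ← Real.exp_add]
      apply Real.one_le_exp
      have := mul_le_mul_of_nonneg_right hG (Real.log_nonneg hL)
      linarith
    calc p ^ #G = p ^ #G * 1 := by ring
      _ ≤ p ^ #G * (Real.exp (- (s * Real.log L)) * L ^ #(G ∩ F)) :=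
        mul_le_mul_of_nonneg_left this (by positivity)
      _ = _ := by ring
  have hnn : ∀ v, 0 ≤ (p * if v ∈ F then L else 1) := by
    intro v; split_ifs <;> positivity
  calc _ ≤ ∑ G ∈ V.powerset.filter (fun G => s ≤ #(G ∩ F)), Real.exp (- (s * Real.log L)) *
      ∏ v ∈ G, (p * if v ∈ F then L else 1) := by
        apply Finset.sum_le_sum
        intro G hG
        exact h1 G (mem_filter.1 hG).2
    _ ≤ ∑ G ∈ V.powerset, Real.exp (- (s * Real.log L)) *
      ∏ v ∈ G, (p * if v ∈ F then L else 1) := by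
        apply Finset.sum_le_sum_of_subset_of_nonneg (filter_subset _ _)
        intros
        exact mul_nonneg (Real.exp_pos _).le (Finset.prod_nonneg (fun v _ => hnn v))
    _ = Real.exp (- (s * Real.log L)) * ∏ v ∈ V, (1 + (p * if v ∈ F then L else 1)) := by
        rw [← Finset.mul_sum, Finset.prod_one_add]
    _ ≤ Real.exp (- (s * Real.log L)) * ∏ v ∈ V, Real.exp (p * if v ∈ F then L else 1) := by
        apply mul_le_mul_of_nonneg_left _ (Real.exp_pos _).le
        apply Finset.prod_le_prod
        · intro v _; linarith [hnn v]
        · intro v _; linarith [Real.add_one_le_exp (p * if v ∈ F then L else 1)]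
    _ ≤ _ := by
        rw [← Real.exp_sum, ← Real.exp_add]
        apply Real.exp_le_exp.2
        have : ∑ v ∈ V, (p * if v ∈ F then L else 1) ≤ p * #V + p * L * #F := by
          calc _ ≤ ∑ v ∈ V, (p + if v ∈ F then p * L else 0) := by
                apply Finset.sum_le_sum; intro v _
                split_ifs <;> nlinarith
            _ = p * #V + p * L * #(V.filter (· ∈ F)) := by
                rw [Finset.sum_add_distrib, Finset.sum_const, ← Finset.sum_filter, Finset.sum_const]
                simp only [nsmul_eq_mul]; ring
            _ ≤ _ := by
                have : (#(V.filter (· ∈ F)) : ℝ) ≤ #F := by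
                  exact_mod_cast card_le_card (fun x hx => (mem_filter.1 hx).2)
                have := mul_le_mul_of_nonneg_left this (mul_nonneg hp hL0.le)
                linarith
        linarith
end generic

section coloring
variable {α : Type*} [Fintype α] [DecidableEq α]

def klCols (T : ℕ) (G : Finset α) : Finset (α → Option (Fin T)) :=
  Fintype.piFinset (fun v => if v ∈ G then univ.image some else {none})

def klParts {T : ℕ} (h : α → Option (Fin T)) (i : Fin T) : Finset α :=
  univ.filter (fun v => h v = some i)

lemma kl_mem_cols {T : ℕ} {G : Finset α} {h : α → Option (Fin T)} (hh : h ∈ klCols T G) (v : α) :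
    (v ∈ G ↔ ∃ i, h v = some i) := by
  have := Fintype.mem_piFinset.1 hh v
  split_ifs at this with hv
  · simp only [mem_image, mem_univ, true_and] at this
    obtain ⟨i, hi⟩ := this
    exact ⟨fun _ => ⟨i, hi.symm⟩, fun _ => hv⟩
  · simp only [mem_singleton] at this
    simp [this, hv]

lemma kl_biUnion_parts {T : ℕ} {G : Finset α} {h : α → Option (Fin T)} (hh : h ∈ klCols T G) :
    univ.biUnion (klParts h) = G := by
  ext v
  rw [kl_mem_cols hh v]
  simp [klParts]

lemma kl_prod_parts {T : ℕ} {G : Finset α} {h : α → Option (Fin T)} (hh : h ∈ klCols T G) (p : ℝ) :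
    ∏ i, p ^ #(klParts h i) = p ^ #G := by
  rw [Finset.prod_pow_eq_pow_sum, ← kl_biUnion_parts hh, card_biUnion]
  intro i _ j _ hij
  show Disjoint (klParts h i) (klParts h j)
  rw [Finset.disjoint_left]
  intro v hv hv'
  simp only [klParts, mem_filter, mem_univ, true_and] at hv hv'
  rw [hv] at hv'
  exact hij (Option.some.inj hv')

lemma kl_parts_inj {T : ℕ} : Function.Injective (klParts : (α → Option (Fin T)) → _) := by
  intro h h' hh
  funext v
  have : ∀ i, h v = some i ↔ h' v = some i := by
    intro i
    have := congrArg (fun g => v ∈ g i) hh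
    simpa [klParts] using this
  exact Option.ext this

open Classical in
lemma kl_color (T : ℕ) (p : ℝ) (hp : 0 ≤ p) (FF : Finset (Finset α))
    (P : (Fin T → Finset α) → Prop)
    (hgood : ∀ G ∈ FF, (T : ℝ) ^ #G ≤ 2 * #((klCols T G).filter (fun h => P (klParts h)))) :
    ∑ G ∈ FF, (T * p) ^ #G ≤
      2 * ∑ g ∈ univ.filter (fun g : Fin T → Finset α => P g ∧ univ.biUnion g ∈ FF),
        ∏ i, p ^ #(g i) := by
  calc _ ≤ ∑ G ∈ FF, 2 * ∑ h ∈ (klCols T G).filter (fun h => P (klParts h)),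
        ∏ i, p ^ #(klParts h i) := by
        apply Finset.sum_le_sum
        intro G hG
        rw [Finset.sum_congr rfl (fun h hh => kl_prod_parts (mem_filter.1 hh).1 p),
          Finset.sum_const, nsmul_eq_mul, mul_pow, ← mul_assoc]
        exact mul_le_mul_of_nonneg_right (hgood G hG) (by positivity)
    _ ≤ _ := by
        rw [← Finset.mul_sum]
        apply mul_le_mul_of_nonneg_left _ (by norm_num)
        rw [Finset.sum_sigma']
        have hinj : Set.InjOn (fun x : (_ : Finset α) × (α → Option (Fin T)) => klParts x.2)
            (FF.sigma (fun G => (klCols T G).filter (fun h => P (klParts h))) : Finset _) := by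
          rintro ⟨G, h⟩ hx ⟨G', h'⟩ hx' hh
          simp only [coe_sigma, Set.mem_sigma_iff, coe_filter, Set.mem_ofPred_eq, mem_coe] at hx hx'
          have e := kl_parts_inj hh
          simp only at e
          subst e
          have := kl_biUnion_parts hx.2.1
          rw [kl_biUnion_parts hx'.2.1] at this
          subst this
          rfl
        rw [← Finset.sum_image (f := fun g : Fin T → Finset α => ∏ i, p ^ #(g i)) hinj]
        apply Finset.sum_le_sum_of_subset_of_nonneg
        · intro g hg
          simp only [mem_image, mem_sigma, mem_filter] at hg
          obtain ⟨⟨G, h⟩, ⟨h1, h2, h3⟩, rfl⟩ := hg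
          simp only [mem_filter, mem_univ, true_and]
          refine ⟨h3, ?_⟩
          rw [kl_biUnion_parts h2]; exact h1
        · intros; exact Finset.prod_nonneg (fun i _ => by positivity)

lemma kl_color_card (T : ℕ) (G : Finset α) : ((klCols T G).card : ℝ) = (T : ℝ) ^ #G := by
  rw [klCols, Fintype.card_piFinset]
  push_cast
  rw [← Finset.prod_subset (subset_univ G)]
  · rw [Finset.prod_congr rfl (g := fun _ => (T : ℝ)), Finset.prod_const]
    intro v hv
    rw [if_pos hv, card_image_of_injective _ (Option.some_injective _)]
    simp
  · intro v _ hv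
    rw [if_neg hv]; simp

open Classical in
lemma kl_color_tail (T : ℕ) (hT : 0 < T) (G F : Finset α) (hF : F ⊆ G) (i : Fin T) :
    (#((klCols T G).filter (fun h => (#(F ∩ klParts h i) : ℝ) < #F / (4 * T))) : ℝ) ≤
      (T : ℝ) ^ #G * Real.exp (- (#F / (4 * T))) := by
  have hT' : (0 : ℝ) < T := by exact_mod_cast hT
  have hT1 : (1 : ℝ) ≤ T := by exact_mod_cast hT
  set wt : α → Option (Fin T) → ℝ := fun v o => if v ∈ F ∧ o = some i then 1/2 else 1 with hwt
  have hprod : ∀ h : α → Option (Fin T), ∏ v, wt v (h v) = (1/2 : ℝ) ^ #(F ∩ klParts h i) := by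
    intro h
    simp only [hwt]
    rw [Finset.prod_ite, Finset.prod_const_one, mul_one, Finset.prod_const]
    congr 2
    ext v
    simp [klParts]
  have hsum : ∑ h ∈ klCols T G, ∏ v, wt v (h v) ≤ (T : ℝ) ^ #G * Real.exp (- (#F / (2 * T))) := by
    rw [klCols, ← Finset.prod_univ_sum]
    have : ∀ v, ∑ o ∈ (if v ∈ G then univ.image some else {none} : Finset (Option (Fin T))), wt v o =
        (if v ∈ G then (T : ℝ) else 1) * (if v ∈ F then (1 - 1 / (2 * T : ℝ)) else 1) := by
      intro v
      by_cases hv : v ∈ G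
      · rw [if_pos hv, if_pos hv, Finset.sum_image (by intro a _ b _ h; exact Option.some.inj h)]
        by_cases hvF : v ∈ F
        · simp only [hwt, hvF, true_and, Option.some.injEq, if_true]
          have : ∀ x : Fin T, (if x = i then (1/2 : ℝ) else 1) = 1 - (if x = i then 1/2 else 0) := by
            intro x; split_ifs <;> norm_num
          simp only [this, Finset.sum_sub_distrib, Finset.sum_ite_eq', mem_univ, if_true]
          simp
          field_simp
        · simp [hwt, hvF]
      · have hvF : v ∉ F := fun h => hv (hF h)
        simp [hv, hvF, hwt]
    simp only [this]
    rw [Finset.prod_mul_distrib]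
    have e1 : ∏ v : α, (if v ∈ G then (T : ℝ) else 1) = (T : ℝ) ^ #G := by
      rw [Finset.prod_ite, Finset.prod_const_one, mul_one, Finset.prod_const]
      simp
    have e2 : ∏ v : α, (if v ∈ F then (1 - 1 / (2 * T : ℝ)) else 1) = (1 - 1 / (2 * T : ℝ)) ^ #F := by
      rw [Finset.prod_ite, Finset.prod_const_one, mul_one, Finset.prod_const]
      simp
    rw [e1, e2]
    apply mul_le_mul_of_nonneg_left _ (by positivity)
    have : -(#F / (2 * T) : ℝ) = #F * (-(1 / (2 * T))) := by ring
    rw [this, Real.exp_nat_mul]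
    apply pow_le_pow_left₀
    · have : 1 / (2 * T : ℝ) ≤ 1 := by
        rw [div_le_one (by positivity)]; linarith
      linarith
    · linarith [Real.add_one_le_exp (-(1 / (2 * T : ℝ)))]
  have hmark : (#((klCols T G).filter (fun h => (#(F ∩ klParts h i) : ℝ) < #F / (4 * T))) : ℝ) *
      Real.exp (- (#F / (4 * T))) ≤ ∑ h ∈ klCols T G, ∏ v, wt v (h v) := by
    rw [← nsmul_eq_mul, ← Finset.sum_const]
    refine le_trans (Finset.sum_le_sum (g := fun h => ∏ v, wt v (h v)) ?_)
      (Finset.sum_le_sum_of_subset_of_nonneg (filter_subset _ _) ?_)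
    · intro h hh
      have hh := (mem_filter.1 hh).2
      rw [hprod]
      have h2 : Real.exp (-1) ≤ 1/2 := by
        rw [Real.exp_neg, one_div]
        apply inv_anti₀ (by norm_num)
        linarith [Real.add_one_le_exp (1:ℝ)]
      calc Real.exp (- (#F / (4 * T))) ≤ Real.exp (#(F ∩ klParts h i) * (-1)) := by
            apply Real.exp_le_exp.2; linarith
        _ = Real.exp (-1) ^ #(F ∩ klParts h i) := by rw [Real.exp_nat_mul]
        _ ≤ _ := pow_le_pow_left₀ (Real.exp_pos _).le h2 _
    · intro h _ _
      rw [hprod]; positivity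
  have hfin := hmark.trans hsum
  have e3 : Real.exp (- (#F / (2 * T) : ℝ)) = Real.exp (- (#F / (4 * T))) * Real.exp (- (#F / (4 * T))) := by
    rw [← Real.exp_add]; congr 1; field_simp; ring
  rw [e3, ← mul_assoc] at hfin
  exact le_of_mul_le_mul_right hfin (Real.exp_pos _)

end coloring

section machine
variable {ι σ : Type*}

open Classical in
noncomputable def klFl (Fail : σ → ι → Prop) (upd : σ → ι → σ) : (T : ℕ) → σ → (Fin T → ι) → ℕ
  | 0, _, _ => 0
  | T+1, s, g => (if Fail s (g 0) then 1 else 0) + klFl Fail upd T (upd s (g 0)) (Fin.tail g)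

def klFin (upd : σ → ι → σ) : (T : ℕ) → σ → (Fin T → ι) → σ
  | 0, s, _ => s
  | T+1, s, g => klFin upd T (upd s (g 0)) (Fin.tail g)

open Classical in
lemma kl_machine_sum [Fintype ι] (Fail : σ → ι → Prop) (upd : σ → ι → σ) (w : ι → ℝ)
    (hw : ∀ x, 0 ≤ w x) (φ W M : ℝ) (hM : 0 ≤ M) (hφ0 : 0 ≤ φ) (hW0 : 0 ≤ W)
    (hφ : ∀ s, ∑ x ∈ univ.filter (Fail s), w x ≤ φ)
    (hW : ∑ x, w x ≤ W) (T : ℕ) (s : σ) :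
    ∑ g : Fin T → ι, (∏ i, w (g i)) * M ^ klFl Fail upd T s g ≤ (W + M * φ) ^ T := by
  induction T generalizing s with
  | zero => simp [klFl]
  | succ T ih =>
    rw [← (Fin.consEquiv (fun _ : Fin (T+1) => ι)).sum_comp, Fintype.sum_prod_type]
    simp only [Fin.consEquiv_apply, Fin.prod_univ_succ, Fin.cons_zero, Fin.cons_succ, klFl,
      Fin.tail_cons, pow_add]
    calc _ = ∑ x, w x * M ^ (if Fail s x then 1 else 0) *
          ∑ g : Fin T → ι, (∏ i, w (g i)) * M ^ klFl Fail upd T (upd s x) g := by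
          apply Finset.sum_congr rfl
          intro x _
          rw [Finset.mul_sum]
          apply Finset.sum_congr rfl
          intro g _
          have : Fin.tail ((Fin.consEquiv fun _ : Fin (T+1) => ι) (x, g)) = g := rfl
          rw [this]
          ring
      _ ≤ ∑ x, w x * M ^ (if Fail s x then 1 else 0) * (W + M * φ) ^ T := by
          apply Finset.sum_le_sum
          intro x _
          apply mul_le_mul_of_nonneg_left (ih _)
          have := hw x
          positivity
      _ ≤ (W + M * φ) * (W + M * φ) ^ T := by
          rw [← Finset.sum_mul]
          apply mul_le_mul_of_nonneg_right _ (by positivity)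
          calc _ ≤ ∑ x, (w x + if Fail s x then M * w x else 0) := by
                apply Finset.sum_le_sum
                intro x _
                have := hw x
                split_ifs <;> simp <;> nlinarith
            _ = ∑ x, w x + M * ∑ x ∈ univ.filter (Fail s), w x := by
                rw [Finset.sum_add_distrib, ← Finset.sum_filter, Finset.mul_sum]
            _ ≤ _ := add_le_add hW (mul_le_mul_of_nonneg_left (hφ s) hM)
      _ = _ := by ring

lemma kl_fin_subset {β : Type*} [DecidableEq β] (R : ι → Finset β) (T : ℕ) (s : Finset β) (g : Fin T → ι) :
    klFin (fun s x => s \ R x) T s g ⊆ s := by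
  induction T generalizing s with
  | zero => simp [klFin]
  | succ T ih => exact (ih _ _).trans sdiff_subset

lemma kl_fin_cover {β : Type*} [DecidableEq β] (R : ι → Finset β) (T : ℕ) (s : Finset β) (g : Fin T → ι)
    (e : β) (he : e ∈ s) (hne : e ∉ klFin (fun s x => s \ R x) T s g) : ∃ i, e ∈ R (g i) := by
  induction T generalizing s with
  | zero => simp [klFin] at hne; exact absurd he hne
  | succ T ih =>
    by_cases h : e ∈ R (g 0)
    · exact ⟨0, h⟩
    · obtain ⟨i, hi⟩ := ih (s \ R (g 0)) (Fin.tail g) (by simp [he, h]) hne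
      exact ⟨i.succ, hi⟩

lemma kl_machine_card {β : Type*} [DecidableEq β] (R : ι → Finset β) (Fail : Finset β → ι → Prop)
    (LRp : Finset β → Prop) (hmono : ∀ s t, s ⊆ t → LRp s → LRp t) (OK : ι → Prop) (gain : ℝ)
    (hgain : ∀ s x, LRp s → OK x → ¬ Fail s x → gain ≤ #(s ∩ R x))
    (T : ℕ) (s : Finset β) (g : Fin T → ι) (hOK : ∀ i, OK (g i))
    (hf : LRp (klFin (fun s x => s \ R x) T s g)) :
    gain * ((T : ℝ) - klFl Fail (fun s x => s \ R x) T s g) ≤ #s := by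
  induction T generalizing s with
  | zero => simp [klFl]
  | succ T ih =>
    have h1 := ih (s \ R (g 0)) (Fin.tail g) (fun i => hOK i.succ) hf
    have hs : LRp s := hmono _ _ (kl_fin_subset R (T+1) s g) hf
    simp only [klFl]
    have hc : (#(s \ R (g 0)) : ℝ) + #(s ∩ R (g 0)) = #s := by
      exact_mod_cast card_sdiff_add_card_inter s (R (g 0))
    by_cases hF : Fail s (g 0)
    · rw [if_pos hF]; push_cast
      have : (0 : ℝ) ≤ #(s ∩ R (g 0)) := by positivity
      have e : gain * ((T : ℝ) + 1 - (1 + klFl Fail (fun s x => s \ R x) T (s \ R (g 0)) (Fin.tail g)))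
        = gain * ((T : ℝ) - klFl Fail (fun s x => s \ R x) T (s \ R (g 0)) (Fin.tail g)) := by ring
      rw [e]; linarith
    · rw [if_neg hF]; push_cast
      have := hgain s (g 0) hs (hOK 0) hF
      have e : gain * ((T : ℝ) + 1 - (0 + klFl Fail (fun s x => s \ R x) T (s \ R (g 0)) (Fin.tail g)))
        = gain * ((T : ℝ) - klFl Fail (fun s x => s \ R x) T (s \ R (g 0)) (Fin.tail g)) + gain := by ring
      rw [e]; linarith

end machine

abbrev KSlot (k n : ℕ) := (Fin k × Fin k) × (Fin n × Fin n)

section klr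
variable {k n : ℕ}

def klCnt (G : Finset (KSlot k n)) (e : Fin k × Fin k) (A B : Finset (Fin n)) : ℕ :=
  #((A ×ˢ B).filter (fun uv => (e, uv) ∈ G))

def KLR (ε : ℝ) (δ : ℝ → ℝ) (G : Finset (KSlot k n)) (e : Fin k × Fin k) : Prop :=
  ∀ x, ε ≤ x → ∀ A B : Finset (Fin n), x * n ≤ #A → x * n ≤ #B →
    δ x * (#A * #B : ℝ) ≤ klCnt G e A B

def klCps (E : Finset (Fin k × Fin k)) (D : Finset (KSlot k n)) : Finset (Fin k → Fin n) :=
  univ.filter (fun f => ∀ e ∈ E, (e, (f e.1, f e.2)) ∈ D)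

lemma KLR.mono_eps {ε ε' : ℝ} {δ : ℝ → ℝ} {G : Finset (KSlot k n)} {e} (h : KLR ε δ G e)
    (hε : ε ≤ ε') : KLR ε' δ G e := fun x hx => h x (hε.trans hx)

lemma klCnt_mono {G G' : Finset (KSlot k n)} (h : G ⊆ G') (e) (A B : Finset (Fin n)) :
    klCnt G e A B ≤ klCnt G' e A B := by
  apply card_le_card
  intro x hx
  simp only [mem_filter] at hx ⊢
  exact ⟨hx.1, h hx.2⟩

lemma klCnt_left (G : Finset (KSlot k n)) (e) (A B : Finset (Fin n)) :
    klCnt G e A B = ∑ u ∈ A, #(B.filter (fun w => (e, (u, w)) ∈ G)) := by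
  simp only [klCnt, card_filter, sum_product]

lemma klCnt_right (G : Finset (KSlot k n)) (e) (A B : Finset (Fin n)) :
    klCnt G e A B = ∑ w ∈ B, #(A.filter (fun u => (e, (u, w)) ∈ G)) := by
  simp only [klCnt, card_filter, sum_product_right]

lemma kl_fiber (v : Fin k) (u : Fin n) (Q : (Fin k → Fin n) → Prop) [DecidablePred Q]
    (hQ : ∀ f w, Q f → Q (Function.update f v w)) :
    #(univ.filter Q) ≤ n * #(univ.filter (fun f => f v = u ∧ Q f)) := by
  have : n * #(univ.filter (fun f => f v = u ∧ Q f)) =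
      #((univ : Finset (Fin n)) ×ˢ (univ.filter (fun f => f v = u ∧ Q f))) := by
    simp [card_product]
  rw [this]
  apply card_le_card_of_injOn (fun f => (f v, Function.update f v u))
  · intro f hf
    simp only [coe_filter, mem_univ, true_and, Set.mem_ofPred_eq] at hf
    simp [hQ f u hf]
  · intro f _ f' _ h
    simp only [Prod.mk.injEq] at h
    funext i
    by_cases hi : i = v
    · subst hi; exact h.1
    · have := congrFun h.2 i
      simpa [Function.update_of_ne hi] using this

open Classical in
lemma kl_dense (δ : ℝ → ℝ) (hδ : ∀ x, 0 < x → 0 < δ x) (E : Finset (Fin k × Fin k))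
    (hE : ∀ e ∈ E, e.1 < e.2) (S : Finset (Fin k)) : ∀ x : ℝ, 0 < x → ∃ ε γ : ℝ, 0 < ε ∧ 0 < γ ∧
      ∀ n : ℕ, 0 < n → ∀ D : Finset (KSlot k n), (∀ e ∈ E, KLR ε δ D e) →
      ∀ A : Fin k → Finset (Fin n), (∀ i ∈ S, x * n ≤ #(A i)) →
      γ * n ^ k ≤ #(univ.filter (fun f : Fin k → Fin n => (∀ i ∈ S, f i ∈ A i) ∧
        ∀ e ∈ E, e.1 ∈ S → e.2 ∈ S → (e, (f e.1, f e.2)) ∈ D)) := by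
  induction S using Finset.induction_on with
  | empty =>
    intro x hx
    refine ⟨1, 1, one_pos, one_pos, ?_⟩
    intro n hn D hD A hA
    simp
  | insert v S hv ih =>
    intro x hx
    set x' : ℝ := x / (2 * (k + 1)) with hx'
    have hx'0 : 0 < x' := by positivity
    have hx'x : x' ≤ x := by
      rw [hx', div_le_iff₀ (by positivity)]
      nlinarith [(Nat.cast_nonneg k : (0:ℝ) ≤ k)]
    set δ' : ℝ := min (δ x') 1 with hδ'
    have hδ'0 : 0 < δ' := lt_min (hδ _ hx'0) one_pos
    obtain ⟨ε, γ, hε, hγ, H⟩ := ih (δ' * x) (by positivity)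
    refine ⟨min ε x', x * γ / 2, lt_min hε hx'0, by positivity, ?_⟩
    intro n hn D hD A hA
    have hn' : (0 : ℝ) < n := by exact_mod_cast hn
    set A' : Fin n → Fin k → Finset (Fin n) := fun u j =>
      if (v, j) ∈ E then (A j).filter (fun w => ((v, j), (u, w)) ∈ D)
      else if (j, v) ∈ E then (A j).filter (fun w => ((j, v), (w, u)) ∈ D) else A j with hA'
    set Bd : Fin k → Finset (Fin n) := fun j =>
      (A v).filter (fun u => (#(A' u j) : ℝ) < δ' * #(A j)) with hBd
    have hbad : ∀ j ∈ S, (#(Bd j) : ℝ) ≤ x' * n := by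
      intro j hj
      by_contra hcon
      push Not at hcon
      have hAj : x' * n ≤ #(A j) := by
        have := hA j (mem_insert_of_mem hj)
        nlinarith
      have hpos : (0 : ℝ) < #(Bd j) := lt_trans (by positivity) hcon
      have hne : (Bd j).Nonempty := by
        rw [← card_pos]; exact_mod_cast hpos
      have hlt : ∑ u ∈ Bd j, (#(A' u j) : ℝ) < ∑ u ∈ Bd j, δ' * #(A j) :=
        Finset.sum_lt_sum_of_nonempty hne (fun u hu => (mem_filter.1 hu).2)
      rw [Finset.sum_const, nsmul_eq_mul] at hlt
      have hge : δ' * (#(Bd j) * #(A j) : ℝ) ≤ ∑ u ∈ Bd j, (#(A' u j) : ℝ) := by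
        by_cases h1 : (v, j) ∈ E
        · have h2 := (hD _ h1).mono_eps (min_le_right _ _) x' le_rfl (Bd j) (A j) hcon.le hAj
          rw [klCnt_left] at h2
          push_cast at h2
          have h3 : ∀ u, A' u j = (A j).filter (fun w => ((v, j), (u, w)) ∈ D) := by
            intro u; simp only [hA', if_pos h1]
          simp only [h3]
          refine le_trans (mul_le_mul_of_nonneg_right (min_le_left _ _) (by positivity)) h2
        · by_cases h1' : (j, v) ∈ E
          · have h2 := (hD _ h1').mono_eps (min_le_right _ _) x' le_rfl (A j) (Bd j) hAj hcon.le
            rw [klCnt_right] at h2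
            push_cast at h2
            have h3 : ∀ u, A' u j = (A j).filter (fun w => ((j, v), (w, u)) ∈ D) := by
              intro u; simp only [hA', if_neg h1, if_pos h1']
            simp only [h3]
            refine le_trans (mul_le_mul_of_nonneg_right (min_le_left _ _) (by positivity)) ?_
            rw [mul_comm (#(Bd j) : ℝ)]
            exact h2
          · have h3 : ∀ u, A' u j = A j := by
              intro u; simp only [hA', if_neg h1, if_neg h1']
            simp only [h3, Finset.sum_const, nsmul_eq_mul]
            have := min_le_right (δ x') 1
            have : (0:ℝ) ≤ #(Bd j) * #(A j) := by positivity
            nlinarith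
      nlinarith
    set Gd : Finset (Fin n) := A v \ S.biUnion Bd with hGd
    have hGdc : x / 2 * n ≤ #Gd := by
      have h1 : (#(S.biUnion Bd) : ℝ) ≤ k * (x' * n) := by
        calc (#(S.biUnion Bd) : ℝ) ≤ ∑ j ∈ S, (#(Bd j) : ℝ) := by exact_mod_cast card_biUnion_le
          _ ≤ ∑ j ∈ S, x' * n := Finset.sum_le_sum hbad
          _ = #S * (x' * n) := by rw [Finset.sum_const, nsmul_eq_mul]
          _ ≤ k * (x' * n) := by
            apply mul_le_mul_of_nonneg_right _ (by positivity)
            have := card_le_univ S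
            simp only [Fintype.card_fin] at this
            exact_mod_cast this
      have h2 : (#(A v) : ℝ) ≤ #Gd + #(S.biUnion Bd) := by
        have := le_card_sdiff (S.biUnion Bd) (A v)
        have : #(A v) ≤ #Gd + #(S.biUnion Bd) := by rw [hGd]; omega
        exact_mod_cast this
      have h3 := hA v (mem_insert_self _ _)
      have h4 : k * (x' * n) ≤ x / 2 * n := by
        rw [← mul_assoc]
        apply mul_le_mul_of_nonneg_right _ hn'.le
        rw [hx']
        have : (k : ℝ) * (x / (2 * (k + 1))) = x / 2 * (k / (k + 1)) := by field_simp
        rw [this]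
        have : (k : ℝ) / (k + 1) ≤ 1 := by
          rw [div_le_one (by positivity)]; linarith
        nlinarith
      linarith
    set Q : Fin n → (Fin k → Fin n) → Prop := fun u f => (∀ i ∈ S, f i ∈ A' u i) ∧
        ∀ e ∈ E, e.1 ∈ S → e.2 ∈ S → (e, (f e.1, f e.2)) ∈ D with hQ
    have hfib : ∀ u ∈ Gd, γ * n ^ k ≤ n * (#(univ.filter (fun f => f v = u ∧ Q u f)) : ℝ) := by
      intro u hu
      have h1 := H n hn D (fun e he => (hD e he).mono_eps (min_le_left _ _)) (A' u) (by
        intro j hj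
        rw [hGd, mem_sdiff, mem_biUnion] at hu
        have : ¬ ((#(A' u j) : ℝ) < δ' * #(A j)) := by
          intro hc
          exact hu.2 ⟨j, hj, mem_filter.2 ⟨hu.1, hc⟩⟩
        push Not at this
        have h5 := hA j (mem_insert_of_mem hj)
        nlinarith)
      have h2 := kl_fiber v u (Q u) (by
        intro f w hf
        have hne : ∀ i ∈ S, i ≠ v := fun i hi h => hv (h ▸ hi)
        refine ⟨fun i hi => ?_, fun e he h1 h2 => ?_⟩
        · rw [Function.update_of_ne (hne i hi)]; exact hf.1 i hi
        · rw [Function.update_of_ne (hne _ h1), Function.update_of_ne (hne _ h2)]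
          exact hf.2 e he h1 h2)
      refine h1.trans ?_
      exact_mod_cast h2
    have hsub : Gd.biUnion (fun u => univ.filter (fun f => f v = u ∧ Q u f)) ⊆
        univ.filter (fun f : Fin k → Fin n => (∀ i ∈ insert v S, f i ∈ A i) ∧
        ∀ e ∈ E, e.1 ∈ insert v S → e.2 ∈ insert v S → (e, (f e.1, f e.2)) ∈ D) := by
      intro f hf
      simp only [mem_biUnion, mem_filter, mem_univ, true_and] at hf
      obtain ⟨u, hu, rfl, hq1, hq2⟩ := hf
      have hA'A : ∀ i, A' (f v) i ⊆ A i := by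
        intro i
        simp only [hA']
        split_ifs
        · exact filter_subset _ _
        · exact filter_subset _ _
        · exact Subset.refl _
      simp only [mem_filter, mem_univ, true_and]
      refine ⟨?_, ?_⟩
      · intro i hi
        rcases mem_insert.1 hi with rfl | hi
        · exact (mem_sdiff.1 hu).1
        · exact hA'A i (hq1 i hi)
      · rintro ⟨i, j⟩ he h1 h2
        simp only at h1 h2 ⊢
        have hij := hE _ he
        simp only at hij
        rcases mem_insert.1 h1 with rfl | h1'
        · rcases mem_insert.1 h2 with rfl | h2
          · exact absurd hij (lt_irrefl _)
          · have := hq1 j h2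
            simp only [hA', if_pos he, mem_filter] at this
            exact this.2
        · rcases mem_insert.1 h2 with rfl | h2
          · have := hq1 i h1'
            have hn : (j, i) ∉ E := fun h => absurd (hE _ h) (not_lt.2 hij.le)
            simp only [hA', if_neg hn, if_pos he, mem_filter] at this
            exact this.2
          · exact hq2 _ he h1' h2
    have hcard := card_le_card hsub
    rw [card_biUnion (by
      intro u _ u' _ huu
      show Disjoint _ _
      rw [Finset.disjoint_left]
      intro f hf hf'
      simp only [mem_filter] at hf hf'
      exact huu (hf.2.1.symm.trans hf'.2.1))] at hcard
    have hcard' := (Nat.cast_le (α := ℝ)).2 hcard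
    rw [Nat.cast_sum] at hcard'
    refine le_trans ?_ hcard'
    have h6 : #Gd * (γ * n ^ k) ≤ n * ∑ u ∈ Gd, (#(univ.filter (fun f => f v = u ∧ Q u f)) : ℝ) := by
      rw [Finset.mul_sum, ← nsmul_eq_mul, ← Finset.sum_const]
      exact Finset.sum_le_sum hfib
    have h7 : x / 2 * n * (γ * n ^ k) ≤ #Gd * (γ * n ^ k) :=
      mul_le_mul_of_nonneg_right hGdc (by positivity)
    have h8 := h7.trans h6
    have h9 : x / 2 * n * (γ * n ^ k) = n * (x * γ / 2 * n ^ k) := by ring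
    rw [h9] at h8
    exact le_of_mul_le_mul_left h8 hn'

def klSl (E : Finset (Fin k × Fin k)) (f : Fin k → Fin n) : Finset (KSlot k n) :=
  E.image (fun e => (e, (f e.1, f e.2)))

lemma klSl_card (E : Finset (Fin k × Fin k)) (f : Fin k → Fin n) : #(klSl E f) = #E := by
  apply card_image_of_injective
  intro e e' h
  exact (Prod.mk.inj h).1

lemma kl_second (E : Finset (Fin k × Fin k)) (a b : Fin k) (p : ℝ) (hp0 : 0 < p) (hp1 : p ≤ 1)
    (hn : 0 < n)
    (hJ : ∀ J : Finset (Fin k), a ∈ J → b ∈ J →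
      (n : ℝ) ^ 2 ≤ n ^ #J * p ^ #(E.filter (fun e => e.1 ∈ J ∧ e.2 ∈ J))) :
    ∑ i : {ff : (Fin k → Fin n) × (Fin k → Fin n) // ff.1 a = ff.2 a ∧ ff.1 b = ff.2 b},
      p ^ #(klSl E i.1.1 ∪ klSl E i.1.2) ≤ 2 ^ k * (n ^ k) ^ 2 / n ^ 2 * (p ^ #E) ^ 2 := by
  have hn' : (0 : ℝ) < n := by exact_mod_cast hn
  have key : ∀ f f' : Fin k → Fin n, f a = f' a → f b = f' b →
      p ^ #(klSl E f ∪ klSl E f') ≤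
        (p ^ #E) ^ 2 / n ^ 2 * ∏ i, (if f' i = f i then (n : ℝ) else 1) := by
    intro f f' ha hb
    set J : Finset (Fin k) := univ.filter (fun i => f' i = f i) with hJdef
    have h1 : ∏ i, (if f' i = f i then (n : ℝ) else 1) = n ^ #J := by
      rw [Finset.prod_ite, Finset.prod_const_one, mul_one, Finset.prod_const]
    rw [h1]
    have h2 := hJ J (by simp [hJdef, ha]) (by simp [hJdef, hb])
    have h3 : #(klSl E f ∩ klSl E f') ≤ #(E.filter (fun e => e.1 ∈ J ∧ e.2 ∈ J)) := by
      have : klSl E f ∩ klSl E f' ⊆ klSl (E.filter (fun e => e.1 ∈ J ∧ e.2 ∈ J)) f := by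
        intro s hs
        simp only [klSl, mem_inter, mem_image] at hs
        obtain ⟨⟨e, he, rfl⟩, ⟨e', he', h⟩⟩ := hs
        simp only [Prod.mk.injEq] at h
        obtain ⟨rfl, h4, h5⟩ := h
        simp only [klSl, mem_image, mem_filter]
        exact ⟨e', ⟨he, by simp [hJdef, h4], by simp [hJdef, h5]⟩, rfl⟩
      have := card_le_card this
      rwa [klSl_card] at this
    have h4 := card_union_add_card_inter (klSl E f) (klSl E f')
    rw [klSl_card, klSl_card] at h4
    have h5 : p ^ #(klSl E f ∪ klSl E f') * p ^ #(E.filter (fun e => e.1 ∈ J ∧ e.2 ∈ J)) ≤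
        (p ^ #E) ^ 2 := by
      rw [← pow_mul, ← pow_add]
      apply pow_le_pow_of_le_one hp0.le hp1
      omega
    rw [div_mul_eq_mul_div, le_div_iff₀ (by positivity)]
    calc _ ≤ p ^ #(klSl E f ∪ klSl E f') * (n ^ #J * p ^ #(E.filter (fun e => e.1 ∈ J ∧ e.2 ∈ J))) :=
          mul_le_mul_of_nonneg_left h2 (by positivity)
      _ = (p ^ #(klSl E f ∪ klSl E f') * p ^ #(E.filter (fun e => e.1 ∈ J ∧ e.2 ∈ J))) * n ^ #J := by
          ring
      _ ≤ _ := mul_le_mul_of_nonneg_right h5 (by positivity)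
  calc _ ≤ ∑ i : {ff : (Fin k → Fin n) × (Fin k → Fin n) // ff.1 a = ff.2 a ∧ ff.1 b = ff.2 b},
      (p ^ #E) ^ 2 / n ^ 2 * ∏ j, (if i.1.2 j = i.1.1 j then (n : ℝ) else 1) := by
        apply Finset.sum_le_sum
        intro i _
        exact key _ _ i.2.1 i.2.2
    _ ≤ ∑ i : (Fin k → Fin n) × (Fin k → Fin n),
      (p ^ #E) ^ 2 / n ^ 2 * ∏ j, (if i.2 j = i.1 j then (n : ℝ) else 1) := by
        have h1 := Finset.sum_subtype (univ.filter (fun ff : (Fin k → Fin n) × (Fin k → Fin n) =>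
          ff.1 a = ff.2 a ∧ ff.1 b = ff.2 b)) (p := fun ff => ff.1 a = ff.2 a ∧ ff.1 b = ff.2 b)
          (F := inferInstance) (by intro x; simp) (fun i => (p ^ #E) ^ 2 / (n : ℝ) ^ 2 *
            ∏ j, (if i.2 j = i.1 j then (n : ℝ) else 1))
        refine le_trans (le_of_eq h1.symm) ?_
        apply Finset.sum_le_sum_of_subset_of_nonneg (filter_subset _ _)
        intro i _ _
        apply mul_nonneg (by positivity)
        apply Finset.prod_nonneg
        intro j _
        split_ifs <;> positivity
    _ = (p ^ #E) ^ 2 / n ^ 2 * ∑ f : Fin k → Fin n, ∑ f' : Fin k → Fin n,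
          ∏ j, (if f' j = f j then (n : ℝ) else 1) := by
        rw [← Finset.mul_sum, Fintype.sum_prod_type]
    _ ≤ (p ^ #E) ^ 2 / n ^ 2 * ∑ f : Fin k → Fin n, (2 * n : ℝ) ^ k := by
        apply mul_le_mul_of_nonneg_left _ (by positivity)
        apply Finset.sum_le_sum
        intro f _
        have := (Finset.prod_univ_sum (fun _ : Fin k => (univ : Finset (Fin n)))
          (fun j w => if w = f j then (n : ℝ) else 1))
        rw [Fintype.piFinset_univ] at this
        rw [← this]
        calc _ ≤ ∏ _j : Fin k, (2 * n : ℝ) := by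
              apply Finset.prod_le_prod
              · intro j _; apply Finset.sum_nonneg; intros; split_ifs <;> positivity
              · intro j _
                calc _ ≤ ∑ w : Fin n, ((if w = f j then (n : ℝ) else 0) + 1) := by
                      apply Finset.sum_le_sum; intro w _; split_ifs <;> linarith
                  _ = 2 * n := by
                      rw [Finset.sum_add_distrib]; simp; ring
          _ = _ := by simp
    _ = _ := by
        simp
        ring

end klr

section klr
variable {k n : ℕ}

lemma kl_delete {ε c : ℝ} {G G' : Finset (KSlot k n)} {e} (hc : 0 ≤ c) (hε : 0 ≤ ε)
    (h : KLR ε (fun _ => 2 * c) G e)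
    (hd : (#(G \ G') : ℝ) ≤ c * ε ^ 2 * n ^ 2) : KLR ε (fun _ => c) G' e := by
  intro x hx A B hA hB
  have h1 := h x hx A B hA hB
  simp only at h1 ⊢
  have h2 : klCnt G e A B ≤ klCnt G' e A B + #(G \ G') := by
    have : (A ×ˢ B).filter (fun uv => (e, uv) ∈ G) ⊆ (A ×ˢ B).filter (fun uv => (e, uv) ∈ G') ∪
        (A ×ˢ B).filter (fun uv => (e, uv) ∈ G \ G') := by
      intro uv huv
      simp only [mem_filter, mem_union, mem_sdiff] at huv ⊢
      tauto
    refine (card_le_card this).trans ((card_union_le _ _).trans ?_)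
    apply Nat.add_le_add_left
    apply card_le_card_of_injOn (fun uv => (e, uv))
    · intro uv huv
      exact (mem_filter.1 huv).2
    · intro u _ v _ h; exact (Prod.mk.inj h).2
  have h3 : (klCnt G e A B : ℝ) ≤ klCnt G' e A B + #(G \ G') := by exact_mod_cast h2
  have h4 : (ε * n) * (ε * n) ≤ #A * #B :=
    mul_le_mul ((mul_le_mul_of_nonneg_right hx (by positivity)).trans hA)
      ((mul_le_mul_of_nonneg_right hx (by positivity)).trans hB) (by positivity) (by positivity)
  have h5 := mul_le_mul_of_nonneg_left h4 hc
  nlinarith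

lemma kl_gain {ι : Type*} [Fintype ι] [DecidableEq ι] (deg : ι → ℕ) (B R : Finset ι) (N Q : ℝ)
    (hR : ∀ e, e ∉ R → (deg e : ℝ) * Fintype.card ι ≤ N / 2)
    (hN0 : 0 ≤ N)
    (hN : N ≤ ∑ e ∈ B, (deg e : ℝ)) (hQ : ∑ e, (deg e : ℝ) ^ 2 ≤ Q) :
    N ^ 2 ≤ 4 * Q * #(B ∩ R) := by
  have h1 : ∑ e ∈ B \ R, (deg e : ℝ) ≤ N / 2 := by
    rcases isEmpty_or_nonempty ι with hι | hι
    · have : B \ R = ∅ := by ext x; exact (hι.false x).elim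
      rw [this]; simp; positivity
    have hc : (0 : ℝ) < Fintype.card ι := by exact_mod_cast Fintype.card_pos
    calc _ ≤ ∑ e ∈ B \ R, N / 2 / Fintype.card ι := by
          apply Finset.sum_le_sum
          intro e he
          rw [le_div_iff₀ hc]
          exact hR e (mem_sdiff.1 he).2
      _ ≤ ∑ e : ι, N / 2 / Fintype.card ι := by
          apply Finset.sum_le_sum_of_subset_of_nonneg (subset_univ _)
          intros; positivity
      _ = N / 2 := by
          rw [Finset.sum_const, nsmul_eq_mul, card_univ]; field_simp
  have h2 : ∑ e ∈ B, (deg e : ℝ) = ∑ e ∈ B ∩ R, (deg e : ℝ) + ∑ e ∈ B \ R, (deg e : ℝ) := by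
    rw [Finset.sum_inter_add_sum_sdiff]
  have h3 : N / 2 ≤ ∑ e ∈ B ∩ R, (deg e : ℝ) := by linarith
  have h4 : (∑ e ∈ B ∩ R, (deg e : ℝ)) ^ 2 ≤ #(B ∩ R) * ∑ e ∈ B ∩ R, (deg e : ℝ) ^ 2 :=
    sq_sum_le_card_mul_sum_sq
  have h5 : ∑ e ∈ B ∩ R, (deg e : ℝ) ^ 2 ≤ Q := by
    refine le_trans ?_ hQ
    apply Finset.sum_le_sum_of_subset_of_nonneg (subset_univ _)
    intros; positivity
  have h6 : (N / 2) ^ 2 ≤ (∑ e ∈ B ∩ R, (deg e : ℝ)) ^ 2 := pow_le_pow_left₀ (by positivity) h3 2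
  have h7 : (#(B ∩ R) : ℝ) * ∑ e ∈ B ∩ R, (deg e : ℝ) ^ 2 ≤ #(B ∩ R) * Q :=
    mul_le_mul_of_nonneg_left h5 (by positivity)
  nlinarith

/-- degree of a pair -/
def klDeg (E : Finset (Fin k × Fin k)) (a b : Fin k) (D : Finset (KSlot k n))
    (e : Fin n × Fin n) : ℕ :=
  #(univ.filter (fun f : Fin k → Fin n => (f a, f b) = e ∧
    ∀ e' ∈ E.erase (a, b), (e', (f e'.1, f e'.2)) ∈ D))

lemma klDeg_mono {E : Finset (Fin k × Fin k)} {a b : Fin k} {D D' : Finset (KSlot k n)} (h : D ⊆ D')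
    (e : Fin n × Fin n) : klDeg E a b D e ≤ klDeg E a b D' e := by
  apply card_le_card
  intro f hf
  simp only [mem_filter] at hf ⊢
  exact ⟨hf.1, hf.2.1, fun e' he' => h (hf.2.2 e' he')⟩

lemma klDeg_sum (E : Finset (Fin k × Fin k)) (a b : Fin k) (D : Finset (KSlot k n))
    (B : Finset (Fin n × Fin n)) :
    ∑ e ∈ B, klDeg E a b D e = #(univ.filter (fun f : Fin k → Fin n => (f a, f b) ∈ B ∧
    ∀ e' ∈ E.erase (a, b), (e', (f e'.1, f e'.2)) ∈ D)) := by
  unfold klDeg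
  rw [← card_biUnion]
  · congr 1
    ext f
    simp
  · intro e _ e' _ hee
    show Disjoint _ _
    rw [Finset.disjoint_left]
    intro f hf hf'
    simp only [mem_filter] at hf hf'
    exact hee (hf.2.1.symm.trans hf'.2.1)

def klAB (a b : Fin k) (B : Finset (Fin n × Fin n)) : Finset (KSlot k n) :=
  ({(a, b)} : Finset (Fin k × Fin k)) ×ˢ B

lemma kl_cps_le_deg (E : Finset (Fin k × Fin k)) (a b : Fin k) (hab : (a, b) ∈ E)
    (D : Finset (KSlot k n)) (B : Finset (Fin n × Fin n)) (hD : ∀ s ∈ D, s.1 ≠ (a, b)) :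
    #(klCps E (D ∪ klAB a b B)) ≤ ∑ e ∈ B, klDeg E a b D e := by
  rw [klDeg_sum]
  apply card_le_card
  intro f hf
  simp only [klCps, mem_filter, mem_univ, true_and, klAB, mem_union, mem_product,
    mem_singleton] at hf ⊢
  refine ⟨?_, ?_⟩
  · rcases hf _ hab with h | h
    · exact absurd rfl (hD _ h)
    · exact h.2
  · intro e' he'
    rw [mem_erase] at he'
    rcases hf _ he'.2 with h | h
    · exact h
    · exact absurd h.1 he'.1

lemma kl_deg_le_cps (E : Finset (Fin k × Fin k)) (a b : Fin k)
    (D : Finset (KSlot k n)) (B : Finset (Fin n × Fin n)) (hB : klAB a b B ⊆ D) :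
    ∑ e ∈ B, klDeg E a b D e ≤ #(klCps E D) := by
  rw [klDeg_sum]
  apply card_le_card
  intro f hf
  simp only [klCps, mem_filter, mem_univ, true_and] at hf ⊢
  intro e he
  by_cases h : e = (a, b)
  · subst h
    apply hB
    simp [klAB, hf.1]
  · exact hf.2 e (mem_erase.2 ⟨h, he⟩)

lemma kl_deg_sq (E E0 : Finset (Fin k × Fin k)) (a b : Fin k) (hE0 : E0 ⊆ E.erase (a, b))
    (D G' : Finset (KSlot k n)) (hD : ∀ s ∈ D, s.1 ∉ E0) :
    ∑ e, (klDeg E a b (D ∪ G') e : ℝ) ^ 2 ≤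
      #(univ.filter (fun i : {ff : (Fin k → Fin n) × (Fin k → Fin n) // ff.1 a = ff.2 a ∧ ff.1 b = ff.2 b} =>
        klSl E0 i.1.1 ∪ klSl E0 i.1.2 ⊆ G')) := by
  classical
  set S : Fin n × Fin n → Finset (Fin k → Fin n) := fun e =>
    univ.filter (fun f : Fin k → Fin n => (f a, f b) = e ∧
    ∀ e' ∈ E.erase (a, b), (e', (f e'.1, f e'.2)) ∈ D ∪ G') with hS
  have h1 : ∑ e, (klDeg E a b (D ∪ G') e) ^ 2 = #(univ.biUnion (fun e => S e ×ˢ S e)) := by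
    rw [card_biUnion]
    · apply Finset.sum_congr rfl
      intro e _
      rw [card_product, sq]; rfl
    · intro e _ e' _ hee
      show Disjoint _ _
      rw [Finset.disjoint_left]
      intro f hf hf'
      simp only [mem_product, hS, mem_filter] at hf hf'
      exact hee (hf.1.2.1.symm.trans hf'.1.2.1)
  have h2 : #(univ.biUnion (fun e => S e ×ˢ S e)) ≤
      #(univ.filter (fun i : {ff : (Fin k → Fin n) × (Fin k → Fin n) // ff.1 a = ff.2 a ∧ ff.1 b = ff.2 b} =>
        klSl E0 i.1.1 ∪ klSl E0 i.1.2 ⊆ G')) := by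
    rw [← card_map (Function.Embedding.subtype (fun ff : (Fin k → Fin n) × (Fin k → Fin n) =>
      ff.1 a = ff.2 a ∧ ff.1 b = ff.2 b)) ]
    apply card_le_card
    rintro ⟨f, f'⟩ hff
    simp only [mem_biUnion, mem_univ, true_and, mem_product, hS, mem_filter] at hff
    obtain ⟨e, ⟨rfl, h3⟩, h4, h5⟩ := hff
    simp only [Prod.mk.injEq] at h4
    have key : ∀ f : Fin k → Fin n, (∀ e' ∈ E.erase (a, b), (e', (f e'.1, f e'.2)) ∈ D ∪ G') →
        klSl E0 f ⊆ G' := by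
      intro f hf s hs
      simp only [klSl, mem_image] at hs
      obtain ⟨e, he, rfl⟩ := hs
      rcases mem_union.1 (hf e (hE0 he)) with h | h
      · exact absurd he (hD _ h)
      · exact h
    simp only [mem_map, mem_filter, mem_univ, true_and, Function.Embedding.subtype_apply]
    exact ⟨⟨(f, f'), h4.1.symm, h4.2.symm⟩, union_subset (key f h3) (key f' h5), rfl⟩
  rw [← h1] at h2
  exact_mod_cast h2

end klr

section klr
variable {k n : ℕ}

lemma kl_sum_union {α : Type*} [DecidableEq α] (s t : Finset α) (f : α → ℝ) (hf : ∀ x, 0 ≤ f x) :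
    ∑ x ∈ s ∪ t, f x ≤ ∑ x ∈ s, f x + ∑ x ∈ t, f x := by
  rw [← Finset.sum_union_inter]
  have : 0 ≤ ∑ x ∈ s ∩ t, f x := Finset.sum_nonneg (fun x _ => hf x)
  linarith

lemma kl_sum_or {α : Type*} (V : Finset α) (f : α → ℝ) (hf : ∀ x, 0 ≤ f x)
    {P Q1 Q2 : α → Prop} {_ : DecidablePred P} {_ : DecidablePred Q1} {_ : DecidablePred Q2}
    {X1 X2 : ℝ} (h1 : ∑ x ∈ V.filter Q1, f x ≤ X1) (h2 : ∑ x ∈ V.filter Q2, f x ≤ X2)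
    (h : ∀ x ∈ V, P x → Q1 x ∨ Q2 x) : ∑ x ∈ V.filter P, f x ≤ X1 + X2 := by
  classical
  refine le_trans ?_ (add_le_add h1 h2)
  refine le_trans ?_ (kl_sum_union _ _ f hf)
  apply Finset.sum_le_sum_of_subset_of_nonneg
  · intro x hx
    simp only [mem_filter, mem_union] at hx ⊢
    rcases h x hx.1 hx.2 with h | h
    · exact Or.inl ⟨hx.1, h⟩
    · exact Or.inr ⟨hx.1, h⟩
  · intros; exact hf _

lemma kl_slots_card (E0 : Finset (Fin k × Fin k)) :
    (#(E0 ×ˢ (univ : Finset (Fin n × Fin n))) : ℝ) = #E0 * n ^ 2 := by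
  rw [card_product, card_univ, Fintype.card_prod, Fintype.card_fin]
  push_cast
  ring

open Classical in
lemma kl_stage (E E0 : Finset (Fin k × Fin k)) (a b : Fin k) (hab : (a, b) ∈ E)
    (hE0 : E0 ⊆ E.erase (a, b)) (hn : 0 < n) (p ε c γ₁ K b1 : ℝ) (hp : 0 < p) (hp1 : p ≤ 1)
    (hε : 0 < ε) (hc : 0 < c) (hγ : 0 < γ₁) (hK : 0 < K) (D : Finset (KSlot k n))
    (hD : ∀ s ∈ D, s.1 ∉ insert (a, b) E0)
    (hJ : ∀ J : Finset (Fin k), a ∈ J → b ∈ J →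
      (n : ℝ) ^ 2 ≤ n ^ #J * p ^ #(E0.filter (fun e => e.1 ∈ J ∧ e.2 ∈ J)))
    (LRp : Finset (Fin n × Fin n) → Prop)
    (hIH : ∀ B, LRp B → ∑ G ∈ (E0 ×ˢ (univ : Finset (Fin n × Fin n))).powerset.filter
      (fun G => (∀ e ∈ E0, KLR ε (fun _ => c * p) G e) ∧
        (#(klCps E ((D ∪ klAB a b B) ∪ G)) : ℝ) < γ₁ * n ^ k * p ^ #E0), p ^ #G ≤
        Real.exp (-b1 * (p * n ^ 2)))
    (z : ℕ) (hz1 : ((2 * #E0 * z : ℕ) : ℝ) ≤ c * p * ε ^ 2 * n ^ 2)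
    (hz2 : K⁻¹ ^ z ≤ Real.exp (-b1 * (p * n ^ 2))) (hm : 1 ≤ p * (n : ℝ) ^ 2) :
    ∃ (R : Finset (KSlot k n) → Finset (Fin n × Fin n))
      (Fail : Finset (Fin n × Fin n) → Finset (KSlot k n) → Prop),
      (∀ G, ∀ e ∈ R G, γ₁ * n ^ k * p ^ #E0 / 2 ≤ klDeg E a b (D ∪ G) e * (n : ℝ) ^ 2) ∧
      (∀ B G, LRp B → G ⊆ E0 ×ˢ univ → (∀ e ∈ E0, KLR ε (fun _ => 2 * (c * p)) G e) →
        ¬ Fail B G → γ₁ ^ 2 / (4 * K * 2 ^ k) * n ^ 2 ≤ #(B ∩ R G)) ∧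
      (∀ B, ∑ G ∈ (E0 ×ˢ (univ : Finset (Fin n × Fin n))).powerset.filter (Fail B), p ^ #G ≤
        Real.exp (-(b1 - #E0 - 1) * (p * n ^ 2))) := by
  have hn' : (0 : ℝ) < n := by exact_mod_cast hn
  set M : ℝ := 2 ^ k * (n ^ k) ^ 2 / n ^ 2 * (p ^ #E0) ^ 2 with hM
  have hM0 : 0 < M := by positivity
  set pr : Finset (KSlot k n) → ℕ := fun G' =>
    #(univ.filter (fun i : {ff : (Fin k → Fin n) × (Fin k → Fin n) // ff.1 a = ff.2 a ∧ ff.1 b = ff.2 b} =>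
        klSl E0 i.1.1 ∪ klSl E0 i.1.2 ⊆ G')) with hpr
  set ex : Finset (KSlot k n) → Prop := fun G => ∃ G' ⊆ G, #(G \ G') ≤ 2 * #E0 * z ∧
    (pr G' : ℝ) ≤ K * M with hex
  have hch : ∀ G, ∃ G' ⊆ G, ex G → (#(G \ G') ≤ 2 * #E0 * z ∧ (pr G' : ℝ) ≤ K * M) := by
    intro G
    by_cases h : ex G
    · obtain ⟨G', h1, h2⟩ := h
      exact ⟨G', h1, fun _ => h2⟩
    · exact ⟨∅, empty_subset _, fun h' => absurd h' h⟩
  choose ch hch1 hch2 using hch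
  set Pb : Finset (Fin n × Fin n) → Finset (KSlot k n) → Prop := fun B G =>
    (∀ e ∈ E0, KLR ε (fun _ => c * p) G e) ∧
        (#(klCps E ((D ∪ klAB a b B) ∪ G)) : ℝ) < γ₁ * n ^ k * p ^ #E0 with hPb
  refine ⟨fun G => univ.filter (fun e => γ₁ * n ^ k * p ^ #E0 / 2 ≤
      klDeg E a b (D ∪ ch G) e * (n : ℝ) ^ 2),
    fun B G => LRp B ∧ (¬ ex G ∨ ∃ G' ⊆ G, Pb B G'), ?_, ?_, ?_⟩
  · intro G e he
    rw [mem_filter] at he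
    refine he.2.trans ?_
    apply mul_le_mul_of_nonneg_right _ (by positivity)
    exact_mod_cast klDeg_mono (union_subset_union_right (hch1 G)) e
  · intro B G hB hG hKLR hF
    have hexG : ex G := by by_contra h; exact hF ⟨hB, Or.inl h⟩
    obtain ⟨h1, h2⟩ := hch2 G hexG
    have h3 : ¬ Pb B (ch G) := fun h => hF ⟨hB, Or.inr ⟨_, hch1 G, h⟩⟩
    have h4 : ∀ e ∈ E0, KLR ε (fun _ => c * p) (ch G) e := by
      intro e he
      apply kl_delete (by positivity) hε.le (hKLR e he)
      refine le_trans ?_ hz1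
      exact_mod_cast h1
    have h5 : γ₁ * n ^ k * p ^ #E0 ≤ #(klCps E ((D ∪ klAB a b B) ∪ ch G)) := by
      by_contra h
      exact h3 ⟨h4, not_le.1 h⟩
    rw [union_right_comm] at h5
    have h6 := kl_cps_le_deg E a b hab (D ∪ ch G) B (by
      intro s hs
      rcases mem_union.1 hs with h | h
      · exact fun h' => hD s h (by rw [h']; exact mem_insert_self _ _)
      · have := mem_product.1 (hG (hch1 G h))
        exact fun h' => (mem_erase.1 (hE0 this.1)).1 h')
    have h7 : γ₁ * n ^ k * p ^ #E0 ≤ ∑ e ∈ B, (klDeg E a b (D ∪ ch G) e : ℝ) :=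
      h5.trans (by exact_mod_cast h6)
    have h8 := kl_deg_sq E E0 a b hE0 D (ch G) (fun s hs h => hD s hs (mem_insert_of_mem h))
    have h9 : ∑ e, (klDeg E a b (D ∪ ch G) e : ℝ) ^ 2 ≤ K * M := by
      refine h8.trans ?_
      convert h2
    have h10 := kl_gain (klDeg E a b (D ∪ ch G)) B (univ.filter (fun e => γ₁ * n ^ k * p ^ #E0 / 2 ≤
      klDeg E a b (D ∪ ch G) e * (n : ℝ) ^ 2)) (γ₁ * n ^ k * p ^ #E0) (K * M) (by
        intro e he
        simp only [mem_filter, mem_univ, true_and, not_le] at he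
        simp only [Fintype.card_prod, Fintype.card_fin, Nat.cast_mul]
        rw [← sq]
        exact he.le) (by positivity) h7 h9
    rw [hM] at h10
    rw [div_mul_eq_mul_div, div_le_iff₀ (by positivity)]
    have h11 : (γ₁ * n ^ k * p ^ #E0) ^ 2 = γ₁ ^ 2 * ((n ^ k) ^ 2 * (p ^ #E0) ^ 2) := by ring
    rw [h11] at h10
    have h12 : ((n : ℝ) ^ k) ^ 2 * (p ^ #E0) ^ 2 > 0 := by positivity
    set X := #(B ∩ (univ.filter (fun e => γ₁ * n ^ k * p ^ #E0 / 2 ≤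
      klDeg E a b (D ∪ ch G) e * (n : ℝ) ^ 2))) with hX
    have h13 : 4 * (K * (2 ^ k * ((n:ℝ) ^ k) ^ 2 / n ^ 2 * (p ^ #E0) ^ 2)) * X =
      (X * (4 * K * 2 ^ k) / n ^ 2) * (((n : ℝ) ^ k) ^ 2 * (p ^ #E0) ^ 2) := by ring
    rw [h13] at h10
    have h14 := le_of_mul_le_mul_right h10 h12
    rwa [le_div_iff₀ (by positivity)] at h14
  · intro B
    by_cases hB : LRp B
    · have hVc : (#(E0 ×ˢ (univ : Finset (Fin n × Fin n))) : ℝ) = #E0 * n ^ 2 :=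
        kl_slots_card E0
      have hs1 := kl_deletion (E0 ×ˢ (univ : Finset (Fin n × Fin n))) p hp.le
        (fun i : {ff : (Fin k → Fin n) × (Fin k → Fin n) // ff.1 a = ff.2 a ∧ ff.1 b = ff.2 b} =>
        klSl E0 i.1.1 ∪ klSl E0 i.1.2) (2 * #E0) (by
          intro i
          refine (card_union_le _ _).trans ?_
          rw [klSl_card, klSl_card]; omega) M K hM0 hK (kl_second E0 a b p hp hp1 hn hJ) z
      have hs2 := kl_upclose (E0 ×ˢ (univ : Finset (Fin n × Fin n))) p hp.le (Pb B)
      rw [hVc] at hs1 hs2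
      replace hs2 := hs2.trans (mul_le_mul_of_nonneg_left (le_trans (le_of_eq (Finset.sum_congr
        (by ext G; simp only [mem_filter, hPb]) (fun _ _ => rfl))) (hIH B hB)) (Real.exp_nonneg _))
      refine (kl_sum_or _ (fun G : Finset (KSlot k n) => p ^ #G) (fun _ => by positivity) hs1 hs2 ?_).trans ?_
      · intro G _ hG
        obtain ⟨-, h2 | h2⟩ := hG
        · left
          intro G' hG' h3
          by_contra h4
          exact h2 ⟨G', hG', h3, by rw [hpr]; convert not_lt.1 h4⟩
        · right; exact h2
      have h1 : K⁻¹ ^ z * Real.exp (p * (#E0 * n ^ 2)) ≤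
          Real.exp (-b1 * (p * n ^ 2)) * Real.exp (p * (#E0 * n ^ 2)) :=
        mul_le_mul_of_nonneg_right hz2 (Real.exp_nonneg _)
      refine (add_le_add h1 le_rfl).trans ?_
      rw [← Real.exp_add, ← Real.exp_add]
      have h3 : -(b1 - #E0 - 1) * (p * (n:ℝ) ^ 2) =
        (-b1 * (p * n ^ 2) + p * (#E0 * n ^ 2)) + p * n ^ 2 := by ring
      rw [h3, Real.exp_add _ (p * (n:ℝ) ^ 2), add_comm (p * (#E0 * (n:ℝ) ^ 2))]
      have h4 := Real.add_one_le_exp (p * (n:ℝ) ^ 2)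
      nlinarith [Real.exp_pos (-b1 * (p * (n:ℝ) ^ 2) + p * (#E0 * n ^ 2))]
    · refine le_trans (le_of_eq ?_) (Real.exp_nonneg _)
      apply Finset.sum_eq_zero
      intro G hG
      simp only [mem_filter] at hG
      exact absurd hG.2.1 hB

end klr

section klr
variable {k n : ℕ}

lemma kl_cnt_eq (G : Finset (KSlot k n)) (e : Fin k × Fin k) (A B : Finset (Fin n)) :
    klCnt G e A B = #(G ∩ ({e} ×ˢ (A ×ˢ B))) := by
  unfold klCnt
  apply card_bij (fun uv _ => (e, uv))
  · intro uv huv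
    simp only [mem_filter, mem_product] at huv
    simp [huv]
  · intro u _ v _ h; exact (Prod.mk.inj h).2
  · rintro ⟨e', uv⟩ h
    simp only [mem_inter, mem_product, mem_singleton] at h
    obtain ⟨h1, rfl, h2⟩ := h
    exact ⟨uv, by simp [h1, h2], rfl⟩

lemma kl_klr_congr {ε : ℝ} {δ : ℝ → ℝ} {G G' : Finset (KSlot k n)} {e} (h : KLR ε δ G e)
    (hG : ∀ uv, (e, uv) ∈ G → (e, uv) ∈ G') : KLR ε δ G' e := by
  intro x hx A B hA hB
  refine (h x hx A B hA hB).trans ?_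
  norm_cast
  apply card_le_card
  intro uv huv
  simp only [mem_filter] at huv ⊢
  exact ⟨huv.1, hG _ huv.2⟩

open Classical in
lemma kl_goodcol (E0 : Finset (Fin k × Fin k)) (T : ℕ) (hT : 0 < T) (p lam ε : ℝ) (hp : 0 < p)
    (hlam : 0 < lam) (hε : 0 < ε) (G : Finset (KSlot k n))
    (hG : ∀ e ∈ E0, KLR ε (fun _ => lam * p) G e)
    (hbig : 2 * (T * #E0 * 4 ^ n : ℝ) ≤ Real.exp (lam * p * ε ^ 2 * n ^ 2 / (4 * T))) :
    (T : ℝ) ^ #G ≤ 2 * #((klCols T G).filter (fun h => ∀ i, ∀ e ∈ E0,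
      KLR ε (fun _ => lam / 4 * (p / T)) (klParts h i) e)) := by
  have hT' : (0 : ℝ) < T := by exact_mod_cast hT
  set P : (KSlot k n → Option (Fin T)) → Prop := fun h => ∀ i, ∀ e ∈ E0,
      KLR ε (fun _ => lam / 4 * (p / T)) (klParts h i) e with hP
  have h1 : (#((klCols T G).filter P) : ℝ) + #((klCols T G).filter (fun h => ¬ P h)) = T ^ #G := by
    rw [← kl_color_card]
    exact_mod_cast card_filter_add_card_filter_not P
  set Fs : (Fin k × Fin k) × (Finset (Fin n) × Finset (Fin n)) → Finset (KSlot k n) :=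
    fun x => G ∩ ({x.1} ×ˢ (x.2.1 ×ˢ x.2.2)) with hFs
  set I : Finset (Fin T × ((Fin k × Fin k) × (Finset (Fin n) × Finset (Fin n)))) :=
    (univ ×ˢ (E0 ×ˢ univ)).filter (fun x => ε * n ≤ #x.2.2.1 ∧ ε * n ≤ #x.2.2.2) with hI
  have hsub : (klCols T G).filter (fun h => ¬ P h) ⊆ I.biUnion (fun x =>
      (klCols T G).filter (fun h => (#(Fs x.2 ∩ klParts h x.1) : ℝ) < #(Fs x.2) / (4 * T))) := by
    intro h hh
    simp only [mem_filter, hP, not_forall] at hh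
    obtain ⟨hh, i, e, he, hK⟩ := hh
    unfold KLR at hK
    push Not at hK
    obtain ⟨x, hx, A, B, hA, hB, hlt⟩ := hK
    simp only [mem_biUnion, mem_filter, hI]
    have hA' : ε * n ≤ #A := (mul_le_mul_of_nonneg_right hx (by positivity)).trans hA
    have hB' : ε * n ≤ #B := (mul_le_mul_of_nonneg_right hx (by positivity)).trans hB
    refine ⟨(i, (e, (A, B))), ⟨by simp [he], hA', hB'⟩, hh, ?_⟩
    have h2 := hG e he x hx A B hA hB
    rw [kl_cnt_eq] at h2 hlt
    have h3 : Fs (e, (A, B)) ∩ klParts h i ⊆ klParts h i ∩ ({e} ×ˢ (A ×ˢ B)) := by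
      intro s hs
      simp only [hFs, mem_inter] at hs ⊢
      exact ⟨hs.2, hs.1.2⟩
    have h3' : (#(Fs (e, (A, B)) ∩ klParts h i) : ℝ) ≤ #(klParts h i ∩ ({e} ×ˢ (A ×ˢ B))) := by
      exact_mod_cast card_le_card h3
    refine lt_of_le_of_lt h3' (lt_of_lt_of_le hlt ?_)
    simp only at h2 ⊢
    rw [le_div_iff₀ (by positivity)]
    calc _ = lam * p * (#A * #B) := by field_simp
      _ ≤ _ := h2
  have h2 : (#((klCols T G).filter (fun h => ¬ P h)) : ℝ) ≤
      #I * ((T : ℝ) ^ #G * Real.exp (-(lam * p * ε ^ 2 * n ^ 2 / (4 * T)))) := by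
    calc _ ≤ ((#(I.biUnion (fun x => (klCols T G).filter (fun h =>
          (#(Fs x.2 ∩ klParts h x.1) : ℝ) < #(Fs x.2) / (4 * T)))) : ℕ) : ℝ) := by
            exact_mod_cast card_le_card hsub
      _ ≤ ∑ x ∈ I, (#((klCols T G).filter (fun h =>
          (#(Fs x.2 ∩ klParts h x.1) : ℝ) < #(Fs x.2) / (4 * T))) : ℝ) := by
            exact_mod_cast card_biUnion_le
      _ ≤ ∑ x ∈ I, ((T : ℝ) ^ #G * Real.exp (-(lam * p * ε ^ 2 * n ^ 2 / (4 * T)))) := by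
            apply Finset.sum_le_sum
            rintro ⟨i, e, A, B⟩ hx
            simp only [hI, mem_filter, mem_product, mem_univ, true_and, and_true] at hx
            refine (kl_color_tail T hT G _ inter_subset_left i).trans ?_
            apply mul_le_mul_of_nonneg_left _ (by positivity)
            apply Real.exp_le_exp.2
            apply neg_le_neg
            apply div_le_div_of_nonneg_right _ (by positivity)
            have h3 := hG e hx.1 ε le_rfl A B hx.2.1 hx.2.2
            rw [kl_cnt_eq] at h3
            refine le_trans ?_ h3
            have h4 : (ε * n) * (ε * n) ≤ #A * #B :=
              mul_le_mul hx.2.1 hx.2.2 (by positivity) (by positivity)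
            have h5 := mul_le_mul_of_nonneg_left h4 (mul_pos hlam hp).le
            simp only
            linarith
      _ = _ := by rw [Finset.sum_const, nsmul_eq_mul]
  have h3 : (#I : ℝ) ≤ T * #E0 * 4 ^ n := by
    have : #I ≤ T * (#E0 * (2 ^ n * 2 ^ n)) := by
      refine (card_filter_le _ _).trans ?_
      rw [card_product, card_product]
      simp
    have h4 : (4 : ℝ) ^ n = 2 ^ n * 2 ^ n := by rw [← mul_pow]; norm_num
    rw [h4, mul_assoc]
    exact_mod_cast this
  have h5 : (#I : ℝ) * Real.exp (-(lam * p * ε ^ 2 * n ^ 2 / (4 * T))) ≤ 1 / 2 := by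
    rw [Real.exp_neg, ← div_eq_mul_inv, div_le_iff₀ (Real.exp_pos _)]
    linarith
  have h6 : (#I : ℝ) * ((T : ℝ) ^ #G * Real.exp (-(lam * p * ε ^ 2 * n ^ 2 / (4 * T)))) ≤
      T ^ #G * (1 / 2) := by
    calc _ = (T : ℝ) ^ #G * (#I * Real.exp (-(lam * p * ε ^ 2 * n ^ 2 / (4 * T)))) := by ring
      _ ≤ _ := mul_le_mul_of_nonneg_left h5 (by positivity)
  linarith

lemma kl_sum_mono {α : Type*} (V : Finset α) (f : α → ℝ) (hf : ∀ x, 0 ≤ f x)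
    {P Q : α → Prop} {_ : DecidablePred P} {_ : DecidablePred Q}
    {X : ℝ} (h1 : ∑ x ∈ V.filter Q, f x ≤ X)
    (h : ∀ x ∈ V, P x → Q x) : ∑ x ∈ V.filter P, f x ≤ X := by
  refine le_trans ?_ h1
  apply Finset.sum_le_sum_of_subset_of_nonneg
  · intro x hx
    simp only [mem_filter] at hx ⊢
    exact ⟨hx.1, h x hx.1 hx.2⟩
  · intros; exact hf _

open Classical in
lemma kl_partI (a b : Fin k) (hn : 0 < n) (p lam ε b' : ℝ) (hp : 0 < p)
    (hlam : 0 < lam) (hε : 0 < ε) (hb' : 0 ≤ b') (BT : Finset (Fin n × Fin n))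
    (hBT : ¬ KLR ε (fun x => Real.exp (-(2 * b' / (lam * x ^ 2)))) (klAB a b BT) (a, b)) :
    ∑ G ∈ (({(a, b)} : Finset (Fin k × Fin k)) ×ˢ (univ : Finset (Fin n × Fin n))).powerset.filter
      (fun G => KLR ε (fun _ => lam * p) G (a, b) ∧
        (#(G \ klAB a b BT) : ℝ) ≤ lam / 2 * p * ε ^ 2 * n ^ 2), p ^ #G ≤
      Real.exp ((2 - b') * (p * n ^ 2)) := by
  have hn' : (0 : ℝ) < n := by exact_mod_cast hn
  unfold KLR at hBT
  push Not at hBT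
  obtain ⟨x, hx, A, B, hA, hB, hlt⟩ := hBT
  have hx0 : 0 < x := lt_of_lt_of_le hε hx
  set L : ℝ := Real.exp (2 * b' / (lam * x ^ 2)) with hL
  have hL1 : 1 ≤ L := Real.one_le_exp (by positivity)
  set F := klAB a b BT ∩ ({(a, b)} ×ˢ (A ×ˢ B)) with hF
  have ht := kl_tail (({(a, b)} : Finset (Fin k × Fin k)) ×ˢ (univ : Finset (Fin n × Fin n)))
    F p L (lam / 2 * p * (#A * #B)) hp.le hL1
  have hAB : (x * n) * (x * n) ≤ #A * #B := mul_le_mul hA hB (by positivity) (by positivity)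
  have hAB' : (ε * n) * (ε * n) ≤ #A * #B := by
    refine le_trans ?_ hAB
    have : ε * n ≤ x * n := mul_le_mul_of_nonneg_right hx hn'.le
    exact mul_le_mul this this (by positivity) (by positivity)
  have hABn : (#A * #B : ℝ) ≤ n * n := by
    have h1 := card_le_univ A
    have h2 := card_le_univ B
    simp only [Fintype.card_fin] at h1 h2
    exact_mod_cast Nat.mul_le_mul h1 h2
  refine kl_sum_mono _ (fun G : Finset (KSlot k n) => p ^ #G) (fun _ => by positivity) (ht.trans ?_) ?_
  · apply Real.exp_le_exp.2
    rw [kl_slots_card, card_singleton, hL, Real.log_exp]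
    have h1 : L * #F ≤ #A * #B := by
      rw [kl_cnt_eq] at hlt
      simp only [Real.exp_neg] at hlt
      rw [← hL, ← hF, inv_mul_eq_div, lt_div_iff₀ (by positivity)] at hlt
      linarith
    have h2 : p * L * #F ≤ p * n ^ 2 := by
      rw [mul_assoc]
      apply mul_le_mul_of_nonneg_left _ hp.le
      linarith
    have h3 : b' * (p * n ^ 2) ≤ lam / 2 * p * (#A * #B) * (2 * b' / (lam * x ^ 2)) := by
      have : lam / 2 * p * (#A * #B) * (2 * b' / (lam * x ^ 2)) =
        b' * p * ((#A * #B) / x ^ 2) := by field_simp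
      rw [this, ← mul_assoc]
      apply mul_le_mul_of_nonneg_left _ (by positivity)
      rw [le_div_iff₀ (by positivity)]
      linarith
    push_cast
    rw [← hL]
    linarith
  · rintro G - ⟨hG1, hG2⟩
    have h1 := hG1 x hx A B hA hB
    rw [kl_cnt_eq] at h1
    have h2 : #(G ∩ ({(a, b)} ×ˢ (A ×ˢ B))) ≤ #(G ∩ F) + #(G \ klAB a b BT) := by
      refine le_trans (card_le_card ?_) (card_union_le _ _)
      intro s hs
      simp only [hF, mem_inter, mem_union, mem_sdiff] at hs ⊢
      tauto
    have h3 : (#(G ∩ ({(a, b)} ×ˢ (A ×ˢ B))) : ℝ) ≤ #(G ∩ F) + #(G \ klAB a b BT) := by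
      exact_mod_cast h2
    simp only at h1 ⊢
    have h5 := mul_le_mul_of_nonneg_left hAB' (mul_pos hlam hp).le
    linarith

end klr

section klr
variable {k n : ℕ}

open Classical in
lemma kl_split {α : Type*} [DecidableEq α] (V0 V1 : Finset α) (hd : Disjoint V0 V1) (p : ℝ)
    (Bad : Finset α → Prop) :
    ∑ G ∈ (V0 ∪ V1).powerset.filter Bad, p ^ #G =
      ∑ Y ∈ V1.powerset, p ^ #Y * ∑ X ∈ V0.powerset.filter (fun X => Bad (X ∪ Y)), p ^ #X := by
  simp only [Finset.mul_sum, Finset.sum_filter]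
  rw [← Finset.sum_product']
  symm
  apply Finset.sum_nbij' (fun x : Finset α × Finset α => x.2 ∪ x.1) (fun G => (G ∩ V1, G ∩ V0))
  · rintro ⟨Y, X⟩ h
    simp only [mem_product, mem_powerset] at h ⊢
    exact union_subset_union h.2 h.1
  · intro G hG
    simp only [mem_product, mem_powerset]
    exact ⟨inter_subset_right, inter_subset_right⟩
  · rintro ⟨Y, X⟩ h
    simp only [mem_product, mem_powerset] at h
    have h1 : X ∩ V1 = ∅ := by
      rw [← disjoint_iff_inter_eq_empty]; exact disjoint_of_subset_left h.2 hd
    have h2 : Y ∩ V0 = ∅ := by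
      rw [← disjoint_iff_inter_eq_empty]; exact (disjoint_of_subset_right h.1 hd).symm
    simp only [union_inter_distrib_right, h1, h2, inter_eq_left.2 h.1, inter_eq_left.2 h.2,
      empty_union, union_empty]
  · intro G hG
    simp only [mem_powerset] at hG
    rw [← inter_union_distrib_left, inter_eq_left.2 hG]
  · rintro ⟨Y, X⟩ h
    simp only [mem_product, mem_powerset] at h
    have : Disjoint X Y := disjoint_of_subset_left h.2 (disjoint_of_subset_right h.1 hd)
    simp only
    split_ifs
    · rw [card_union_of_disjoint this, pow_add, mul_comm]
    · simp

set_option maxHeartbeats 1000000 in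
open Classical in
lemma kl_core (E E0 : Finset (Fin k × Fin k)) (a b : Fin k)
    (hE0 : E0 ⊆ E.erase (a, b)) (hn : 0 < n) (T : ℕ) (hT : 0 < T)
    (p lam ε γ g0 bb N : ℝ) (hp : 0 < p) (hlam : 0 < lam) (hε : 0 < ε) (hg0 : 0 < g0) (hbb : 0 < bb)
    (hN : 0 < N) (D : Finset (KSlot k n))
    (LRp : Finset (Fin n × Fin n) → Prop)
    (hLRp : ∀ B, LRp B ↔ KLR ε (fun x => Real.exp (-(2 * (bb + #E0 + 5) / (lam * x ^ 2))))
      (klAB a b B) (a, b))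
    (R : Finset (KSlot k n) → Finset (Fin n × Fin n))
    (Fail : Finset (Fin n × Fin n) → Finset (KSlot k n) → Prop)
    (hR : ∀ G, ∀ e ∈ R G, N ≤ klDeg E a b (D ∪ G) e * (n : ℝ) ^ 2)
    (hgain : ∀ B G, LRp B → G ⊆ E0 ×ˢ univ → (∀ e ∈ E0, KLR ε (fun _ => lam / 4 * (p / T)) G e) →
        ¬ Fail B G → g0 * n ^ 2 ≤ #(B ∩ R G))
    (hfail : ∀ B, ∑ G ∈ (E0 ×ˢ (univ : Finset (Fin n × Fin n))).powerset.filter (Fail B),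
        (p / T) ^ #G ≤ Real.exp (-(2 * (bb + #E0 + 5)) * (p / T * n ^ 2)))
    (hTg : 2 / g0 ≤ T) (hTm : (T : ℝ) ≤ p * n ^ 2)
    (hbig : 2 * (T * #E0 * 4 ^ n : ℝ) ≤ Real.exp (lam * p * ε ^ 2 * n ^ 2 / (4 * T)))
    (hγ : γ * n ^ k * p ^ (#E0 + 1) ≤ lam / 2 * p * ε ^ 2 * N) :
    ∑ G ∈ ((insert (a, b) E0) ×ˢ (univ : Finset (Fin n × Fin n))).powerset.filter
      (fun G => (∀ e ∈ insert (a, b) E0, KLR ε (fun _ => lam * p) G e) ∧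
        (#(klCps E (D ∪ G)) : ℝ) < γ * n ^ k * p ^ (#E0 + 1)), p ^ #G ≤
        Real.exp (-bb * (p * n ^ 2)) := by
  have hn' : (0 : ℝ) < n := by exact_mod_cast hn
  have hT' : (0 : ℝ) < T := by exact_mod_cast hT
  have hT1 : (1 : ℝ) ≤ T := by exact_mod_cast hT
  set m : ℝ := p * n ^ 2 with hm
  have hm1 : p / T * n ^ 2 = m / T := by rw [hm]; ring
  have hm0 : 0 < m := by positivity
  set d : ℝ := (#E0 : ℝ) with hd
  have hd0 : 0 ≤ d := by positivity
  set V0 : Finset (KSlot k n) := E0 ×ˢ (univ : Finset (Fin n × Fin n)) with hV0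
  set V1 : Finset (KSlot k n) := ({(a, b)} : Finset (Fin k × Fin k)) ×ˢ
    (univ : Finset (Fin n × Fin n)) with hV1
  have hV0' : ∀ s : KSlot k n, s ∈ V0 ↔ s.1 ∈ E0 := by intro s; simp [hV0]
  have hV1' : ∀ s : KSlot k n, s ∈ V1 ↔ s.1 = (a, b) := by intro s; rw [hV1, mem_product, mem_singleton]; simp
  have habE0 : (a, b) ∉ E0 := fun h => (mem_erase.1 (hE0 h)).1 rfl
  have hV : (insert (a, b) E0) ×ˢ (univ : Finset (Fin n × Fin n)) = V0 ∪ V1 := by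
    ext s; rw [mem_union, hV0', hV1']; simp [or_comm]
  have hdisj : Disjoint V0 V1 := by
    rw [Finset.disjoint_left]
    intro s h1 h2
    rw [hV0'] at h1; rw [hV1'] at h2
    exact habE0 (h2 ▸ h1)
  have hV0c : (#V0 : ℝ) = d * n ^ 2 := kl_slots_card E0
  have hV1c : (#V1 : ℝ) = n ^ 2 := by
    rw [hV1, kl_slots_card]; simp
  obtain ⟨Bad, hBad⟩ : ∃ Bad : Finset (KSlot k n) → Prop, ∀ G, Bad G ↔
    (∀ e ∈ insert (a, b) E0, KLR ε (fun _ => lam * p) G e) ∧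
        (#(klCps E (D ∪ G)) : ℝ) < γ * n ^ k * p ^ (#E0 + 1) := ⟨_, fun _ => Iff.rfl⟩
  obtain ⟨Pg, hPg⟩ : ∃ Pg : (Fin T → Finset (KSlot k n)) → Prop, ∀ g, Pg g ↔ ∀ i, ∀ e ∈ E0,
      KLR ε (fun _ => lam / 4 * (p / T)) (g i) e := ⟨_, fun _ => Iff.rfl⟩
  set BT : (Fin T → Finset (KSlot k n)) → Finset (Fin n × Fin n) := fun g =>
    klFin (fun s x => s \ R x) T univ g with hBT
  set fl : (Fin T → Finset (KSlot k n)) → ℕ := fun g =>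
    klFl Fail (fun s x => s \ R x) T univ g with hfl
  set M : ℝ := Real.exp ((2 * (bb + d + 5)) * (m / T)) with hM
  have hM1 : 1 ≤ M := Real.one_le_exp (by positivity)
  set w : Finset (KSlot k n) → ℝ := fun G => if G ⊆ V0 then (p / T) ^ #G else 0 with hw
  have hw0 : ∀ G, 0 ≤ w G := by
    intro G; simp only [hw]; split_ifs <;> positivity
  -- the inner sums
  have hinner : ∀ g : Fin T → Finset (KSlot k n), Pg g → univ.biUnion g ⊆ V0 →
      ∑ Y ∈ V1.powerset.filter (fun Y => Bad (univ.biUnion g ∪ Y)), p ^ #Y ≤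
        Real.exp ((1 - (bb + d + 5)) * m) * M ^ fl g + Real.exp ((2 - (bb + d + 5)) * m) := by
    intro g hg hgV
    have hgi : ∀ i, g i ⊆ univ.biUnion g := fun i => subset_biUnion_of_mem g (mem_univ i)
    by_cases hL : LRp (BT g)
    · have h1 := kl_machine_card R Fail LRp (by
          intro s t hst hs
          rw [hLRp] at hs ⊢
          apply kl_klr_congr hs
          intro uv huv
          simp only [klAB, mem_product] at huv ⊢
          exact ⟨huv.1, hst huv.2⟩)
        (fun G => G ⊆ V0 ∧ ∀ e ∈ E0, KLR ε (fun _ => lam / 4 * (p / T)) G e)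
        (g0 * n ^ 2) (fun s x h1 h2 h3 => hgain s x h1 h2.1 h2.2 h3) T univ g
        (fun i => ⟨(hgi i).trans hgV, (hPg g).1 hg i⟩) hL
      have h2 : (T : ℝ) - fl g ≤ T / 2 := by
        have h3 : ((#(univ : Finset (Fin n × Fin n)) : ℕ) : ℝ) = n ^ 2 := by
          simp [sq]
        rw [h3] at h1
        have h4 : g0 * ((T : ℝ) - fl g) ≤ 1 := by
          have : g0 * ((T : ℝ) - fl g) * n ^ 2 ≤ 1 * n ^ 2 := by
            simp only [hfl]; linarith
          exact le_of_mul_le_mul_right this (by positivity)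
        rw [div_le_iff₀ hg0] at hTg
        have h5 : g0 * ((T : ℝ) - fl g) ≤ g0 * (T / 2) := by linarith
        exact le_of_mul_le_mul_left h5 hg0
      have h3 : Real.exp ((bb + d + 5) * m) ≤ M ^ fl g := by
        rw [hM, ← Real.exp_nat_mul]
        apply Real.exp_le_exp.2
        have h4 : (T : ℝ) / 2 ≤ fl g := by linarith
        calc (bb + d + 5) * m = T / 2 * (2 * (bb + d + 5) * (m / T)) := by field_simp
          _ ≤ _ := mul_le_mul_of_nonneg_right h4 (by positivity)
      have h4 : ∑ Y ∈ V1.powerset.filter (fun Y => Bad (univ.biUnion g ∪ Y)), p ^ #Y ≤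
          Real.exp m := by
        refine (Finset.sum_le_sum_of_subset_of_nonneg (filter_subset _ _)
          (fun _ _ _ => by positivity)).trans ?_
        refine (kl_sum_pow V1 p hp.le).trans (le_of_eq ?_)
        rw [hV1c]
      refine h4.trans ?_
      have h5 : Real.exp m = Real.exp ((1 - (bb + d + 5)) * m) * Real.exp ((bb + d + 5) * m) := by
        rw [← Real.exp_add]; congr 1; ring
      rw [h5]
      have h6 := mul_le_mul_of_nonneg_left h3 (Real.exp_nonneg ((1 - (bb + d + 5)) * m))
      linarith [Real.exp_pos ((2 - (bb + d + 5)) * m)]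
    · have h1 := kl_partI a b hn p lam ε (bb + d + 5) hp hlam hε (by positivity) (BT g)
        (fun h => hL ((hLRp _).2 h))
      have h2 : ∑ Y ∈ V1.powerset.filter (fun Y => Bad (univ.biUnion g ∪ Y)), p ^ #Y ≤
          Real.exp ((2 - (bb + d + 5)) * m) := by
        refine kl_sum_mono _ (fun G : Finset (KSlot k n) => p ^ #G) (fun _ => by positivity) h1 ?_
        intro Y hY hB
        rw [mem_powerset] at hY
        rw [hBad] at hB
        refine ⟨kl_klr_congr (hB.1 _ (mem_insert_self _ _)) ?_, ?_⟩
        · intro uv huv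
          rcases mem_union.1 huv with h | h
          · exact absurd ((hV0' _).1 (hgV h)) habE0
          · exact h
        · set S : Finset (Fin n × Fin n) := univ.filter (fun e => ((a, b), e) ∈ Y ∧ e ∉ BT g) with hS
          have hSc : #(Y \ klAB a b (BT g)) ≤ #S := by
            apply card_le_card_of_injOn (fun s => s.2)
            · rintro ⟨e, uv⟩ hs
              simp only [klAB, coe_sdiff, Set.mem_sdiff, mem_coe, mem_product, mem_singleton] at hs
              have he : e = (a, b) := (hV1' _).1 (hY hs.1)
              subst he
              simp only [hS, coe_filter, mem_univ, true_and, Set.mem_ofPred_eq]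
              exact ⟨hs.1, fun h => hs.2 ⟨rfl, h⟩⟩
            · rintro ⟨e, uv⟩ hs ⟨e', uv'⟩ hs' h
              have he : e = (a, b) := (hV1' _).1 (hY (mem_sdiff.1 hs).1)
              have he' : e' = (a, b) := (hV1' _).1 (hY (mem_sdiff.1 hs').1)
              simp only at h
              rw [he, he', h]
          have h3 := kl_deg_le_cps E a b (D ∪ (univ.biUnion g ∪ Y)) S (by
            rintro ⟨e, uv⟩ hs
            simp only [klAB, mem_product, mem_singleton, hS, mem_filter] at hs
            obtain ⟨rfl, -, h, -⟩ := hs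
            exact mem_union_right _ (mem_union_right _ h))
          have h4 : ∀ e ∈ S, N ≤ klDeg E a b (D ∪ (univ.biUnion g ∪ Y)) e * (n : ℝ) ^ 2 := by
            intro e he
            simp only [hS, mem_filter, mem_univ, true_and] at he
            obtain ⟨i, hi⟩ := kl_fin_cover R T univ g e (mem_univ _) he.2
            refine (hR _ e hi).trans ?_
            apply mul_le_mul_of_nonneg_right _ (by positivity)
            exact_mod_cast klDeg_mono (union_subset_union_right ((hgi i).trans subset_union_left)) e
          have h5 : (#S : ℝ) * N ≤ #(klCps E (D ∪ (univ.biUnion g ∪ Y))) * (n : ℝ) ^ 2 := by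
            calc (#S : ℝ) * N = ∑ e ∈ S, N := by rw [Finset.sum_const, nsmul_eq_mul]
              _ ≤ ∑ e ∈ S, klDeg E a b (D ∪ (univ.biUnion g ∪ Y)) e * (n : ℝ) ^ 2 :=
                Finset.sum_le_sum h4
              _ = ((∑ e ∈ S, klDeg E a b (D ∪ (univ.biUnion g ∪ Y)) e : ℕ) : ℝ) * (n : ℝ) ^ 2 := by
                rw [← Finset.sum_mul]; push_cast; rfl
              _ ≤ _ := by
                apply mul_le_mul_of_nonneg_right _ (by positivity)
                exact_mod_cast h3
          have h6 := hB.2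
          have h7 : (#S : ℝ) * N ≤ lam / 2 * p * ε ^ 2 * n ^ 2 * N := by
            refine h5.trans ?_
            refine (mul_le_mul_of_nonneg_right (h6.le.trans hγ) (by positivity)).trans (le_of_eq ?_)
            ring
          have h8 := le_of_mul_le_mul_right h7 hN
          refine le_trans ?_ h8
          exact_mod_cast hSc
      refine h2.trans ?_
      have := mul_nonneg (Real.exp_nonneg ((1 - (bb + d + 5)) * m)) (pow_nonneg (by linarith : 0 ≤ M) (fl g))
      linarith
  rw [hV]
  refine kl_sum_mono _ (fun G : Finset (KSlot k n) => p ^ #G) (fun _ => by positivity)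
    ((le_of_eq (kl_split V0 V1 hdisj p Bad)).trans ?_) (fun G _ h => (hBad G).2 h)
  have hcol : ∀ Y ∈ V1.powerset, ∑ X ∈ V0.powerset.filter (fun X => Bad (X ∪ Y)), p ^ #X ≤
      2 * ∑ g ∈ univ.filter (fun g : Fin T → Finset (KSlot k n) => Pg g ∧
        univ.biUnion g ∈ V0.powerset.filter (fun X => Bad (X ∪ Y))), ∏ i, (p / T) ^ #(g i) := by
    intro Y hY
    have h1 := kl_color T (p / T) (by positivity) (V0.powerset.filter (fun X => Bad (X ∪ Y))) Pg (by
      intro X hX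
      rw [mem_filter, hBad] at hX
      have hgc : ∀ e ∈ E0, KLR ε (fun _ => lam * p) X e := by
        intro e he
        apply kl_klr_congr (hX.2.1 e (mem_insert_of_mem he))
        intro uv huv
        rcases mem_union.1 huv with h | h
        · exact h
        · exact absurd ((hV1' _).1 (mem_powerset.1 hY h)) (fun h' => habE0 (h' ▸ he))
      refine (kl_goodcol E0 T hT p lam ε hp hlam hε X hgc hbig).trans (le_of_eq ?_)
      simp only [hPg])
    have h2 : (T : ℝ) * (p / T) = p := by field_simp
    rw [h2] at h1
    exact h1
  calc _ ≤ ∑ Y ∈ V1.powerset, p ^ #Y * (2 * ∑ g ∈ univ.filter (fun g : Fin T → Finset (KSlot k n) => Pg g ∧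
        univ.biUnion g ∈ V0.powerset.filter (fun X => Bad (X ∪ Y))), ∏ i, (p / T) ^ #(g i)) := by
        apply Finset.sum_le_sum
        intro Y hY
        exact mul_le_mul_of_nonneg_left (hcol Y hY) (by positivity)
    _ = 2 * ∑ g ∈ univ.filter (fun g : Fin T → Finset (KSlot k n) => Pg g ∧ univ.biUnion g ⊆ V0),
          (∏ i, (p / T) ^ #(g i)) *
          ∑ Y ∈ V1.powerset.filter (fun Y => Bad (univ.biUnion g ∪ Y)), p ^ #Y := by
        simp only [Finset.mul_sum, Finset.sum_filter]
        rw [Finset.sum_comm]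
        apply Finset.sum_congr rfl
        intro g _
        by_cases h1 : Pg g ∧ univ.biUnion g ⊆ V0
        · rw [if_pos h1, Finset.mul_sum]
          apply Finset.sum_congr rfl
          intro Y _
          by_cases h2 : Bad (univ.biUnion g ∪ Y)
          · rw [if_pos ⟨h1.1, mem_filter.2 ⟨mem_powerset.2 h1.2, h2⟩⟩, if_pos h2]; ring
          · rw [if_neg (fun h => by rw [mem_filter] at h; exact h2 h.2.2), if_neg h2]; simp
        · rw [if_neg h1, mul_zero]
          apply Finset.sum_eq_zero
          intro Y _
          rw [if_neg (fun h => h1 ⟨h.1, mem_powerset.1 (mem_filter.1 h.2).1⟩)]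
          simp
    _ ≤ 2 * ∑ g : Fin T → Finset (KSlot k n), (∏ i, w (g i)) *
          (Real.exp ((1 - (bb + d + 5)) * m) * M ^ fl g + Real.exp ((2 - (bb + d + 5)) * m)) := by
        apply mul_le_mul_of_nonneg_left _ (by norm_num)
        rw [Finset.sum_filter]
        apply Finset.sum_le_sum
        intro g _
        have hnn : 0 ≤ Real.exp ((1 - (bb + d + 5)) * m) * M ^ fl g + Real.exp ((2 - (bb + d + 5)) * m) := by
          positivity
        split_ifs with h
        · have h1 : ∀ i, w (g i) = (p / T) ^ #(g i) := by
            intro i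
            simp only [hw]
            rw [if_pos ((subset_biUnion_of_mem g (mem_univ i)).trans h.2)]
          simp only [h1]
          exact mul_le_mul_of_nonneg_left (hinner g h.1 h.2) (Finset.prod_nonneg (fun _ _ => by positivity))
        · exact mul_nonneg (Finset.prod_nonneg (fun _ _ => hw0 _)) hnn
    _ = 2 * (Real.exp ((1 - (bb + d + 5)) * m) * (∑ g : Fin T → Finset (KSlot k n), (∏ i, w (g i)) * M ^ fl g) +
          Real.exp ((2 - (bb + d + 5)) * m) * ∑ g : Fin T → Finset (KSlot k n), (∏ i, w (g i)) * 1 ^ fl g) := by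
        simp only [one_pow, mul_one, mul_add, Finset.mul_sum, Finset.sum_add_distrib]
        congr 1 <;> (apply Finset.sum_congr rfl; intro g _; ring)
    _ ≤ 2 * (Real.exp ((1 - (bb + d + 5)) * m) * Real.exp ((d + 1) * m) +
          Real.exp ((2 - (bb + d + 5)) * m) * Real.exp ((d + 1) * m)) := by
        have hW : ∑ x, w x ≤ Real.exp (d * (m / T)) := by
          simp only [hw]
          rw [← Finset.sum_filter]
          have := kl_sum_pow V0 (p / T) (by positivity)
          have h3 : p / T * #V0 = d * (m / T) := by rw [hV0c, hm]; ring
          rw [h3] at this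
          refine le_trans (le_of_eq ?_) this
          apply Finset.sum_congr _ (fun _ _ => rfl)
          ext G; simp
        have hφ : ∀ B, ∑ x ∈ univ.filter (Fail B), w x ≤ M⁻¹ := by
          intro B
          have := hfail B
          rw [hm1] at this
          have h3 : M⁻¹ = Real.exp (-(2 * (bb + d + 5)) * (m / T)) := by
            rw [hM, ← Real.exp_neg]; congr 1; ring
          rw [h3]
          refine le_trans (le_of_eq ?_) this
          simp only [hw]
          rw [← Finset.sum_filter]
          apply Finset.sum_congr _ (fun _ _ => rfl)
          ext G; simp [and_comm]
        have hM0 : 0 < M := by linarith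
        have h1 := kl_machine_sum Fail (fun s x => s \ R x) w hw0 M⁻¹ (Real.exp (d * (m / T))) M
          hM0.le (by positivity) (Real.exp_nonneg _) hφ hW T univ
        have h2 := kl_machine_sum Fail (fun s x => s \ R x) w hw0 M⁻¹ (Real.exp (d * (m / T))) 1
          zero_le_one (by positivity) (Real.exp_nonneg _) hφ hW T univ
        have h3 : (Real.exp (d * (m / T)) + 1) ^ T ≤ Real.exp ((d + 1) * m) := by
          have h4 : Real.exp (d * (m / T)) + 1 ≤ Real.exp (d * (m / T)) * Real.exp 1 := by
            have h5 : 1 ≤ Real.exp (d * (m / T)) := Real.one_le_exp (by positivity)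
            have h6 := Real.add_one_le_exp 1
            nlinarith
          refine (pow_le_pow_left₀ (by positivity) h4 T).trans ?_
          rw [← Real.exp_add, ← Real.exp_nat_mul]
          apply Real.exp_le_exp.2
          have h7 : (T : ℝ) * (d * (m / T) + 1) = d * m + T := by field_simp
          rw [h7]; linarith
        have h4 : M * M⁻¹ = 1 := mul_inv_cancel₀ hM0.ne'
        rw [h4] at h1
        have h5 : Real.exp (d * (m / T)) + 1 * M⁻¹ ≤ Real.exp (d * (m / T)) + 1 := by
          have := inv_le_one_of_one_le₀ hM1
          linarith
        have h6 := h2.trans ((pow_le_pow_left₀ (by positivity) h5 T).trans h3)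
        have h7 := h1.trans h3
        have h8 := mul_le_mul_of_nonneg_left h7 (Real.exp_nonneg ((1 - (bb + d + 5)) * m))
        have h9 := mul_le_mul_of_nonneg_left h6 (Real.exp_nonneg ((2 - (bb + d + 5)) * m))
        simp only [hfl]
        linarith
    _ ≤ Real.exp (-bb * m) := by
        rw [← Real.exp_add, ← Real.exp_add]
        have e1 : (1 - (bb + d + 5)) * m + (d + 1) * m = -bb * m + - (3 * m) := by ring
        have e2 : (2 - (bb + d + 5)) * m + (d + 1) * m = -bb * m + - (2 * m) := by ring
        rw [e1, e2, Real.exp_add, Real.exp_add]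
        have hm1' : 1 ≤ m := by linarith
        have e3 : Real.exp (-(3 * m)) ≤ Real.exp (-(2 * m)) := Real.exp_le_exp.2 (by linarith)
        have e4 : Real.exp (-(2 * m)) ≤ 1 / 4 := by
          rw [Real.exp_neg, ← one_div]
          apply one_div_le_one_div_of_le (by norm_num)
          have h1 : Real.exp (2 * 1) ≤ Real.exp (2 * m) := Real.exp_le_exp.2 (by linarith)
          have h2 : Real.exp (2 * 1) = Real.exp 1 * Real.exp 1 := by rw [← Real.exp_add]; norm_num
          have h3 := Real.add_one_le_exp 1
          nlinarith
        have e5 := Real.exp_pos (-bb * m)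
        nlinarith

end klr

section klr
variable {k n : ℕ}

lemma kl_klr_weak {ε : ℝ} {δ δ' : ℝ → ℝ} {G : Finset (KSlot k n)} {e} (h : KLR ε δ G e)
    (hδ : ∀ x, δ' x ≤ δ x) : KLR ε δ' G e := by
  intro x hx A B hA hB
  refine le_trans ?_ (h x hx A B hA hB)
  exact mul_le_mul_of_nonneg_right (hδ x) (by positivity)

lemma kl_floor (y : ℝ) (hy : 1 ≤ y) : y / 2 ≤ (⌊y⌋₊ : ℝ) := by
  have h1 : (1 : ℝ) ≤ (⌊y⌋₊ : ℝ) := by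
    exact_mod_cast (Nat.one_le_floor_iff y).2 hy
  have h2 := Nat.lt_floor_add_one y
  linarith

set_option maxHeartbeats 1000000 in
open Classical in
theorem kl_main (E : Finset (Fin k × Fin k)) (hE : ∀ e ∈ E, e.1 < e.2) (E' : Finset (Fin k × Fin k)) :
    E' ⊆ E → ∀ (lam bb : ℝ) (δ : ℝ → ℝ), 0 < lam → 0 < bb → (∀ x, 0 < x → 0 < δ x) →
    ∃ C ε γ : ℝ, 0 < C ∧ 0 < ε ∧ 0 < γ ∧ ∀ (n : ℕ) (q p : ℝ), 0 < q → 1 ≤ q * n →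
    (∀ J : Finset (Fin k), ∀ e ∈ E, e.1 ∈ J → e.2 ∈ J →
      (n : ℝ) ^ 2 ≤ n ^ #J * q ^ (#(E.filter (fun e => e.1 ∈ J ∧ e.2 ∈ J)) - 1)) →
    C * q ≤ p → p ≤ 1 → ∀ D : Finset (KSlot k n), (∀ s ∈ D, s.1 ∉ E') →
    (∀ e ∈ E \ E', KLR ε δ D e) →
    ∑ G ∈ (E' ×ˢ (univ : Finset (Fin n × Fin n))).powerset.filter
      (fun G => (∀ e ∈ E', KLR ε (fun _ => lam * p) G e) ∧
        (#(klCps E (D ∪ G)) : ℝ) < γ * n ^ k * p ^ #E'), p ^ #G ≤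
        Real.exp (-bb * (p * n ^ 2)) := by
  induction E' using Finset.induction_on with
  | empty =>
    intro _ lam bb δ hlam hbb hδ
    obtain ⟨ε, γ, hε, hγ, H⟩ := kl_dense δ hδ E hE univ 1 one_pos
    refine ⟨1, ε, γ, one_pos, hε, hγ, ?_⟩
    intro n q p hq hqn hJ hCp hp1 D hD hDK
    have hn : 0 < n := by
      rcases Nat.eq_zero_or_pos n with h | h
      · subst h; simp at hqn; linarith
      · exact h
    have h1 := H n hn D (by simpa using hDK) (fun _ => univ) (by simp)
    refine le_trans (le_of_eq ?_) (Real.exp_nonneg _)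
    apply Finset.sum_eq_zero
    intro G hG
    exfalso
    simp only [mem_filter, mem_powerset, empty_product, subset_empty] at hG
    obtain ⟨rfl, -, h2⟩ := hG
    simp only [union_empty, card_empty, pow_zero, mul_one] at h2
    have h3 : #(klCps E D) = #(univ.filter (fun f : Fin k → Fin n => (∀ i ∈ (univ : Finset (Fin k)), f i ∈ (univ : Finset (Fin n))) ∧
        ∀ e ∈ E, e.1 ∈ (univ : Finset (Fin k)) → e.2 ∈ (univ : Finset (Fin k)) → (e, (f e.1, f e.2)) ∈ D)) := by
      congr 1
      ext f
      simp [klCps]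
    rw [h3] at h2
    linarith
  | insert ab E0 habE0 ih =>
    obtain ⟨a, b⟩ := ab
    intro hsub lam bb δ hlam hbb hδ
    have hab : (a, b) ∈ E := hsub (mem_insert_self _ _)
    have hE0E : E0 ⊆ E := (subset_insert _ _).trans hsub
    have hE0 : E0 ⊆ E.erase (a, b) := by
      intro e he
      exact mem_erase.2 ⟨fun h => habE0 (h ▸ he), hE0E he⟩
    set d : ℝ := (#E0 : ℝ) with hd
    have hd0 : 0 ≤ d := by positivity
    set δab : ℝ → ℝ := fun x => Real.exp (-(2 * (bb + d + 5) / (lam * x ^ 2))) with hδab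
    set b1 : ℝ := 2 * (bb + d + 5) + 1 + d with hb1
    have hb10 : 0 < b1 := by positivity
    obtain ⟨C₁, ε, γ₁, hC₁, hε, hγ₁, IH⟩ := ih hE0E (lam / 8) b1 (fun x => min (δ x) (δab x))
      (by positivity) hb10 (fun x hx => lt_min (hδ x hx) (Real.exp_pos _))
    set ξ₁ : ℝ := lam / 8 * ε ^ 2 with hξ₁
    have hξ₁0 : 0 < ξ₁ := by positivity
    set κ : ℝ := b1 * (2 * (2 * d + 1)) / ξ₁ with hκ
    set K : ℝ := Real.exp κ with hK
    have hK0 : 0 < K := Real.exp_pos _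
    set g0 : ℝ := γ₁ ^ 2 / (4 * K * 2 ^ k) with hg0
    have hg00 : 0 < g0 := by positivity
    set T : ℕ := ⌈2 / g0⌉₊ + 1 with hT
    have hT0 : 0 < T := by omega
    have hT' : (0 : ℝ) < T := by exact_mod_cast hT0
    have hT1 : (1 : ℝ) ≤ T := by exact_mod_cast hT0
    have hTg : 2 / g0 ≤ T := by
      rw [hT]; push_cast
      have := Nat.le_ceil (2 / g0)
      linarith
    set γ : ℝ := lam / 4 * ε ^ 2 * γ₁ / T ^ #E0 with hγ
    have hc1 : 0 < T * (2 * d + 1) / ξ₁ := by positivity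
    have hc2 : 0 < (2 * T * d + 4) * (4 * T) / (lam * ε ^ 2) := by positivity
    refine ⟨T * C₁ + T + T * (2 * d + 1) / ξ₁ + (2 * T * d + 4) * (4 * T) / (lam * ε ^ 2), ε, γ,
      by positivity, hε, by positivity, ?_⟩
    set C : ℝ := T * C₁ + T + T * (2 * d + 1) / ξ₁ + (2 * T * d + 4) * (4 * T) / (lam * ε ^ 2) with hC
    have hTC₁ : 0 < T * C₁ := by positivity
    have hC0 : 0 < C := by positivity
    intro n q p hq hqn hJ hCp hp1 D hD hDK
    have hn : 0 < n := by
      rcases Nat.eq_zero_or_pos n with h | h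
      · subst h; simp at hqn; linarith
      · exact h
    have hn' : (0 : ℝ) < n := by exact_mod_cast hn
    have hn1 : (1 : ℝ) ≤ n := by exact_mod_cast hn
    have hp : 0 < p := lt_of_lt_of_le (by positivity) hCp
    have hm : C * n ≤ p * n ^ 2 := by
      calc C * n ≤ C * n * (q * n) := le_mul_of_one_le_right (by positivity) hqn
        _ = C * q * n ^ 2 := by ring
        _ ≤ _ := mul_le_mul_of_nonneg_right hCp (by positivity)
    have hmC : C ≤ p * n ^ 2 := le_trans (le_mul_of_one_le_right hC0.le hn1) hm
    have hp₁ : 0 < p / T := by positivity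
    have hp₁1 : p / T ≤ 1 := by
      rw [div_le_one hT']; linarith
    have hq₁ : q ≤ p / T := by
      rw [le_div_iff₀ hT']
      refine le_trans ?_ hCp
      rw [mul_comm]
      exact mul_le_mul_of_nonneg_right (by linarith) hq.le
    have hCq₁ : C₁ * q ≤ p / T := by
      rw [le_div_iff₀ hT']
      refine le_trans ?_ hCp
      have : C₁ * q * T = T * C₁ * q := by ring
      rw [this]
      exact mul_le_mul_of_nonneg_right (by linarith) hq.le
    have hTm : (T : ℝ) ≤ p * n ^ 2 := by linarith
    have hm1 : p / T * (n : ℝ) ^ 2 = p * n ^ 2 / T := by ring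
    set y : ℝ := ξ₁ * (p / T * n ^ 2) / (2 * d + 1) with hy
    have hy1 : 1 ≤ y := by
      rw [hy, le_div_iff₀ (by positivity), one_mul, hm1]
      have h1 : T * (2 * d + 1) / ξ₁ ≤ p * n ^ 2 := by linarith
      rw [div_le_iff₀ hξ₁0] at h1
      rw [mul_div_assoc', le_div_iff₀ hT']
      linarith
    have hstage := kl_stage E E0 a b hab hE0 hn (p / T) ε (lam / 8) γ₁ K b1 hp₁ hp₁1 hε
      (by positivity) hγ₁ hK0 D hD (by
        intro J haJ hbJ
        refine (hJ J (a, b) hab haJ hbJ).trans ?_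
        apply mul_le_mul_of_nonneg_left _ (by positivity)
        refine (pow_le_pow_left₀ hq.le hq₁ _).trans ?_
        apply pow_le_pow_of_le_one hp₁.le hp₁1
        have h1 : E0.filter (fun e => e.1 ∈ J ∧ e.2 ∈ J) ⊆
            (E.filter (fun e => e.1 ∈ J ∧ e.2 ∈ J)).erase (a, b) := by
          intro e he
          rw [mem_filter] at he
          have := mem_erase.1 (hE0 he.1)
          exact mem_erase.2 ⟨this.1, mem_filter.2 ⟨this.2, he.2⟩⟩
        refine (card_le_card h1).trans (le_of_eq ?_)
        rw [card_erase_of_mem (mem_filter.2 ⟨hab, haJ, hbJ⟩)])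
      (fun B => KLR ε δab (klAB a b B) (a, b)) (by
        intro B hB
        refine IH n q (p / T) hq hqn hJ hCq₁ hp₁1 (D ∪ klAB a b B) ?_ ?_
        · intro s hs
          rcases mem_union.1 hs with h | h
          · exact fun h' => hD s h (mem_insert_of_mem h')
          · simp only [klAB, mem_product, mem_singleton] at h
            rw [h.1]; exact habE0
        · intro e he
          rw [mem_sdiff] at he
          by_cases hee : e = (a, b)
          · subst hee
            exact kl_klr_congr (kl_klr_weak hB (fun x => min_le_right _ _))
              (fun uv h => mem_union_right _ h)
          · exact kl_klr_congr (kl_klr_weak (hDK e (mem_sdiff.2 ⟨he.1, by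
              rw [mem_insert]; tauto⟩)) (fun x => min_le_left _ _))
              (fun uv h => mem_union_left _ h))
      ⌊y⌋₊ (by
        have h1 := Nat.floor_le (by linarith : 0 ≤ y)
        rw [hy, le_div_iff₀ (by positivity), ← hy] at h1
        push_cast
        have h2 : lam / 8 * (p / T) * ε ^ 2 * n ^ 2 = ξ₁ * (p / T * n ^ 2) := by rw [hξ₁]; ring
        rw [h2]
        have h3 : (0 : ℝ) ≤ ⌊y⌋₊ := by positivity
        linarith)
      (by
        rw [hK, ← Real.exp_neg, ← Real.exp_nat_mul]
        apply Real.exp_le_exp.2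
        have h1 := kl_floor y hy1
        have hκ0 : 0 ≤ κ := by positivity
        have h2 : y / 2 * κ = b1 * (p / T * n ^ 2) := by
          rw [hy, hκ]; field_simp
        have h3 := mul_le_mul_of_nonneg_right h1 hκ0
        rw [h2] at h3
        linarith)
      (by rw [hm1, le_div_iff₀ hT']; linarith)
    obtain ⟨R, Fail, hR, hgain, hfail⟩ := hstage
    rw [card_insert_of_notMem habE0]
    have e1 : b1 - #E0 - 1 = 2 * (bb + d + 5) := by rw [hb1, hd]; ring
    rw [e1] at hfail
    have e2 : 2 * (lam / 8 * (p / T)) = lam / 4 * (p / T) := by ring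
    simp only [e2] at hgain
    refine kl_core E E0 a b hE0 hn T hT0 p lam ε γ g0 bb (γ₁ * n ^ k * (p / T) ^ #E0 / 2) hp hlam hε hg00
      hbb (by positivity) D (fun B => KLR ε δab (klAB a b B) (a, b)) (fun B => Iff.rfl) R Fail hR
      hgain hfail hTg hTm ?_ ?_
    · have h1 : 2 * (T * d * 4 ^ n : ℝ) ≤ Real.exp (2 * T * d) * Real.exp (4 * n) := by
        have h2 : 2 * T * d ≤ Real.exp (2 * T * d) := by
          have := Real.add_one_le_exp (2 * T * d); linarith
        have h3 : (4 : ℝ) ^ n ≤ Real.exp (4 * n) := by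
          rw [mul_comm, Real.exp_nat_mul]
          apply pow_le_pow_left₀ (by norm_num)
          have := Real.add_one_le_exp 4; linarith
        calc _ = 2 * T * d * 4 ^ n := by ring
          _ ≤ _ := mul_le_mul h2 h3 (by positivity) (Real.exp_nonneg _)
      refine h1.trans ?_
      rw [← Real.exp_add]
      apply Real.exp_le_exp.2
      rw [le_div_iff₀ (by positivity)]
      have h2 : (2 * T * d + 4) * (4 * T) / (lam * ε ^ 2) * n ≤ p * n ^ 2 := by
        refine le_trans (mul_le_mul_of_nonneg_right ?_ hn'.le) hm
        linarith
      rw [div_mul_eq_mul_div, div_le_iff₀ (by positivity)] at h2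
      have h3 : (2 * T * d + 4 * n) ≤ (2 * T * d + 4) * n := by
        have : 2 * T * d ≤ 2 * T * d * n := le_mul_of_one_le_right (by positivity) hn1
        linarith
      have h4 := mul_le_mul_of_nonneg_right h3 (by positivity : (0:ℝ) ≤ 4 * T)
      linarith
    · apply le_of_eq
      rw [hγ, div_pow]
      field_simp
      ring

end klr

section klr
variable {k n : ℕ}

open Classical in
noncomputable def klE (H : SimpleGraph (Fin k)) : Finset (Fin k × Fin k) :=
  univ.filter (fun e => e.1 < e.2 ∧ H.Adj e.1 e.2)

lemma mem_klE {H : SimpleGraph (Fin k)} {e : Fin k × Fin k} :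
    e ∈ klE H ↔ e.1 < e.2 ∧ H.Adj e.1 e.2 := by simp [klE]

lemma kl_edgeCount (H : SimpleGraph (Fin k)) : edgeCount H = #(klE H) := by
  unfold edgeCount
  rw [Nat.card_coe_set_eq]
  have : H.edgeSet = (fun e : Fin k × Fin k => s(e.1, e.2)) '' (klE H : Set (Fin k × Fin k)) := by
    ext x
    induction x using Sym2.ind with
    | _ a b =>
      simp only [SimpleGraph.mem_edgeSet, Set.mem_image, mem_coe, mem_klE, Prod.exists]
      constructor
      · intro h
        rcases lt_or_gt_of_ne h.ne with h1 | h1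
        · exact ⟨a, b, ⟨h1, h⟩, rfl⟩
        · exact ⟨b, a, ⟨h1, h.symm⟩, Sym2.eq_swap⟩
      · rintro ⟨c, d, ⟨h1, h2⟩, h3⟩
        rcases Sym2.eq_iff.1 h3 with ⟨rfl, rfl⟩ | ⟨rfl, rfl⟩
        · exact h2
        · exact h2.symm
  rw [this, Set.ncard_image_of_injOn, Set.ncard_coe_finset]
  rintro ⟨a, b⟩ h ⟨c, d⟩ h' h3
  simp only [mem_coe, mem_klE] at h h'
  rcases Sym2.eq_iff.1 h3 with ⟨h4, h5⟩ | ⟨h4, h5⟩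
  · simp only at h4 h5; rw [h4, h5]
  · simp only at h4 h5; subst h4 h5; exact absurd h.1 (not_lt.2 h'.1.le)

open Classical in
noncomputable def klY (H : SimpleGraph (Fin k)) (G : SimpleGraph (Fin k × Fin n)) :
    Finset (KSlot k n) :=
  (klE H ×ˢ univ).filter (fun s => G.Adj (s.1.1, s.2.1) (s.1.2, s.2.2))

lemma mem_klY {H : SimpleGraph (Fin k)} {G : SimpleGraph (Fin k × Fin n)} {s : KSlot k n} :
    s ∈ klY H G ↔ s.1 ∈ klE H ∧ G.Adj (s.1.1, s.2.1) (s.1.2, s.2.2) := by simp [klY]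

lemma klY_inj {H : SimpleGraph (Fin k)} {G G' : SimpleGraph (Fin k × Fin n)}
    (hG : IsSubgraphKnH H G) (hG' : IsSubgraphKnH H G') (h : klY H G = klY H G') : G = G' := by
  have key : ∀ {G G' : SimpleGraph (Fin k × Fin n)}, IsSubgraphKnH H G → klY H G = klY H G' →
      ∀ x y, G.Adj x y → G'.Adj x y := by
    intro G G' hG h x y hxy
    have h1 := hG hxy
    rcases lt_or_gt_of_ne h1.ne with h2 | h2
    · have : ((x.1, y.1), (x.2, y.2)) ∈ klY H G := mem_klY.2 ⟨mem_klE.2 ⟨h2, h1⟩, hxy⟩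
      rw [h] at this
      exact (mem_klY.1 this).2
    · have : ((y.1, x.1), (y.2, x.2)) ∈ klY H G := mem_klY.2 ⟨mem_klE.2 ⟨h2, h1.symm⟩, hxy.symm⟩
      rw [h] at this
      exact (mem_klY.1 this).2.symm
  ext x y
  exact ⟨key hG h x y, key hG' h.symm x y⟩

lemma klY_cnt {H : SimpleGraph (Fin k)} (G : SimpleGraph (Fin k × Fin n)) {e : Fin k × Fin k}
    (he : e ∈ klE H) (A B : Finset (Fin n)) :
    klCnt (klY H G) e A B = pairCountIn G e.1 e.2 A B := by
  classical
  unfold klCnt pairCountIn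
  rw [Nat.card_eq_fintype_card, Fintype.card_subtype]
  congr 1
  ext uv
  simp [mem_klY, he, and_assoc]

lemma kl_pairCountIn_univ (G : SimpleGraph (Fin k × Fin n)) (i j : Fin k) :
    pairCountIn G i j univ univ = pairCount G i j := by
  simp [pairCountIn, pairCount]

lemma klY_card {H : SimpleGraph (Fin k)} {G : SimpleGraph (Fin k × Fin n)} {m : ℕ}
    (hG : MemFamily H m G) : #(klY H G) = #(klE H) * m := by
  classical
  have h1 : #(klY H G) = ∑ e ∈ klE H, #((klY H G).filter (fun s => s.1 = e)) := by
    apply Finset.card_eq_sum_card_fiberwise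
    intro s hs
    exact (mem_klY.1 hs).1
  rw [h1, Finset.sum_const_nat]
  intro e he
  rw [← hG.2 e.1 e.2 (mem_klE.1 he).2, ← kl_pairCountIn_univ, ← klY_cnt G he]
  unfold klCnt
  symm
  apply Finset.card_bij (fun uv _ => (e, uv))
  · intro uv h
    simp only [mem_filter] at h ⊢
    exact ⟨h.2, trivial⟩
  · intro a _ b _ h
    exact (Prod.mk.inj h).2
  · rintro ⟨e', uv⟩ h
    simp only [mem_filter] at h
    obtain ⟨h, rfl⟩ := h
    exact ⟨uv, by simp [h], rfl⟩

lemma klY_copies (H : SimpleGraph (Fin k)) (G : SimpleGraph (Fin k × Fin n)) :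
    copyCount H G = #(klCps (klE H) (klY H G)) := by
  classical
  unfold copyCount klCps
  rw [Nat.card_eq_fintype_card, Fintype.card_subtype]
  congr 1
  ext f
  simp only [mem_filter, mem_univ, true_and]
  constructor
  · intro h e he
    exact mem_klY.2 ⟨he, h (mem_klE.1 he).2⟩
  · intro h i j hij
    rcases lt_or_gt_of_ne hij.ne with h2 | h2
    · exact (mem_klY.1 (h (i, j) (mem_klE.2 ⟨h2, hij⟩))).2
    · exact (mem_klY.1 (h (j, i) (mem_klE.2 ⟨h2, hij.symm⟩))).2.symm

lemma klY_sub (H : SimpleGraph (Fin k)) (G : SimpleGraph (Fin k × Fin n)) (X : Set (Sym2 (Fin k × Fin n))) :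
    klY H (G.deleteEdges X) ⊆ klY H G := by
  intro s hs
  rw [mem_klY] at hs ⊢
  exact ⟨hs.1, (SimpleGraph.deleteEdges_le X) hs.2⟩

lemma klY_del (H : SimpleGraph (Fin k)) (G : SimpleGraph (Fin k × Fin n)) (X : Set (Sym2 (Fin k × Fin n))) :
    #(klY H G \ klY H (G.deleteEdges X)) ≤ X.ncard := by
  classical
  rw [← Set.ncard_coe_finset]
  apply Set.ncard_le_ncard_of_injOn (fun s : KSlot k n => s((s.1.1, s.2.1), (s.1.2, s.2.2))) _ _ (Set.toFinite _)
  · intro s hs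
    simp only [coe_sdiff, Set.mem_sdiff, mem_coe, mem_klY, SimpleGraph.deleteEdges_adj] at hs
    by_contra h
    exact hs.2 ⟨hs.1.1, hs.1.2, h⟩
  · rintro ⟨⟨a, b⟩, u, v⟩ h ⟨⟨c, d⟩, u', v'⟩ h' h3
    simp only [coe_sdiff, Set.mem_sdiff, mem_coe, mem_klY, mem_klE] at h h'
    rcases Sym2.eq_iff.1 h3 with ⟨h4, h5⟩ | ⟨h4, h5⟩
    · simp only [Prod.mk.injEq] at h4 h5 ⊢; tauto
    · simp only [Prod.mk.injEq] at h4 h5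
      obtain ⟨rfl, rfl⟩ := h4
      obtain ⟨rfl, rfl⟩ := h5
      exact absurd h.1.1.1 (not_lt.2 h'.1.1.1.le)

lemma klY_klr {H : SimpleGraph (Fin k)} {G : SimpleGraph (Fin k × Fin n)} {m : ℕ} {ε lam : ℝ}
    (hG : MemFamily H m G) {e : Fin k × Fin k} (he : e ∈ klE H)
    (h : LowerRegularPair ε lam G e.1 e.2) :
    KLR ε (fun _ => lam * (m / n ^ 2)) (klY H G) e := by
  intro x hx A B hA hB
  have hx2 : ε * n ≤ x * n := mul_le_mul_of_nonneg_right hx (by positivity)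
  have h1 := h A B (hx2.trans hA) (hx2.trans hB)
  rw [klY_cnt G he]
  unfold density at h1
  rw [kl_pairCountIn_univ, hG.2 _ _ (mem_klE.1 he).2] at h1
  simp only [card_univ, Fintype.card_fin] at h1 ⊢
  rw [← pow_two] at h1
  rcases (show (0:ℝ) ≤ #A * #B by positivity).eq_or_lt with h0 | h0
  · rw [← h0]; simp
  · rwa [le_div_iff₀ h0] at h1

end klr

section klr
variable {k n : ℕ}

lemma kl_td_le (H : SimpleGraph (Fin k)) (V' : Finset (Fin k)) (H' : SimpleGraph (Fin k))
    (h1 : H' ≤ H) (h2 : ∀ ⦃x y⦄, H'.Adj x y → x ∈ V' ∧ y ∈ V') (h3 : 2 < #V') :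
    ((edgeCount H' : ℝ) - 1) / ((#V' : ℝ) - 2) ≤ twoDensity H := by
  unfold twoDensity
  apply le_csSup
  · apply Set.Finite.bddAbove
    apply (Set.finite_range (fun x : Finset (Fin k) × SimpleGraph (Fin k) =>
      ((edgeCount x.2 : ℝ) - 1) / ((#x.1 : ℝ) - 2))).subset
    rintro q ⟨V, K, _, _, _, rfl⟩
    exact ⟨(V, K), rfl⟩
  · exact ⟨V', H', h1, h2, h3, rfl⟩

def klInd (H : SimpleGraph (Fin k)) (J : Finset (Fin k)) : SimpleGraph (Fin k) where
  Adj x y := H.Adj x y ∧ x ∈ J ∧ y ∈ J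
  symm := ⟨fun _ _ h => ⟨h.1.symm, h.2.2, h.2.1⟩⟩
  loopless := ⟨fun _ h => h.1.ne rfl⟩

lemma kl_td_J (H : SimpleGraph (Fin k)) (J : Finset (Fin k)) (h3 : 2 < #J) :
    ((#((klE H).filter (fun e => e.1 ∈ J ∧ e.2 ∈ J)) : ℝ) - 1) / ((#J : ℝ) - 2) ≤ twoDensity H := by
  have := kl_td_le H J (klInd H J) (fun _ _ h => h.1) (fun _ _ h => h.2) h3
  rw [kl_edgeCount] at this
  have h : klE (klInd H J) = (klE H).filter (fun e => e.1 ∈ J ∧ e.2 ∈ J) := by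
    ext e
    simp only [mem_klE, mem_filter, klInd, and_assoc]
  rwa [h] at this

lemma kl_td_one (H : SimpleGraph (Fin k)) (a b c : Fin k) (hbc : b ≠ c) (hab : H.Adj a b)
    (hac : H.Adj a c) : 1 ≤ twoDensity H := by
  have hJ : #({a, b, c} : Finset (Fin k)) = 3 := by
    rw [card_eq_three]; exact ⟨a, b, c, hab.ne, hac.ne, hbc, rfl⟩
  have := kl_td_le H {a, b, c} (klInd H {a, b, c}) (fun _ _ h => h.1) (fun _ _ h => h.2) (by omega)
  rw [hJ] at this
  have h2 : 2 ≤ edgeCount (klInd H {a, b, c}) := by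
    unfold edgeCount
    rw [Nat.card_coe_set_eq]
    have h3 : ({s(a, b), s(a, c)} : Set (Sym2 (Fin k))).ncard = 2 := by
      apply Set.ncard_pair
      intro h
      rcases Sym2.eq_iff.1 h with ⟨_, h⟩ | ⟨h, _⟩
      · exact hbc h
      · exact hac.ne h
    rw [← h3]
    apply Set.ncard_le_ncard _ (Set.toFinite _)
    rintro x (rfl | rfl)
    · exact ⟨hab, by simp, by simp⟩
    · exact ⟨hac, by simp, by simp⟩
  have h2' : (2:ℝ) ≤ edgeCount (klInd H {a, b, c}) := by exact_mod_cast h2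
  norm_num at this
  linarith

lemma kl_Jcond (H : SimpleGraph (Fin k)) (hH : 1 ≤ twoDensity H) (hn : 1 ≤ n) (J : Finset (Fin k))
    (e : Fin k × Fin k) (he : e ∈ klE H) (h1 : e.1 ∈ J) (h2 : e.2 ∈ J) :
    (n : ℝ) ^ 2 ≤ n ^ #J * ((n : ℝ) ^ (-(1 / twoDensity H))) ^
      (#((klE H).filter (fun e => e.1 ∈ J ∧ e.2 ∈ J)) - 1) := by
  have hlt := (mem_klE.1 he).1
  have hsub : ({e.1, e.2} : Finset (Fin k)) ⊆ J := by
    intro x hx; simp only [mem_insert, mem_singleton] at hx; rcases hx with rfl | rfl <;> assumption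
  have hc2 : #({e.1, e.2} : Finset (Fin k)) = 2 := card_pair hlt.ne
  have hJ2 : 2 ≤ #J := hc2 ▸ card_le_card hsub
  have hn' : (1:ℝ) ≤ n := by exact_mod_cast hn
  have hpos : 1 ≤ #((klE H).filter (fun e => e.1 ∈ J ∧ e.2 ∈ J)) :=
    card_pos.2 ⟨e, by simp [he, h1, h2]⟩
  rcases hJ2.eq_or_lt with h | h
  · have hJ : J = {e.1, e.2} := (eq_of_subset_of_card_le hsub (by omega)).symm
    have : #((klE H).filter (fun e => e.1 ∈ J ∧ e.2 ∈ J)) ≤ 1 := by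
      apply card_le_one.2
      have key : ∀ f ∈ (klE H).filter (fun e => e.1 ∈ J ∧ e.2 ∈ J), f = e := by
        intro f hf
        simp only [mem_filter, mem_klE] at hf
        obtain ⟨⟨h3, _⟩, h4, h5⟩ := hf
        rw [hJ] at h4 h5
        simp only [mem_insert, mem_singleton] at h4 h5
        ext1
        · rcases h4 with h4 | h4
          · exact h4
          · rcases h5 with h5 | h5 <;> rw [h4, h5] at h3
            · exact absurd hlt h3.asymm
            · exact absurd h3 (lt_irrefl _)
        · rcases h5 with h5 | h5
          · rcases h4 with h4 | h4 <;> rw [h4, h5] at h3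
            · exact absurd h3 (lt_irrefl _)
            · exact absurd hlt h3.asymm
          · exact h5
      intro f hf g hg
      rw [key f hf, key g hg]
    rw [Nat.sub_eq_zero_of_le this, ← h]
    simp
  · have h3 := kl_td_J H J h
    set t := #((klE H).filter (fun e => e.1 ∈ J ∧ e.2 ∈ J))
    have hJr : (2:ℝ) < #J := by exact_mod_cast h
    rw [div_le_iff₀ (by linarith)] at h3
    rw [← Real.rpow_natCast (_ ^ _), ← Real.rpow_mul (by linarith), ← Real.rpow_natCast _ #J,
      ← Real.rpow_add (by linarith), ← Real.rpow_natCast]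
    apply Real.rpow_le_rpow_of_exponent_le hn'
    rw [Nat.cast_sub hpos]
    push_cast
    have h4 : 1 / twoDensity H * ((t:ℝ) - 1) ≤ #J - 2 := by
      rw [one_div, inv_mul_le_iff₀ (by linarith)]; exact h3
    linarith

lemma klCnt_del (G G' : Finset (KSlot k n)) (e : Fin k × Fin k) (A B : Finset (Fin n)) :
    klCnt G e A B ≤ klCnt G' e A B + #(G \ G') := by
  have : (A ×ˢ B).filter (fun uv => (e, uv) ∈ G) ⊆ (A ×ˢ B).filter (fun uv => (e, uv) ∈ G') ∪
      (A ×ˢ B).filter (fun uv => (e, uv) ∈ G \ G') := by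
    intro uv h
    simp only [mem_filter, mem_union, mem_sdiff] at h ⊢
    tauto
  refine (card_le_card this).trans ((card_union_le _ _).trans ?_)
  apply Nat.add_le_add_left
  apply card_le_card_of_injOn (fun uv => (e, uv))
  · intro uv h
    simp only [coe_filter, Set.mem_ofPred_eq] at h
    exact h.2
  · intro a _ b _ h
    exact (Prod.mk.inj h).2

lemma kl_match_step (E0 : Finset (Fin k × Fin k)) (D : Finset (KSlot k n)) (a b : Fin k) (hab : a ≠ b)
    (h : ∀ e ∈ E0, e.1 ≠ a ∧ e.1 ≠ b ∧ e.2 ≠ a ∧ e.2 ≠ b) :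
    klCnt D (a, b) univ univ * #(klCps E0 D) ≤ #(klCps (insert (a, b) E0) D) * n ^ 2 := by
  have hc : n ^ 2 = #(univ : Finset (Fin n × Fin n)) := by simp [pow_two]
  unfold klCnt
  rw [hc, ← card_product, ← card_product]
  apply card_le_card_of_injOn (fun x => (Function.update (Function.update x.2 a x.1.1) b x.1.2, (x.2 a, x.2 b)))
  · rintro ⟨⟨u, v⟩, f⟩ hx
    simp only [coe_product, Set.mem_prod, mem_coe, mem_filter, mem_univ, klCps, and_true, true_and, mem_insert] at hx ⊢
    obtain ⟨h1, h2⟩ := hx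
    rintro e (rfl | he)
    · simpa [Function.update_of_ne hab] using h1.2
    · obtain ⟨h3, h4, h5, h6⟩ := h e he
      simp only [Function.update_of_ne h3, Function.update_of_ne h4, Function.update_of_ne h5, Function.update_of_ne h6]
      exact h2 e he
  · rintro ⟨⟨u, v⟩, f⟩ _ ⟨⟨u', v'⟩, f'⟩ _ hx
    simp only [Prod.mk.injEq] at hx ⊢
    obtain ⟨h1, h2, h3⟩ := hx
    have hu := congrFun h1 a
    have hv := congrFun h1 b
    simp only [Function.update_of_ne hab, Function.update_self] at hu hv
    refine ⟨⟨hu, hv⟩, ?_⟩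
    ext1 x
    by_cases hxa : x = a
    · rw [hxa, h2]
    by_cases hxb : x = b
    · rw [hxb, h3]
    have := congrFun h1 x
    simpa only [Function.update_of_ne hxa, Function.update_of_ne hxb] using this

lemma kl_match (H : SimpleGraph (Fin k)) (hH : ∀ a b c, H.Adj a b → H.Adj a c → b = c)
    (D : Finset (KSlot k n)) (E0 : Finset (Fin k × Fin k)) :
    E0 ⊆ klE H → n ^ k * ∏ e ∈ E0, klCnt D e univ univ ≤ #(klCps E0 D) * n ^ (2 * #E0) := by
  classical
  induction E0 using Finset.induction_on with
  | empty => intro _; simp [klCps]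
  | insert e E0 he ih =>
    intro hs
    have hs0 : E0 ⊆ klE H := (subset_insert _ _).trans hs
    obtain ⟨a, b⟩ := e
    have hab := mem_klE.1 (hs (mem_insert_self _ _))
    simp only at hab
    have h1 := kl_match_step E0 D a b hab.1.ne (by
      rintro ⟨c, d⟩ hcd
      have hcd' := mem_klE.1 (hs0 hcd)
      simp only at hcd' ⊢
      refine ⟨?_, ?_, ?_, ?_⟩
      · rintro rfl
        have := hH _ _ _ hcd'.2 hab.2
        subst this; exact he hcd
      · rintro rfl
        have := hH _ _ _ hcd'.2 hab.2.symm
        subst this; exact absurd hab.1 hcd'.1.asymm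
      · rintro rfl
        have := hH _ _ _ hcd'.2.symm hab.2
        subst this; exact absurd hab.1 hcd'.1.asymm
      · rintro rfl
        have := hH _ _ _ hcd'.2.symm hab.2.symm
        subst this; exact he hcd)
    rw [prod_insert he, card_insert_of_notMem he]
    calc _ = klCnt D (a, b) univ univ * (n ^ k * ∏ e ∈ E0, klCnt D e univ univ) := by ring
      _ ≤ klCnt D (a, b) univ univ * (#(klCps E0 D) * n ^ (2 * #E0)) := Nat.mul_le_mul_left _ (ih hs0)
      _ = (klCnt D (a, b) univ univ * #(klCps E0 D)) * n ^ (2 * #E0) := by ring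
      _ ≤ (#(klCps (insert (a, b) E0) D) * n ^ 2) * n ^ (2 * #E0) := Nat.mul_le_mul_right _ h1
      _ = _ := by ring

lemma kl_match_final (H : SimpleGraph (Fin k)) (hH : ∀ a b c, H.Adj a b → H.Adj a c → b = c)
    (hn : 1 ≤ n) (m : ℕ) (G : SimpleGraph (Fin k × Fin n)) (hG : MemFamily H m G)
    (X : Set (Sym2 (Fin k × Fin n))) (hX : (X.ncard : ℝ) ≤ 1 / 2 * m) :
    (1 / 2 : ℝ) ^ edgeCount H * (n : ℝ) ^ k * ((m : ℝ) / (n : ℝ) ^ 2) ^ edgeCount H ≤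
      (copyCount H (G.deleteEdges X) : ℝ) := by
  have h := kl_match H hH (klY H (G.deleteEdges X)) (klE H) (Subset.refl _)
  rw [klY_copies, kl_edgeCount]
  have hn' : (0:ℝ) < n := by exact_mod_cast hn
  have h' : (n:ℝ) ^ k * ∏ e ∈ klE H, (klCnt (klY H (G.deleteEdges X)) e univ univ : ℝ) ≤
    #(klCps (klE H) (klY H (G.deleteEdges X))) * n ^ (2 * #(klE H)) := by exact_mod_cast h
  have h2 : (1 / 2 * (m:ℝ)) ^ #(klE H) ≤ ∏ e ∈ klE H, (klCnt (klY H (G.deleteEdges X)) e univ univ : ℝ) := by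
    rw [← prod_const]
    apply prod_le_prod
    · intros; positivity
    · intro e he
      have h3 := klCnt_del (klY H G) (klY H (G.deleteEdges X)) e univ univ
      rw [klY_cnt G he, kl_pairCountIn_univ, hG.2 _ _ (mem_klE.1 he).2] at h3
      have h4 := klY_del H G X
      have h5 : (m:ℝ) ≤ klCnt (klY H (G.deleteEdges X)) e univ univ + X.ncard := by
        exact_mod_cast h3.trans (Nat.add_le_add_left h4 _)
      linarith
  have h3 : (n:ℝ) ^ k * (1 / 2 * (m:ℝ)) ^ #(klE H) ≤ _ :=
    (mul_le_mul_of_nonneg_left h2 (by positivity)).trans h'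
  rw [div_pow (m:ℝ), ← pow_mul, ← mul_div_assoc, div_le_iff₀ (by positivity)]
  calc _ = (n:ℝ) ^ k * (1 / 2 * (m:ℝ)) ^ #(klE H) := by rw [mul_pow]; ring
    _ ≤ _ := h3

end klr

section klr
variable {k n : ℕ}

lemma kl_choose (m : ℕ) : ∀ N : ℕ, m ≤ N → ((N : ℝ) / m) ^ m ≤ (N.choose m : ℝ) := by
  induction m with
  | zero => intro N _; simp
  | succ m ih =>
    intro N hN
    obtain ⟨N, rfl⟩ : ∃ N', N = N' + 1 := ⟨N - 1, by omega⟩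
    have hm : m ≤ N := by omega
    have h1 := ih N hm
    have h2 : ((N + 1 : ℕ) : ℝ) * (N.choose m : ℝ) = ((N + 1).choose (m + 1) : ℝ) * ((m + 1 : ℕ) : ℝ) := by
      exact_mod_cast Nat.add_one_mul_choose_eq N m
    have h3 : ((N + 1).choose (m + 1) : ℝ) = ((N + 1 : ℕ) : ℝ) / ((m + 1 : ℕ) : ℝ) * N.choose m := by
      field_simp
      linarith
    rw [h3, pow_succ']
    apply mul_le_mul_of_nonneg_left _ (by positivity)
    refine le_trans ?_ h1
    rcases Nat.eq_zero_or_pos m with rfl | hpos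
    · simp
    · apply pow_le_pow_left₀ (by positivity)
      have hp : (0:ℝ) < m := by exact_mod_cast hpos
      have hmr : (m:ℝ) ≤ N := by exact_mod_cast hm
      rw [div_le_div_iff₀ (by positivity) hp]
      push_cast
      nlinarith

open Classical in
lemma kl_final (H : SimpleGraph (Fin k)) (hn : 1 ≤ n) (m : ℕ) (hm : 0 < m) (lam β ε γ bb p : ℝ)
    (hlam : 0 < lam) (hβ : 0 < β) (hε : 0 < ε) (hp : p = (m : ℝ) / (n : ℝ) ^ 2)
    (hmn : m ≤ n ^ 2) (hbb : (edgeCount H : ℝ) - Real.log β ≤ bb)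
    (hmain : ∑ G ∈ (klE H ×ˢ (univ : Finset (Fin n × Fin n))).powerset.filter
      (fun G => (∀ e ∈ klE H, KLR ε (fun _ => lam / 2 * p) G e) ∧
        (#(klCps (klE H) G) : ℝ) < γ * n ^ k * p ^ #(klE H)), p ^ #G ≤ Real.exp (-bb * (p * n ^ 2)))
    (Bad : SimpleGraph (Fin k × Fin n) → Prop)
    (hBad : ∀ G, Bad G → (MemFamily H m G ∧ ∀ i j, H.Adj i j → LowerRegularPair ε lam G i j) ∧
      ∃ X : Set (Sym2 (Fin k × Fin n)), (X.ncard : ℝ) ≤ lam / 2 * ε ^ 2 * m ∧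
        (copyCount H (G.deleteEdges X) : ℝ) <
          γ * (n : ℝ) ^ k * ((m : ℝ) / (n : ℝ) ^ 2) ^ edgeCount H) :
    (Nat.card {G : SimpleGraph (Fin k × Fin n) // Bad G} : ℝ)
          ≤ β ^ m * ((n ^ 2).choose m : ℝ) ^ edgeCount H := by
  have hn0 : (0:ℝ) < n := by exact_mod_cast hn
  have hm0 : (0:ℝ) < m := by exact_mod_cast hm
  have hp0 : 0 < p := by rw [hp]; positivity
  have hpn : p * (n:ℝ) ^ 2 = m := by rw [hp]; field_simp
  rw [Nat.card_eq_fintype_card, Fintype.card_subtype]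
  set BG := (univ : Finset (SimpleGraph (Fin k × Fin n))).filter Bad with hBG
  obtain ⟨P, hP⟩ : ∃ P : Finset (KSlot k n) → Prop, ∀ G', P G' ↔
      ((∀ e ∈ klE H, KLR ε (fun _ => lam / 2 * p) G' e) ∧
        (#(klCps (klE H) G') : ℝ) < γ * n ^ k * p ^ #(klE H)) := ⟨_, fun _ => Iff.rfl⟩
  have hmain' : ∑ G ∈ (klE H ×ˢ (univ : Finset (Fin n × Fin n))).powerset.filter P, p ^ #G ≤
      Real.exp (-bb * (p * n ^ 2)) :=
    kl_sum_mono _ _ (fun _ => by positivity) hmain (fun Y _ h => (hP Y).1 h)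
  have h1 : (#BG : ℝ) * p ^ (#(klE H) * m) ≤
      ∑ G ∈ (klE H ×ˢ (univ : Finset (Fin n × Fin n))).powerset.filter (fun G => ∃ G' ⊆ G, P G'), p ^ #G := by
    calc (#BG : ℝ) * p ^ (#(klE H) * m) = ∑ G ∈ BG, p ^ #(klY H G) := by
          rw [← nsmul_eq_mul, ← sum_const]
          apply sum_congr rfl
          intro G hG
          rw [klY_card (hBad G (mem_filter.1 hG).2).1.1]
      _ = ∑ Y ∈ BG.image (klY H), p ^ #Y := by
          rw [sum_image]
          intro G hG G' hG' h
          exact klY_inj (hBad G (mem_filter.1 hG).2).1.1.1 (hBad G' (mem_filter.1 hG').2).1.1.1 h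
      _ ≤ _ := by
          apply sum_le_sum_of_subset_of_nonneg
          · intro Y hY
            obtain ⟨G, hG, rfl⟩ := mem_image.1 hY
            obtain ⟨⟨hG1, hG2⟩, X, hX2, hX3⟩ := hBad G (mem_filter.1 hG).2
            rw [mem_filter, mem_powerset]
            refine ⟨filter_subset _ _, klY H (G.deleteEdges X), klY_sub H G X, (hP _).2 ⟨?_, ?_⟩⟩
            · intro e he
              have h3 := klY_klr hG1 he (hG2 _ _ (mem_klE.1 he).2)
              apply kl_delete (G := klY H G) (by positivity) hε.le
              · rw [← hp] at h3
                convert h3 using 2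
                ring
              · have h4 : (#(klY H G \ klY H (G.deleteEdges X)) : ℝ) ≤ X.ncard := by
                  exact_mod_cast klY_del H G X
                refine h4.trans (hX2.trans (le_of_eq ?_))
                rw [← hpn]; ring
            · rw [← klY_copies, ← kl_edgeCount, hp]
              exact hX3
          · intros; positivity
  have h2 := kl_upclose (klE H ×ˢ (univ : Finset (Fin n × Fin n))) p hp0.le P
  have h3 : (#BG : ℝ) * p ^ (#(klE H) * m) ≤ β ^ m := by
    refine h1.trans (h2.trans ?_)
    refine (mul_le_mul_of_nonneg_left hmain' (Real.exp_pos _).le).trans ?_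
    rw [kl_slots_card, ← Real.exp_add, hpn]
    have : β ^ m = Real.exp (m * Real.log β) := by rw [Real.exp_nat_mul, Real.exp_log hβ]
    rw [this]
    apply Real.exp_le_exp.2
    have h5 : p * (#(klE H) * (n:ℝ) ^ 2) = #(klE H) * m := by rw [← hpn]; ring
    rw [h5, ← kl_edgeCount]
    have := mul_le_mul_of_nonneg_right hbb hm0.le
    linarith
  have h4 : 1 ≤ p ^ m * ((n ^ 2).choose m : ℝ) := by
    have h5 := kl_choose m (n ^ 2) hmn
    have h6 : (((n ^ 2 : ℕ) : ℝ) / m) = p⁻¹ := by rw [hp]; push_cast; rw [inv_div]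
    rw [h6, inv_pow] at h5
    rwa [inv_le_iff_one_le_mul₀ (by positivity), mul_comm] at h5
  have h5 : 1 ≤ p ^ (#(klE H) * m) * ((n ^ 2).choose m : ℝ) ^ edgeCount H := by
    rw [mul_comm (#(klE H)), pow_mul, ← kl_edgeCount, ← mul_pow]
    exact one_le_pow₀ h4
  calc (#BG : ℝ) = #BG * 1 := by ring
    _ ≤ #BG * (p ^ (#(klE H) * m) * ((n ^ 2).choose m : ℝ) ^ edgeCount H) :=
      mul_le_mul_of_nonneg_left h5 (by positivity)
    _ = (#BG * p ^ (#(klE H) * m)) * ((n ^ 2).choose m : ℝ) ^ edgeCount H := by ring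
    _ ≤ _ := mul_le_mul_of_nonneg_right h3 (by positivity)

end klr

/-- **Robust version of the K£R conjecture** (Theorem 3 with `H' = H` and no dense graph
`D`). For every `H` and `λ, β > 0` there exist `C, ε, ξ, γ > 0` such that for sufficiently
large `n` and `m ≥ C n^(2 - 1/m₂(H))`, all but at most `β^m C(n², m)^(e(H))` graphs
`G ∈ 𝒢(H, n, m, ε, λ)` satisfy: for every `X ⊆ E(G)` with `|X| ≤ ξ m`, the graph `G \ X`
contains at least `γ n^(v(H)) (m/n²)^(e(H))` canonical copies of `H`. -/
theorem klr_robust (k : ℕ) (H : SimpleGraph (Fin k)) (lam β : ℝ)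
    (hlam : 0 < lam) (hβ : 0 < β) :
    ∃ C ε ξ γ : ℝ, 0 < C ∧ 0 < ε ∧ 0 < ξ ∧ 0 < γ ∧
      ∃ n₀ : ℕ, ∀ n : ℕ, n₀ ≤ n → ∀ m : ℕ,
        C * (n : ℝ) ^ (2 - 1 / twoDensity H) ≤ (m : ℝ) →
        (Nat.card {G : SimpleGraph (Fin k × Fin n) //
            (MemFamily H m G ∧ ∀ i j, H.Adj i j → LowerRegularPair ε lam G i j) ∧
            ¬ (∀ X : Set (Sym2 (Fin k × Fin n)), X ⊆ G.edgeSet → (X.ncard : ℝ) ≤ ξ * m →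
                γ * (n : ℝ) ^ k * ((m : ℝ) / (n : ℝ) ^ 2) ^ edgeCount H ≤
                  (copyCount H (G.deleteEdges X) : ℝ))} : ℝ)
          ≤ β ^ m * ((n ^ 2).choose m : ℝ) ^ edgeCount H := by
  by_cases hH : ∀ a b c, H.Adj a b → H.Adj a c → b = c
  · refine ⟨1, 1, 1 / 2, (1 / 2) ^ edgeCount H, by norm_num, by norm_num, by norm_num, by positivity, 1, ?_⟩
    intro n hn m _
    rw [Nat.card_eq_zero.2]
    · simp only [Nat.cast_zero]; positivity
    · left
      refine ⟨?_⟩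
      rintro ⟨G, ⟨hG, _⟩, h⟩
      exact h (fun X _ hX => kl_match_final H hH hn m G hG X hX)
  · push Not at hH
    obtain ⟨a, b, c, hab, hac, hbc⟩ := hH
    have htd := kl_td_one H a b c hbc hab hac
    obtain ⟨C, ε, γ, hC, hε, hγ, hmain⟩ := kl_main (klE H) (fun e he => (mem_klE.1 he).1) (klE H)
      (Subset.refl _) (lam / 2) (max 1 ((edgeCount H : ℝ) - Real.log β)) (fun _ => 1) (by positivity)
      (by positivity) (fun _ _ => one_pos)
    refine ⟨C, ε, lam / 2 * ε ^ 2, γ, hC, hε, by positivity, hγ, 1, ?_⟩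
    intro n hn m hCm
    have hn0 : (0:ℝ) < n := by exact_mod_cast hn
    have hn1 : (1:ℝ) ≤ n := by exact_mod_cast hn
    have hm : 0 < m := by
      have : (0:ℝ) < m := lt_of_lt_of_le (by positivity) hCm
      exact_mod_cast this
    rcases le_or_gt m (n ^ 2) with hmn | hmn
    · have hmn' : (m:ℝ) ≤ (n:ℝ) ^ 2 := by exact_mod_cast hmn
      have key := hmain n ((n:ℝ) ^ (-(1 / twoDensity H))) ((m:ℝ) / (n:ℝ) ^ 2) (by positivity) ?_
        (fun J e he h1 h2 => kl_Jcond H htd hn J e he h1 h2) ?_ ?_ ∅ (by simp) (by simp)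
      · refine kl_final H hn m hm lam β ε γ (max 1 ((edgeCount H : ℝ) - Real.log β))
          ((m:ℝ) / (n:ℝ) ^ 2) hlam hβ hε rfl hmn (le_max_right _ _) ?_ _ ?_
        · refine kl_sum_mono _ _ (fun _ => by positivity) key ?_
          intro Y _ h
          rw [empty_union]
          exact h
        · rintro G ⟨h1, h2⟩
          push Not at h2
          obtain ⟨X, _, h3, h4⟩ := h2
          exact ⟨h1, X, h3, h4⟩
      · nth_rewrite 2 [← Real.rpow_one (n:ℝ)]
        rw [← Real.rpow_add hn0]
        apply Real.one_le_rpow hn1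
        have : 1 / twoDensity H ≤ 1 := by rw [div_le_one (by linarith)]; exact htd
        linarith
      · rw [le_div_iff₀ (by positivity)]
        refine le_trans (le_of_eq ?_) hCm
        rw [sub_eq_add_neg, Real.rpow_add hn0, Real.rpow_ofNat]
        ring
      · rw [div_le_one (by positivity)]; exact hmn'
    · rw [Nat.card_eq_zero.2]
      · simp only [Nat.cast_zero]; positivity
      · left
        refine ⟨?_⟩
        rintro ⟨G, ⟨hG, _⟩, h⟩
        have h1 := hG.2 a b hab
        have h2 : pairCount G a b ≤ n ^ 2 := by
          unfold pairCount
          refine (Nat.card_le_card_of_injective (fun x => x.1) Subtype.val_injective).trans ?_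
          simp [pow_two]
        omega
end

section
/- For every ε with 0 < ε < 1/6, every λ ∈ (0,1], every graph H, and every positive integer z, there exists a constant C such that the following holds for all sufficiently large n: if m = 2z·m' with m' > Cn, then every graph G ∈ G(H, n, m, ε, λ) admits at least 0.99·(m!/(m'!)^{2z})^{e(H)} ordered partitions of its edge set into a sequence (G₁,…,G_{2z}) of edge-disjoint graphs, each partition splitting each bipartite graph G(V_i,V_j), ij ∈ E(H), into 2z sets of m' edges, such that every G_t belongs to G(H, n, m', ε, λ/2). -/
open Finset

variable {k n : ℕ}

section P1
variable {α ι : Type*} [Fintype α] [DecidableEq α] [Fintype ι] [DecidableEq ι]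

def Bal (α ι : Type*) [Fintype α] [DecidableEq α] [Fintype ι] [DecidableEq ι] (m' : ℕ) :
    Finset (α → ι) :=
  univ.filter (fun f => ∀ t, (univ.filter (fun a => f a = t)).card = m')

lemma bal_comp {m' : ℕ} {f : α → ι} (hf : f ∈ Bal α ι m') (σ : Equiv.Perm α) :
    f ∘ σ ∈ Bal α ι m' := by
  simp only [Bal, mem_filter, mem_univ, true_and] at hf ⊢
  intro t
  rw [← hf t]
  apply Finset.card_bij (fun a _ => σ a)
  · simp
  · simp
  · intro b hb
    exact ⟨σ.symm b, by simpa using hb, by simp⟩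

lemma card_bal (m' : ℕ) (h : Fintype.card α = Fintype.card ι * m') :
    (Fintype.card α).factorial ≤ (m'.factorial) ^ Fintype.card ι * (Bal α ι m').card := by
  have e : α ≃ ι × Fin m' := Fintype.equivOfCardEq (by simp [h])
  have hf0 : (fun a => (e a).1) ∈ Bal α ι m' := by
    simp only [Bal, mem_filter, mem_univ, true_and]
    intro t
    have : (univ : Finset (Fin m')).card = m' := by simp
    refine Eq.trans (Eq.symm ?_) this
    apply Finset.card_bij (fun a _ => e.symm (t, a))
    · simp
    · simp
    · intro b hb
      refine ⟨(e b).2, by simp, ?_⟩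
      have : (e b).1 = t := by simpa using hb
      rw [← this]; simp
  set f0 : α → ι := fun a => (e a).1 with hf0d
  have hstab := DomMulAct.stabilizer_card (f := f0)
  have h1 : (univ : Finset (Equiv.Perm α)).card ≤
      (m'.factorial) ^ Fintype.card ι * (Bal α ι m').card := by
    apply Finset.card_le_mul_card_image_of_maps_to (f := fun σ : Equiv.Perm α => f0 ∘ σ)
    · intro σ _; exact bal_comp hf0 σ
    · intro f _
      by_cases hex : ∃ σ0 : Equiv.Perm α, f0 ∘ σ0 = f
      · obtain ⟨σ0, h0⟩ := hex
        have h2 : (m'.factorial) ^ Fintype.card ι = Fintype.card {g : Equiv.Perm α // f0 ∘ g = f0} := by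
          rw [hstab]
          have : ∀ i, Fintype.card {a // f0 a = i} = m' := by
            intro i
            simp only [Bal, mem_filter, mem_univ, true_and] at hf0
            rw [Fintype.card_subtype, hf0 i]
          simp [this]
        rw [h2, Fintype.card_subtype]
        apply Finset.card_le_card_of_injOn (fun σ => σ * σ0⁻¹)
        · intro σ hσ
          simp only [coe_filter, mem_univ, true_and, Set.mem_ofPred_eq] at hσ ⊢
          rw [Equiv.Perm.coe_mul, ← Function.comp_assoc, hσ, ← h0, Function.comp_assoc,
            ← Equiv.Perm.coe_mul]
          simp
        · intro a _ b _ hab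
          simpa using hab
      · push Not at hex
        rw [Finset.filter_false_of_mem (fun σ _ => hex σ)]
        simp
  rwa [Finset.card_univ, Fintype.card_perm] at h1

def NN (m' : ℕ) (t : ι) (U : Finset α) : Finset (α → ι) :=
  (Bal α ι m').filter (fun f => ∀ u ∈ U, f u ≠ t)

lemma NN_symm (m' : ℕ) (t : ι) (U : Finset α) (a b : α) (ha : a ∉ U) (hb : b ∉ U) :
    (NN m' t (insert a U)).card ≤ (NN m' t (insert b U)).card := by
  apply Finset.card_le_card_of_injOn (fun f => f ∘ Equiv.swap a b)
  · intro f hf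
    simp only [NN, coe_filter, Set.mem_ofPred_eq, mem_insert, forall_eq_or_imp] at hf ⊢
    refine ⟨bal_comp hf.1 _, by simpa using hf.2.1, ?_⟩
    intro u hu
    have h1 : u ≠ a := fun h => ha (h ▸ hu)
    have h2 : u ≠ b := fun h => hb (h ▸ hu)
    simpa [Equiv.swap_apply_of_ne_of_ne h1 h2] using hf.2.2 u hu
  · intro f _ g _ hfg
    have : (f ∘ Equiv.swap a b) ∘ Equiv.swap a b = (g ∘ Equiv.swap a b) ∘ Equiv.swap a b := by
      rw [show f ∘ Equiv.swap a b = g ∘ Equiv.swap a b from hfg]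
    funext x
    have := congrFun this x
    simpa using this

lemma NN_step (m' : ℕ) (t : ι) (U : Finset α) (a : α) (ha : a ∉ U) :
    (Fintype.card α - U.card) * (NN m' t (insert a U)).card
      = (Fintype.card α - m' - U.card) * (NN m' t U).card := by
  have h1 : ∑ b ∈ Uᶜ, (NN m' t (insert b U)).card
      = (Fintype.card α - U.card) * (NN m' t (insert a U)).card := by
    rw [Finset.sum_congr rfl (g := fun _ => (NN m' t (insert a U)).card)]
    · simp [Finset.card_compl]
    · intro b hb
      have hb : b ∉ U := by simpa using hb
      exact le_antisymm (NN_symm _ _ _ _ _ hb ha) (NN_symm _ _ _ _ _ ha hb)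
  rw [← h1]
  have h2 : ∀ b, NN m' t (insert b U) = (NN m' t U).filter (fun f => f b ≠ t) := by
    intro b; ext f; simp [NN]; tauto
  simp_rw [h2]
  refine (Finset.sum_card_bipartiteAbove_eq_sum_card_bipartiteBelow (s := Uᶜ) (t := NN m' t U)
    (fun b (f : α → ι) => f b ≠ t)).trans ?_
  rw [Finset.sum_congr rfl (g := fun _ => Fintype.card α - m' - U.card)]
  · simp [mul_comm]
  · intro f hf
    simp only [NN, Bal, mem_filter, mem_univ, true_and] at hf
    have h3 : Finset.bipartiteBelow (fun b (f : α → ι) => f b ≠ t) Uᶜ f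
        = (univ.filter (fun a => f a = t))ᶜ \ U := by
      ext b; simp [Finset.bipartiteBelow]; tauto
    rw [h3, Finset.card_sdiff_of_subset, Finset.card_compl, hf.1]
    intro u hu
    simpa using hf.2 u hu

lemma NN_le (m' : ℕ) (h : Fintype.card α = Fintype.card ι * m') (t : ι) (U : Finset α) :
    ((NN m' t U).card : ℝ) ≤ (1 - 1 / (Fintype.card ι : ℝ)) ^ U.card * (Bal α ι m').card := by
  have hr : 1 ≤ Fintype.card ι := Fintype.card_pos_iff.mpr ⟨t⟩
  have hr' : (1 : ℝ) ≤ Fintype.card ι := by exact_mod_cast hr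
  have hq : 0 ≤ (1 - 1 / (Fintype.card ι : ℝ)) := by
    rw [sub_nonneg, div_le_one (by linarith)]; exact hr'
  induction U using Finset.induction_on with
  | empty => simp [NN]
  | insert a U ha ih =>
    have hs := NN_step m' t U a ha
    rw [Finset.card_insert_of_notMem ha, pow_succ']
    have hU : U.card < Fintype.card α := by
      have := Finset.card_le_univ (insert a U)
      rw [Finset.card_insert_of_notMem ha] at this; omega
    have key : ((NN m' t (insert a U)).card : ℝ) ≤ (1 - 1 / (Fintype.card ι : ℝ)) * (NN m' t U).card := by
      have hm : 0 < Fintype.card α - U.card := by omega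
      have hm' : (0 : ℝ) < ((Fintype.card α - U.card : ℕ) : ℝ) := by exact_mod_cast hm
      have hs' : (((Fintype.card α - U.card : ℕ)) : ℝ) * (NN m' t (insert a U)).card
        = ((Fintype.card α - m' - U.card : ℕ) : ℝ) * (NN m' t U).card := by exact_mod_cast hs
      have h5 : ((Fintype.card α - m' - U.card : ℕ) : ℝ) ≤
          ((Fintype.card α - U.card : ℕ) : ℝ) * (1 - 1 / (Fintype.card ι : ℝ)) := by
        by_cases hc : m' + U.card ≤ Fintype.card α
        · rw [Nat.sub_sub, Nat.cast_sub hc, Nat.cast_sub hU.le]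
          have : (Fintype.card α : ℝ) = Fintype.card ι * m' := by exact_mod_cast h
          rw [this]; push_cast
          have h6 : (0:ℝ) ≤ U.card / (Fintype.card ι : ℝ) := by positivity
          have h7 : ((Fintype.card ι : ℝ) * m' - U.card) * (1 - 1 / (Fintype.card ι : ℝ))
            = (Fintype.card ι : ℝ) * m' - U.card - m' + U.card / (Fintype.card ι : ℝ) := by
            field_simp; ring
          rw [h7]; linarith
        · have : Fintype.card α - m' - U.card = 0 := by omega
          rw [this]; push_cast; positivity
      have h8 : ((Fintype.card α - U.card : ℕ) : ℝ) * (NN m' t (insert a U)).card ≤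
        ((Fintype.card α - U.card : ℕ) : ℝ) * ((1 - 1 / (Fintype.card ι : ℝ)) * (NN m' t U).card) := by
        rw [hs', ← mul_assoc]
        gcongr
      exact le_of_mul_le_mul_left h8 hm'
    calc _ ≤ _ := key
      _ ≤ _ := by rw [mul_assoc]; gcongr

lemma bal_tail (m' : ℕ) (h : Fintype.card α = Fintype.card ι * m') (t : ι) (S : Finset α) :
    (((Bal α ι m').filter (fun f => ((S.filter (fun a => f a = t)).card : ℝ) <
      S.card / (2 * (Fintype.card ι : ℝ)))).card : ℝ) ≤
      (Bal α ι m').card * Real.exp (-(1 - Real.log 2) * (S.card / (2 * (Fintype.card ι : ℝ)))) := by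
  have hr : 1 ≤ Fintype.card ι := Fintype.card_pos_iff.mpr ⟨t⟩
  have hr' : (1 : ℝ) ≤ Fintype.card ι := by exact_mod_cast hr
  set r : ℝ := (Fintype.card ι : ℝ) with hrd
  have h1 : ∑ f ∈ Bal α ι m', (2 : ℝ) ^ (S.filter (fun a => f a ≠ t)).card
      ≤ (Bal α ι m').card * (2 - 1 / r) ^ S.card := by
    have : ∀ f : α → ι, (2 : ℝ) ^ (S.filter (fun a => f a ≠ t)).card
        = ∑ U ∈ S.powerset, if (∀ u ∈ U, f u ≠ t) then (1 : ℝ) else 0 := by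
      intro f
      rw [Finset.sum_boole]
      have : (S.powerset.filter (fun U => ∀ u ∈ U, f u ≠ t)) = (S.filter (fun a => f a ≠ t)).powerset := by
        ext U
        simp only [mem_filter, mem_powerset, subset_iff]
        constructor
        · intro h x hx; exact ⟨h.1 hx, h.2 x hx⟩
        · intro h; exact ⟨fun x hx => (h hx).1, fun x hx => (h hx).2⟩
      rw [this, Finset.card_powerset]; push_cast; rfl
    simp_rw [this]
    rw [Finset.sum_comm]
    calc _ = ∑ U ∈ S.powerset, ((NN m' t U).card : ℝ) := by
          apply Finset.sum_congr rfl; intro U _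
          rw [Finset.sum_boole]; rfl
      _ ≤ ∑ U ∈ S.powerset, (1 - 1 / r) ^ U.card * (Bal α ι m').card :=
          Finset.sum_le_sum (fun U _ => NN_le m' h t U)
      _ = _ := by
          rw [← Finset.sum_mul, mul_comm]
          congr 1
          have := Finset.sum_pow_mul_eq_add_pow (1 - 1 / r) 1 S
          simp only [one_pow, mul_one] at this
          rw [this]; congr 1; ring
  set bad := (Bal α ι m').filter (fun f => ((S.filter (fun a => f a = t)).card : ℝ) <
      S.card / (2 * r)) with hbad
  have h2 : (bad.card : ℝ) * Real.exp (Real.log 2 * (S.card - S.card / (2 * r))) ≤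
      ∑ f ∈ Bal α ι m', (2 : ℝ) ^ (S.filter (fun a => f a ≠ t)).card := by
    calc _ = ∑ f ∈ bad, Real.exp (Real.log 2 * (S.card - S.card / (2 * r))) := by simp
      _ ≤ ∑ f ∈ bad, (2 : ℝ) ^ (S.filter (fun a => f a ≠ t)).card := by
          apply Finset.sum_le_sum
          intro f hf
          have hf := (mem_filter.mp hf).2
          have hc := Finset.card_filter_add_card_filter_not (s := S) (fun a => f a = t)
          have hc' : ((S.filter (fun a => f a = t)).card : ℝ) + (S.filter (fun a => f a ≠ t)).card = S.card := by
            exact_mod_cast hc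
          rw [← Real.rpow_natCast, Real.rpow_def_of_pos (by norm_num)]
          apply Real.exp_le_exp.mpr
          apply mul_le_mul_of_nonneg_left _ (Real.log_nonneg (by norm_num))
          linarith
      _ ≤ _ := Finset.sum_le_sum_of_subset_of_nonneg (Finset.filter_subset _ _)
          (fun _ _ _ => by positivity)
  have h3 : (2 - 1 / r) ^ S.card ≤ Real.exp (S.card * (Real.log 2 - 1 / (2 * r))) := by
    rw [Real.exp_nat_mul]
    have h4 : 1 / r ≤ 1 := by rw [div_le_one (by linarith)]; exact hr'
    apply pow_le_pow_left₀ (by linarith)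
    rw [sub_eq_add_neg (Real.log 2), Real.exp_add, Real.exp_log (by norm_num)]
    have := Real.add_one_le_exp (-(1 / (2 * r)))
    have h5 : 1 / r = 2 * (1 / (2 * r)) := by field_simp
    linarith
  have h4 : (bad.card : ℝ) * Real.exp (Real.log 2 * (S.card - S.card / (2 * r))) ≤
      ((Bal α ι m').card * Real.exp (-(1 - Real.log 2) * (S.card / (2 * r)))) *
       Real.exp (Real.log 2 * (S.card - S.card / (2 * r))) := by
    refine (h2.trans h1).trans ?_
    rw [mul_assoc, ← Real.exp_add]
    refine mul_le_mul_of_nonneg_left (h3.trans (le_of_eq ?_)) (by positivity)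
    congr 1; ring
  exact le_of_mul_le_mul_right h4 (Real.exp_pos _)
end P1

section P2

lemma edge_good {n : ℕ} (ε lam : ℝ) (hε : 0 < ε) (hlam : 0 < lam)
    (P : Fin n × Fin n → Prop) [DecidablePred P]
    (r m' : ℕ) (hr : 0 < r) (hn : 0 < n) (hcard : Fintype.card {q // P q} = r * m')
    (hreg : ∀ A B : Finset (Fin n), ε * n ≤ (A.card : ℝ) → ε * n ≤ (B.card : ℝ) →
      lam * (r * m') / (n * n) * (A.card * B.card) ≤
        ((univ.filter (fun q : {q // P q} => q.1.1 ∈ A ∧ q.1.2 ∈ B)).card : ℝ))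
    (δ : ℝ) (hδ1 : δ ≤ 1)
    (hδ : r * 4 ^ n * Real.exp (-(1 - Real.log 2) * (lam * ε ^ 2 * m' / 2)) ≤ δ) :
    (1 - δ) * (((r * m').factorial : ℝ) / (m'.factorial : ℝ) ^ r) ≤
      ((Bal {q // P q} (Fin r) m').filter (fun f => ∀ (t : Fin r) (A B : Finset (Fin n)),
        ε * n ≤ (A.card : ℝ) → ε * n ≤ (B.card : ℝ) →
        lam / 2 * m' / (n * n) * (A.card * B.card) ≤
          ((univ.filter (fun q : {q // P q} => q.1.1 ∈ A ∧ q.1.2 ∈ B ∧ f q = t)).card : ℝ))).card := by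
  classical
  have hn' : (0 : ℝ) < n := by exact_mod_cast hn
  have hr' : (0 : ℝ) < r := by exact_mod_cast hr
  have hc : 0 < 1 - Real.log 2 := by have := Real.log_two_lt_d9; linarith
  set bal := Bal {q // P q} (Fin r) m' with hbal
  set good := bal.filter (fun f => ∀ (t : Fin r) (A B : Finset (Fin n)),
        ε * n ≤ (A.card : ℝ) → ε * n ≤ (B.card : ℝ) →
        lam / 2 * m' / (n * n) * (A.card * B.card) ≤
          ((univ.filter (fun q : {q // P q} => q.1.1 ∈ A ∧ q.1.2 ∈ B ∧ f q = t)).card : ℝ)) with hgood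
  let S : Finset (Fin n) → Finset (Fin n) → Finset {q // P q} := fun A B =>
    univ.filter (fun q : {q // P q} => q.1.1 ∈ A ∧ q.1.2 ∈ B)
  let X : Finset (Fin r × Finset (Fin n) × Finset (Fin n)) :=
    univ.filter (fun x => ε * n ≤ (x.2.1.card : ℝ) ∧ ε * n ≤ (x.2.2.card : ℝ))
  let bad : Fin r × Finset (Fin n) × Finset (Fin n) → Finset ({q // P q} → Fin r) := fun x =>
    bal.filter (fun f => (((S x.2.1 x.2.2).filter (fun a => f a = x.1)).card : ℝ) <
      (S x.2.1 x.2.2).card / (2 * (Fintype.card (Fin r) : ℝ)))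
  have hsub : bal ⊆ good ∪ X.biUnion bad := by
    intro f hf
    by_cases hg : f ∈ good
    · exact mem_union_left _ hg
    · apply mem_union_right
      rw [hgood, mem_filter] at hg
      push Not at hg
      obtain ⟨t, A, B, hA, hB, hlt⟩ := hg hf
      rw [mem_biUnion]
      refine ⟨(t, A, B), by simp [X, hA, hB], ?_⟩
      simp only [bad, mem_filter]
      refine ⟨hf, ?_⟩
      have h1 := hreg A B hA hB
      have h2 : (S A B).filter (fun a => f a = t)
        = univ.filter (fun q : {q // P q} => q.1.1 ∈ A ∧ q.1.2 ∈ B ∧ f q = t) := by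
        ext q; simp [S, and_assoc]
      rw [h2, Fintype.card_fin]
      refine lt_of_lt_of_le hlt ?_
      rw [le_div_iff₀ (by positivity)]
      refine le_trans (le_of_eq ?_) h1
      field_simp
  have hbad : ∀ x ∈ X, ((bad x).card : ℝ) ≤
      bal.card * Real.exp (-(1 - Real.log 2) * (lam * ε ^ 2 * m' / 2)) := by
    rintro ⟨t, A, B⟩ hx
    simp only [X, mem_filter, mem_univ, true_and] at hx
    have h0 := bal_tail m' (by simpa using hcard) t (S A B)
    refine h0.trans ?_
    refine mul_le_mul_of_nonneg_left ?_ (by positivity)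
    apply Real.exp_le_exp.mpr
    rw [neg_mul, neg_mul, neg_le_neg_iff]
    apply mul_le_mul_of_nonneg_left _ hc.le
    rw [Fintype.card_fin, le_div_iff₀ (by positivity)]
    refine le_trans ?_ (hreg A B hx.1 hx.2)
    have h3 : (ε * n) * (ε * n) ≤ (A.card : ℝ) * B.card :=
      mul_le_mul hx.1 hx.2 (by positivity) (by positivity)
    calc _ = lam * (r * m') / (n * n) * ((ε * n) * (ε * n)) := by field_simp
      _ ≤ _ := by gcongr
  have h1 : (bal.card : ℝ) ≤ good.card + δ * bal.card := by
    have h2 : bal.card ≤ good.card + ∑ x ∈ X, (bad x).card :=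
      (Finset.card_le_card hsub).trans ((Finset.card_union_le _ _).trans
        (Nat.add_le_add_left Finset.card_biUnion_le _))
    have h3 : (bal.card : ℝ) ≤ good.card + ∑ x ∈ X, ((bad x).card : ℝ) := by exact_mod_cast h2
    refine h3.trans ?_
    gcongr
    calc _ ≤ ∑ x ∈ X, (bal.card * Real.exp (-(1 - Real.log 2) * (lam * ε ^ 2 * m' / 2))) :=
          Finset.sum_le_sum hbad
      _ = X.card * (bal.card * Real.exp (-(1 - Real.log 2) * (lam * ε ^ 2 * m' / 2))) := by simp
      _ ≤ (r * 4 ^ n) * (bal.card * Real.exp (-(1 - Real.log 2) * (lam * ε ^ 2 * m' / 2))) := by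
          gcongr
          have : X.card ≤ r * 4 ^ n := by
            refine (Finset.card_le_univ _).trans (le_of_eq ?_)
            simp only [Fintype.card_prod, Fintype.card_fin, Fintype.card_finset]
            rw [← mul_pow]; norm_num
          exact_mod_cast this
      _ = (r * 4 ^ n * Real.exp (-(1 - Real.log 2) * (lam * ε ^ 2 * m' / 2))) * bal.card := by ring
      _ ≤ _ := by gcongr
  have h2 := card_bal (α := {q // P q}) (ι := Fin r) m' (by simpa using hcard)
  rw [hcard, Fintype.card_fin] at h2
  have h3 : ((r * m').factorial : ℝ) / (m'.factorial : ℝ) ^ r ≤ bal.card := by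
    rw [div_le_iff₀ (by positivity), mul_comm (bal.card : ℝ)]
    exact_mod_cast h2
  calc _ ≤ (1 - δ) * (bal.card : ℝ) := mul_le_mul_of_nonneg_left h3 (by linarith)
    _ ≤ _ := by linarith

lemma pc_eq {n : ℕ} (P Q : Fin n × Fin n → Prop) [DecidablePred P] (R : {q // P q} → Prop)
    [DecidablePred R] (hQ : ∀ q, Q q ↔ ∃ h : P q, R ⟨q, h⟩) :
    Nat.card {q // Q q} = (univ.filter R).card := by
  classical
  rw [← Fintype.card_subtype, ← Nat.card_eq_fintype_card]
  apply Nat.card_congr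
  exact 
  { toFun := fun q => ⟨⟨q.1, ((hQ q.1).1 q.2).1⟩, ((hQ q.1).1 q.2).2⟩
    invFun := fun q => ⟨q.1.1, (hQ _).2 ⟨q.1.2, q.2⟩⟩
    left_inv := fun q => rfl
    right_inv := fun q => rfl }

lemma pcIn_symm {k n : ℕ} (G : SimpleGraph (Fin k × Fin n)) (i j : Fin k) (A B : Finset (Fin n)) :
    pairCountIn G i j A B = pairCountIn G j i B A := by
  apply Nat.card_congr
  exact
  { toFun := fun q => ⟨q.1.swap, q.2.2.1, q.2.1, q.2.2.2.symm⟩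
    invFun := fun q => ⟨q.1.swap, q.2.2.1, q.2.1, q.2.2.2.symm⟩
    left_inv := fun q => rfl
    right_inv := fun q => rfl }

lemma pc_univ {k n : ℕ} (G : SimpleGraph (Fin k × Fin n)) (i j : Fin k) :
    pairCountIn G i j univ univ = pairCount G i j := by
  simp [pairCountIn, pairCount]

lemma pc_symm {k n : ℕ} (G : SimpleGraph (Fin k × Fin n)) (i j : Fin k) :
    pairCount G i j = pairCount G j i := by
  rw [← pc_univ, pcIn_symm, pc_univ]

lemma density_symm {k n : ℕ} (G : SimpleGraph (Fin k × Fin n)) (i j : Fin k) (A B : Finset (Fin n)) :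
    density G i j A B = density G j i B A := by
  rw [density, density, pcIn_symm, mul_comm (A.card : ℝ)]

lemma lrp_symm {k n : ℕ} {ε lam : ℝ} {G : SimpleGraph (Fin k × Fin n)} {i j : Fin k}
    (h : LowerRegularPair ε lam G i j) : LowerRegularPair ε lam G j i := by
  intro A B hA hB
  rw [density_symm, density_symm G j i]
  exact h B A hB hA

lemma lrp_iff {k n : ℕ} {ε lam : ℝ} (hε : 0 < ε) (hn : 0 < n) {G : SimpleGraph (Fin k × Fin n)}
    {i j : Fin k} {m : ℕ} (hm : pairCount G i j = m) :
    LowerRegularPair ε lam G i j ↔ ∀ A B : Finset (Fin n), ε * n ≤ (A.card : ℝ) →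
      ε * n ≤ (B.card : ℝ) → lam * m / (n * n) * (A.card * B.card) ≤ pairCountIn G i j A B := by
  have hn' : (0 : ℝ) < n := by exact_mod_cast hn
  have he : 0 < ε * n := by positivity
  unfold LowerRegularPair density
  refine forall_congr' fun A => forall_congr' fun B => forall_congr' fun hA => forall_congr' fun hB => ?_
  rw [le_div_iff₀ (mul_pos (he.trans_le hA) (he.trans_le hB)), pc_univ, hm, card_univ,
    Fintype.card_fin, mul_div_assoc]

/-- ordered edges of `H` -/
abbrev OE {k : ℕ} (H : SimpleGraph (Fin k)) := {p : Fin k × Fin k // p.1 < p.2 ∧ H.Adj p.1 p.2}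

lemma card_OE {k : ℕ} (H : SimpleGraph (Fin k)) : Nat.card (OE H) = edgeCount H := by
  apply Nat.card_eq_of_bijective (fun p : OE H => (⟨s(p.1.1, p.1.2), p.2.2⟩ : H.edgeSet))
  constructor
  · rintro ⟨⟨a, b⟩, h, _⟩ ⟨⟨c, d⟩, h', _⟩ he
    have he := Sym2.eq_iff.1 (congrArg Subtype.val he)
    simp only at h h'
    rcases he with ⟨rfl, rfl⟩ | ⟨rfl, rfl⟩
    · rfl
    · exact absurd h h'.asymm
  · rintro ⟨e, he⟩
    induction e using Sym2.ind with
    | _ a b =>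
      have hab : H.Adj a b := he
      rcases lt_or_gt_of_ne hab.ne with h | h
      · exact ⟨⟨(a, b), h, hab⟩, rfl⟩
      · exact ⟨⟨(b, a), h, hab.symm⟩, by simp [Sym2.eq_swap]⟩

abbrev EE {k n : ℕ} (G : SimpleGraph (Fin k × Fin n)) (p : Fin k × Fin k) :=
  {q : Fin n × Fin n // G.Adj (p.1, q.1) (p.2, q.2)}

def RR {k n r : ℕ} (H : SimpleGraph (Fin k)) (G : SimpleGraph (Fin k × Fin n))
    (F : ∀ p : OE H, EE G p.1 → Fin r) (t : Fin r) (x y : Fin k × Fin n) : Prop :=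
  ∃ (p : OE H) (q : EE G p.1), x = (p.1.1, q.1.1) ∧ y = (p.1.2, q.1.2) ∧ F p q = t

def mkG {k n r : ℕ} (H : SimpleGraph (Fin k)) (G : SimpleGraph (Fin k × Fin n))
    (F : ∀ p : OE H, EE G p.1 → Fin r) (t : Fin r) : SimpleGraph (Fin k × Fin n) where
  Adj x y := RR H G F t x y ∨ RR H G F t y x
  symm := ⟨fun _ _ h => h.symm⟩
  loopless := ⟨fun x h => by
    have : RR H G F t x x := h.elim id id
    obtain ⟨p, q, h1, h2, _⟩ := this
    exact q.2.ne (h1.symm.trans h2)⟩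

section
variable {k n r : ℕ} {H : SimpleGraph (Fin k)} {G : SimpleGraph (Fin k × Fin n)}
    (F : ∀ p : OE H, EE G p.1 → Fin r)

lemma RR_adj {t : Fin r} {x y} (h : RR H G F t x y) : G.Adj x y := by
  obtain ⟨p, q, rfl, rfl, _⟩ := h
  exact q.2

lemma mkG_adj {t : Fin r} {x y} (h : (mkG H G F t).Adj x y) : G.Adj x y :=
  h.elim (RR_adj F) (fun h => (RR_adj F h).symm)

lemma RR_iff (t : Fin r) (p : OE H) (q : Fin n × Fin n) :
    RR H G F t (p.1.1, q.1) (p.1.2, q.2) ↔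
      ∃ h : G.Adj (p.1.1, q.1) (p.1.2, q.2), F p ⟨q, h⟩ = t := by
  constructor
  · rintro ⟨⟨⟨a, b⟩, hp⟩, ⟨⟨c, d⟩, hq⟩, h1, h2, h3⟩
    obtain ⟨⟨⟨a', b'⟩, hp'⟩⟩ := p
    obtain ⟨c', d'⟩ := q
    simp only [Prod.mk.injEq] at h1 h2
    obtain ⟨rfl, rfl⟩ := h1
    obtain ⟨rfl, rfl⟩ := h2
    exact ⟨hq, h3⟩
  · rintro ⟨h, h'⟩
    exact ⟨p, ⟨q, h⟩, rfl, rfl, h'⟩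

lemma mkG_iff (t : Fin r) (p : OE H) (q : Fin n × Fin n) :
    (mkG H G F t).Adj (p.1.1, q.1) (p.1.2, q.2) ↔
      ∃ h : G.Adj (p.1.1, q.1) (p.1.2, q.2), F p ⟨q, h⟩ = t := by
  rw [← RR_iff]
  refine ⟨fun h => h.elim id ?_, Or.inl⟩
  rintro ⟨p', q', h1, h2, _⟩
  have e1 : p.1.2 = p'.1.1 := congrArg Prod.fst h1
  have e2 : p.1.1 = p'.1.2 := congrArg Prod.fst h2
  have := p.2.1
  have := p'.2.1
  rw [e1, e2] at *
  exact absurd this (by assumption : p'.1.2 < p'.1.1).asymm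

lemma exists_RR (hG : IsSubgraphKnH H G) {x y} (h : G.Adj x y) :
    (∃ (p : OE H) (q : EE G p.1), x = (p.1.1, q.1.1) ∧ y = (p.1.2, q.1.2)) ∨
    (∃ (p : OE H) (q : EE G p.1), y = (p.1.1, q.1.1) ∧ x = (p.1.2, q.1.2)) := by
  have hH := hG h
  rcases lt_or_gt_of_ne hH.ne with hl | hl
  · exact Or.inl ⟨⟨(x.1, y.1), hl, hH⟩, ⟨(x.2, y.2), h⟩, rfl, rfl⟩
  · exact Or.inr ⟨⟨(y.1, x.1), hl, hH.symm⟩, ⟨(y.2, x.2), h.symm⟩, rfl, rfl⟩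

lemma mkG_sup (hG : IsSubgraphKnH H G) : (⨆ t, mkG H G F t) = G := by
  ext x y
  rw [SimpleGraph.iSup_adj]
  constructor
  · rintro ⟨t, h⟩; exact mkG_adj F h
  · intro h
    rcases exists_RR hG h with ⟨p, q, h1, h2⟩ | ⟨p, q, h1, h2⟩
    · exact ⟨F p q, Or.inl ⟨p, q, h1, h2, rfl⟩⟩
    · exact ⟨F p q, Or.inr ⟨p, q, h1, h2, rfl⟩⟩

lemma mkG_disj (hG : IsSubgraphKnH H G) (s t : Fin r) (hst : s ≠ t) :
    Disjoint (mkG H G F s) (mkG H G F t) := by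
  rw [SimpleGraph.disjoint_left]
  intro x y hs ht
  rcases exists_RR hG (mkG_adj F hs) with ⟨p, q, rfl, rfl⟩ | ⟨p, q, rfl, rfl⟩
  · obtain ⟨_, h1⟩ := (mkG_iff F s p q.1).1 hs
    obtain ⟨_, h2⟩ := (mkG_iff F t p q.1).1 ht
    exact hst (h1.symm.trans h2)
  · obtain ⟨_, h1⟩ := (mkG_iff F s p q.1).1 hs.symm
    obtain ⟨_, h2⟩ := (mkG_iff F t p q.1).1 ht.symm
    exact hst (h1.symm.trans h2)

lemma mkG_inj : Function.Injective (fun F : ∀ p : OE H, EE G p.1 → Fin r => mkG H G F) := by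
  intro F F' h
  funext p q
  have h1 : (mkG H G F (F p q)).Adj (p.1.1, q.1.1) (p.1.2, q.1.2) :=
    (mkG_iff F _ p q.1).2 ⟨q.2, rfl⟩
  have h2 : mkG H G F = mkG H G F' := h
  rw [h2] at h1
  obtain ⟨_, h3⟩ := (mkG_iff F' _ p q.1).1 h1
  exact h3.symm

lemma mkG_pc [DecidableRel G.Adj] (t : Fin r) (p : OE H) :
    pairCount (mkG H G F t) p.1.1 p.1.2 = (univ.filter (fun q : EE G p.1 => F p q = t)).card :=
  pc_eq _ _ _ (fun q => mkG_iff F t p q)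

lemma mkG_pcIn [DecidableRel G.Adj] (t : Fin r) (p : OE H) (A B : Finset (Fin n)) :
    pairCountIn (mkG H G F t) p.1.1 p.1.2 A B =
      (univ.filter (fun q : EE G p.1 => q.1.1 ∈ A ∧ q.1.2 ∈ B ∧ F p q = t)).card := by
  apply pc_eq
  intro q
  rw [mkG_iff F t p q]
  constructor
  · rintro ⟨a, b, c, d⟩; exact ⟨c, a, b, d⟩
  · rintro ⟨c, a, b, d⟩; exact ⟨a, b, c, d⟩

end

lemma core {k n : ℕ} (ε lam : ℝ) (hε : 0 < ε) (hlam : 0 < lam) (H : SimpleGraph (Fin k))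
    (r m' : ℕ) (hr : 0 < r) (hn : 0 < n) (δ : ℝ) (hδ1 : δ ≤ 1)
    (hδ : r * 4 ^ n * Real.exp (-(1 - Real.log 2) * (lam * ε ^ 2 * m' / 2)) ≤ δ)
    (G : SimpleGraph (Fin k × Fin n)) (hG : MemFamily H (r * m') G)
    (hreg : ∀ i j, H.Adj i j → LowerRegularPair ε lam G i j) :
    ((1 - δ) * (((r * m').factorial : ℝ) / (m'.factorial : ℝ) ^ r)) ^ edgeCount H ≤
    (Nat.card {Gs : Fin r → SimpleGraph (Fin k × Fin n) //
            (⨆ t, Gs t) = G ∧ (∀ s t, s ≠ t → Disjoint (Gs s) (Gs t)) ∧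
            ∀ t, MemFamily H m' (Gs t) ∧
              ∀ i j, H.Adj i j → LowerRegularPair ε (lam / 2) (Gs t) i j} : ℝ) := by
  classical
  let good : ∀ p : OE H, Finset (EE G p.1 → Fin r) := fun p =>
    (Bal (EE G p.1) (Fin r) m').filter (fun f => ∀ (t : Fin r) (A B : Finset (Fin n)),
        ε * n ≤ (A.card : ℝ) → ε * n ≤ (B.card : ℝ) →
        lam / 2 * m' / (n * n) * (A.card * B.card) ≤
          ((univ.filter (fun q : EE G p.1 => q.1.1 ∈ A ∧ q.1.2 ∈ B ∧ f q = t)).card : ℝ))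
  have hgood : ∀ p, (1 - δ) * (((r * m').factorial : ℝ) / (m'.factorial : ℝ) ^ r) ≤ (good p).card := by
    intro p
    have hpc := hG.2 p.1.1 p.1.2 p.2.2
    apply edge_good ε lam hε hlam (fun q => G.Adj (p.1.1, q.1) (p.1.2, q.2)) r m' hr hn _ _ δ hδ1 hδ
    · rw [← Nat.card_eq_fintype_card]; exact hpc
    · intro A B hA hB
      have h1 := (lrp_iff hε hn hpc).1 (hreg _ _ p.2.2) A B hA hB
      have h2 : pairCountIn G p.1.1 p.1.2 A B =
          (univ.filter (fun q : EE G p.1 => q.1.1 ∈ A ∧ q.1.2 ∈ B)).card := by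
        apply pc_eq
        intro q
        constructor
        · rintro ⟨a, b, c⟩; exact ⟨c, a, b⟩
        · rintro ⟨c, a, b⟩; exact ⟨a, b, c⟩
      rw [h2] at h1
      push_cast at h1
      exact h1
  have hmap : Nat.card (∀ p : OE H, good p) ≤ Nat.card {Gs : Fin r → SimpleGraph (Fin k × Fin n) //
            (⨆ t, Gs t) = G ∧ (∀ s t, s ≠ t → Disjoint (Gs s) (Gs t)) ∧
            ∀ t, MemFamily H m' (Gs t) ∧
              ∀ i j, H.Adj i j → LowerRegularPair ε (lam / 2) (Gs t) i j} := by
    have hval : ∀ F : (∀ p : OE H, good p), (⨆ t, mkG H G (fun p => (F p).1) t) = G ∧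
        (∀ s t, s ≠ t → Disjoint (mkG H G (fun p => (F p).1) s) (mkG H G (fun p => (F p).1) t)) ∧
            ∀ t, MemFamily H m' (mkG H G (fun p => (F p).1) t) ∧
              ∀ i j, H.Adj i j → LowerRegularPair ε (lam / 2) (mkG H G (fun p => (F p).1) t) i j := by
      intro F
      have hpc : ∀ t (p : OE H), pairCount (mkG H G (fun p => (F p).1) t) p.1.1 p.1.2 = m' := by
        intro t p
        rw [mkG_pc]
        have := (F p).2
        simp only [good, Bal, mem_filter, mem_univ, true_and] at this
        exact this.1 t
      have hlr : ∀ t (p : OE H), LowerRegularPair ε (lam / 2) (mkG H G (fun p => (F p).1) t) p.1.1 p.1.2 := by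
        intro t p
        rw [lrp_iff hε hn (hpc t p)]
        intro A B hA hB
        rw [mkG_pcIn]
        have := (F p).2
        simp only [good, mem_filter] at this
        exact this.2 t A B hA hB
      refine ⟨mkG_sup _ hG.1, mkG_disj _ hG.1, fun t => ⟨⟨fun x y h => hG.1 (mkG_adj _ h), ?_⟩, ?_⟩⟩
      · intro i j hij
        rcases lt_or_gt_of_ne hij.ne with h | h
        · exact hpc t ⟨(i, j), h, hij⟩
        · rw [pc_symm]; exact hpc t ⟨(j, i), h, hij.symm⟩
      · intro i j hij
        rcases lt_or_gt_of_ne hij.ne with h | h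
        · exact hlr t ⟨(i, j), h, hij⟩
        · exact lrp_symm (hlr t ⟨(j, i), h, hij.symm⟩)
    apply Nat.card_le_card_of_injective (fun F => ⟨_, hval F⟩)
    intro F F' h
    have h1 := mkG_inj (Subtype.mk.inj h)
    funext p
    exact Subtype.ext (congrFun h1 p)
  have hprod : Nat.card (∀ p : OE H, good p) = ∏ p : OE H, (good p).card := by
    rw [Nat.card_pi]
    apply Finset.prod_congr rfl
    intro p _
    simp
  calc _ = ∏ p : OE H, ((1 - δ) * (((r * m').factorial : ℝ) / (m'.factorial : ℝ) ^ r)) := by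
        rw [Finset.prod_const, card_univ, ← Nat.card_eq_fintype_card, card_OE]
    _ ≤ ∏ p : OE H, ((good p).card : ℝ) := by
        apply Finset.prod_le_prod
        · intro p _
          have : 0 ≤ 1 - δ := by linarith
          positivity
        · intro p _; exact hgood p
    _ ≤ _ := by
        rw [hprod] at hmap
        exact_mod_cast hmap
end P2

/-- **Partitioning into regular pieces (inequality (3.3)).** For all `0 < ε < 1/6`,
`λ ∈ (0,1]`, every graph `H` and positive integer `z`, there is a constant `C` such that for
all large `n`: if `m = 2z m'` with `m' > Cn`, then every `G ∈ 𝒢(H, n, m, ε, λ)` admits at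
least `0.99 (m! / (m'!)^(2z))^(e(H))` ordered partitions of its edge set into edge-disjoint
graphs `(G₁, …, G_{2z})`, each with `m'` edges between `V_i` and `V_j` for every `ij ∈ E(H)`,
such that every `G_t` belongs to `𝒢(H, n, m', ε, λ/2)`. -/
theorem partition_into_regular (ε lam : ℝ) (hε : 0 < ε) (hε' : ε < 1 / 6)
    (hlam : 0 < lam) (hlam' : lam ≤ 1)
    (k : ℕ) (H : SimpleGraph (Fin k)) (z : ℕ) (hz : 0 < z) :
    ∃ C : ℝ, ∃ n₀ : ℕ, ∀ n : ℕ, n₀ ≤ n → ∀ m m' : ℕ,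
      m = 2 * z * m' → C * (n : ℝ) < (m' : ℝ) →
      ∀ G : SimpleGraph (Fin k × Fin n),
        MemFamily H m G → (∀ i j, H.Adj i j → LowerRegularPair ε lam G i j) →
        0.99 * ((m.factorial : ℝ) / ((m'.factorial : ℝ)) ^ (2 * z)) ^ edgeCount H ≤
          (Nat.card {Gs : Fin (2 * z) → SimpleGraph (Fin k × Fin n) //
            (⨆ t, Gs t) = G ∧ (∀ s t, s ≠ t → Disjoint (Gs s) (Gs t)) ∧
            ∀ t, MemFamily H m' (Gs t) ∧
              ∀ i j, H.Adj i j → LowerRegularPair ε (lam / 2) (Gs t) i j} : ℝ) := by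
  set c : ℝ := 1 - Real.log 2 with hcd
  have hc : 0 < c := by have := Real.log_two_lt_d9; linarith
  set δ : ℝ := 0.01 / (edgeCount H + 1) with hδd
  have hδ0 : 0 < δ := by positivity
  have hδ1 : δ ≤ 1 := by
    rw [hδd, div_le_one (by positivity)]
    have : (0:ℝ) ≤ edgeCount H := by positivity
    linarith
  have hr : (0 : ℝ) < ((2 * z : ℕ) : ℝ) := by exact_mod_cast (by omega : 0 < 2 * z)
  obtain ⟨N, hN⟩ := exists_pow_lt_of_lt_one (div_pos hδ0 hr) (by norm_num : (1 / 2 : ℝ) < 1)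
  refine ⟨2 * Real.log 8 / (c * lam * ε ^ 2), max N 1, ?_⟩
  intro n hn m m' hm hC G hG hreg
  have hn1 : 0 < n := by have := le_max_right N 1; omega
  have hnN : N ≤ n := (le_max_left N 1).trans hn
  subst hm
  have hδ : ((2 * z : ℕ) : ℝ) * 4 ^ n * Real.exp (-(1 - Real.log 2) * (lam * ε ^ 2 * m' / 2)) ≤ δ := by
    have h1 : Real.exp (-(1 - Real.log 2) * (lam * ε ^ 2 * m' / 2)) ≤ (1 / 8 : ℝ) ^ n := by
      rw [← Real.rpow_natCast (1 / 8), Real.rpow_def_of_pos (by norm_num)]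
      apply Real.exp_le_exp.mpr
      rw [one_div, Real.log_inv, ← hcd]
      rw [div_mul_eq_mul_div, div_lt_iff₀ (by positivity)] at hC
      linarith
    have h2 : (1 / 2 : ℝ) ^ n ≤ δ / ((2 * z : ℕ) : ℝ) :=
      (pow_le_pow_of_le_one (by norm_num) (by norm_num) hnN).trans hN.le
    calc _ ≤ ((2 * z : ℕ) : ℝ) * 4 ^ n * (1 / 8 : ℝ) ^ n := by gcongr
      _ = ((2 * z : ℕ) : ℝ) * (1 / 2 : ℝ) ^ n := by
        rw [mul_assoc, ← mul_pow]; norm_num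
      _ ≤ ((2 * z : ℕ) : ℝ) * (δ / ((2 * z : ℕ) : ℝ)) := by gcongr
      _ = δ := by field_simp
  refine le_trans ?_ (core ε lam hε hlam H (2 * z) m' (by omega) hn1 δ hδ1 hδ G hG hreg)
  rw [mul_pow]
  refine mul_le_mul_of_nonneg_right ?_ (by positivity)
  have hb := one_add_mul_le_pow (a := -δ) (by linarith) (edgeCount H)
  rw [← sub_eq_add_neg] at hb
  refine le_trans ?_ hb
  have : (edgeCount H : ℝ) * δ ≤ 0.01 := by
    rw [hδd, mul_div_assoc', div_le_iff₀ (by positivity)]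
    linarith
  linarith
end
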